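/- Suppose the family {ρ_{x,y,s}} satisfies Assumption A. For every n≥1 and all R̂₁,R̂₂>0 there exist operators T^X and T^Y on (ℂ^𝒳)^{⊗n}⊗(ℂ^𝒴)^{⊗n}⊗H_B^{⊗n} with 0⪯T^X⪯I and 0⪯T^Y⪯I such that for all probability distributions P_X on 𝒳 and P_Y on 𝒴, all t∈(0,1), every ε>0, and every finite 𝒮_ε⊆𝒮 witnessing Assumption A at ε, with f := (n+1)^{|𝒮_ε|−1 + t|𝒳||𝒴|(d_B−1)d_B/2 + (d_B−1)t|𝒳||𝒴|}, g₁ := n^{|𝒳|d_B(d_B−1)/2}Λ(n,d_B)^{|𝒳|}, g₂ := n^{|𝒴|d_B(d_B−1)/2}Λ(n,d_B)^{|𝒴|}, g₃ := n^{d_B(d_B−1)/2}Λ(n,d_B), and all minima over probability distributions Q supported on 𝒮_ε: (i) for all s^n∈𝒮^n, Tr[(I−T^X)ρ^{XYB}_{P_X,P_Y,s^n}] ≤ f·(1+ε)^n·(2^{nt(R̂₁ − min_Q I_{1−t}[X;B|Y]_{P_X,P_Y,Q})} + 2^{nt(R̂₁+R̂₂ − min_Q I_{1−t}[XY;B]_{P_X,P_Y,Q})});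 (ii) for all s^n∈𝒮^n, Tr[(I−T^Y)ρ^{XYB}_{P_X,P_Y,s^n}] ≤ f·(1+ε)^n·(2^{nt(R̂₂ − min_Q I_{1−t}[Y;B|X]_{P_X,P_Y,Q})} + 2^{nt(R̂₁+R̂₂ − min_Q I_{1−t}[XY;B]_{P_X,P_Y,Q})}); (iii) for every family {σ_{y^n}}_{y^n∈𝒴^n} of density matrices on H_B^{⊗n}, Tr[T^X · Σ_{x^n,y^n} P_X^n(x^n)P_Y^n(y^n)|x^n⟩⟨x^n|⊗|y^n⟩⟨y^n|⊗σ_{y^n}] ≤ g₂·2^{−nR̂₁}; (iv) for every density matrix σ on H_B^{⊗n}, Tr[T^X · Σ_{x^n,y^n} P_X^n(x^n)P_Y^n(y^n)|x^n⟩⟨x^n|⊗|y^n⟩⟨y^n|⊗σ] ≤ g₃·2^{−n(R̂₁+R̂₂)}; (v) for every family {σ_{x^n}}_{x^n∈𝒳^n}, Tr[T^Y · Σ_{x^n,y^n} P_X^n(x^n)P_Y^n(y^n)|x^n⟩⟨x^n|⊗|y^n⟩⟨y^n|⊗σ_{x^n}] ≤ g₁·2^{−nR̂₂}; (vi) for every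 density matrix σ, Tr[T^Y · Σ_{x^n,y^n} P_X^n(x^n)P_Y^n(y^n)|x^n⟩⟨x^n|⊗|y^n⟩⟨y^n|⊗σ] ≤ g₃·2^{−n(R̂₁+R̂₂)}. -/

import Mathlib

open scoped ComplexOrder

noncomputable section

/-- A density matrix: positive semidefinite with unit trace. -/
def IsDensity {m : Type*} [Fintype m] (ρ : Matrix m m ℂ) : Prop :=
  ρ.PosSemidef ∧ ρ.trace = 1

/-- Loewner order `A ⪯ B`. -/
def Loewner {m : Type*} [Fintype m] (A B : Matrix m m ℂ) : Prop :=
  (B - A).PosSemidef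

/-- Functional calculus for Hermitian matrices (junk value `0` on non-Hermitian input). -/
def matFun {m : Type*} [Fintype m] [DecidableEq m] (f : ℝ → ℝ) (A : Matrix m m ℂ) :
    Matrix m m ℂ :=
  if hA : A.IsHermitian then
    (hA.eigenvectorUnitary : Matrix m m ℂ) *
        Matrix.diagonal (fun i => (f (hA.eigenvalues i) : ℂ)) *
      star (hA.eigenvectorUnitary : Matrix m m ℂ)
  else 0

/-- Matrix power, taken on the support (`0^p := 0` on the kernel). -/
def mpow {m : Type*} [Fintype m] [DecidableEq m] (A : Matrix m m ℂ) (p : ℝ) :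
    Matrix m m ℂ :=
  matFun (fun u => if u ≤ 0 then 0 else u ^ p) A

/-- The classical–classical–quantum state `Σ_{x,y} wX(x)wY(y)|x⟩⟨x|⊗|y⟩⟨y|⊗ρ_{x,y}`. -/
def cqState2 {X Y B : Type*} [DecidableEq X] [DecidableEq Y]
    (wX : X → ℝ) (wY : Y → ℝ) (ρ : X → Y → Matrix B B ℂ) :
    Matrix ((X × Y) × B) ((X × Y) × B) ℂ :=
  Matrix.of fun p q =>
    (if p.1 = q.1 then ((wX p.1.1 * wY p.1.2 : ℝ) : ℂ) else 0) * ρ p.1.1 p.1.2 p.2 q.2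

/-- Tensor product of a finite family of matrices, realized on functions. -/
def tensorFam {k d : Type*} [Fintype k] (ρ : k → Matrix d d ℂ) :
    Matrix (k → d) (k → d) ℂ :=
  Matrix.of fun i j => ∏ a, ρ a (i a) (j a)

/-- The `n`-copy classical–classical–quantum state with i.i.d. classical inputs. -/
def cq2n {𝒳 𝒴 : Type*} [Fintype 𝒳] [DecidableEq 𝒳] [Fintype 𝒴] [DecidableEq 𝒴] {d : ℕ}
    (n : ℕ) (PX : 𝒳 → ℝ) (PY : 𝒴 → ℝ)
    (F : (Fin n → 𝒳) → (Fin n → 𝒴) → Matrix (Fin n → Fin d) (Fin n → Fin d) ℂ) :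
    Matrix (((Fin n → 𝒳) × (Fin n → 𝒴)) × (Fin n → Fin d))
      (((Fin n → 𝒳) × (Fin n → 𝒴)) × (Fin n → Fin d)) ℂ :=
  cqState2 (fun xv : Fin n → 𝒳 => ∏ k, PX (xv k)) (fun yv : Fin n → 𝒴 => ∏ k, PY (yv k)) F

/-- `Λ(n,d)`: the number of partitions of `n` into at most `d` parts. -/
def numPartLe (n d : ℕ) : ℕ := Nat.card {p : Nat.Partition n // p.parts.card ≤ d}

/-- The Rényi-type quantity `I_{1−t}[X;B|Y]_{P_X,P_Y,Q}`, given the mixed states `ρQ x y`. -/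
def renyiXgY {𝒳 𝒴 : Type*} [Fintype 𝒳] [Fintype 𝒴] {d : ℕ}
    (PX : 𝒳 → ℝ) (PY : 𝒴 → ℝ) (ρQ : 𝒳 → 𝒴 → Matrix (Fin d) (Fin d) ℂ) (t : ℝ) : ℝ :=
  -((1 - t) / t) * Real.logb 2
    (∑ y, PY y *
      (Matrix.trace (mpow (∑ x, PX x • mpow (ρQ x y) (1 - t)) (1 / (1 - t)))).re)

/-- The Rényi-type quantity `I_{1−t}[Y;B|X]_{P_X,P_Y,Q}`. -/
def renyiYgX {𝒳 𝒴 : Type*} [Fintype 𝒳] [Fintype 𝒴] {d : ℕ}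
    (PX : 𝒳 → ℝ) (PY : 𝒴 → ℝ) (ρQ : 𝒳 → 𝒴 → Matrix (Fin d) (Fin d) ℂ) (t : ℝ) : ℝ :=
  -((1 - t) / t) * Real.logb 2
    (∑ x, PX x *
      (Matrix.trace (mpow (∑ y, PY y • mpow (ρQ x y) (1 - t)) (1 / (1 - t)))).re)

/-- The Rényi-type quantity `I_{1−t}[XY;B]_{P_X,P_Y,Q}`. -/
def renyiXY {𝒳 𝒴 : Type*} [Fintype 𝒳] [Fintype 𝒴] {d : ℕ}
    (PX : 𝒳 → ℝ) (PY : 𝒴 → ℝ) (ρQ : 𝒳 → 𝒴 → Matrix (Fin d) (Fin d) ℂ) (t : ℝ) : ℝ :=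
  -((1 - t) / t) * Real.logb 2
    (Matrix.trace (mpow (∑ x, ∑ y, (PX x * PY y) • mpow (ρQ x y) (1 - t))
      (1 / (1 - t)))).re

/-- The polynomial factor `f`. -/
def fFac (n cardS cardX cardY d : ℕ) (t : ℝ) : ℝ :=
  ((n : ℝ) + 1) ^ (((cardS : ℝ) - 1)
    + t * (cardX : ℝ) * (cardY : ℝ) * ((d : ℝ) - 1) * (d : ℝ) / 2
    + ((d : ℝ) - 1) * t * (cardX : ℝ) * (cardY : ℝ))

/-- The polynomial factor `n^{c·d(d−1)/2}·Λ(n,d)^c`. -/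
def gFac (n c d : ℕ) : ℝ :=
  (n : ℝ) ^ ((c : ℝ) * (d : ℝ) * ((d : ℝ) - 1) / 2) * (numPartLe n d : ℝ) ^ c

section basics
set_option linter.unusedSectionVars false
variable {m : Type*} [Fintype m] [DecidableEq m]

lemma unit_left {U : Matrix m m ℂ} (hU : U ∈ Matrix.unitaryGroup m ℂ) : star U * U = 1 :=
  (Matrix.mem_unitaryGroup_iff').1 hU
lemma unit_right {U : Matrix m m ℂ} (hU : U ∈ Matrix.unitaryGroup m ℂ) : U * star U = 1 :=
  (Matrix.mem_unitaryGroup_iff).1 hU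

/-- spectral form -/
def specForm (U : Matrix m m ℂ) (a : m → ℝ) : Matrix m m ℂ :=
  U * Matrix.diagonal (fun i => (a i : ℂ)) * star U

lemma exists_specForm {A : Matrix m m ℂ} (hA : A.IsHermitian) :
    ∃ U ∈ Matrix.unitaryGroup m ℂ, A = specForm U hA.eigenvalues ∧
      ∀ f, matFun f A = specForm U (fun i => f (hA.eigenvalues i)) := by
  refine ⟨hA.eigenvectorUnitary, hA.eigenvectorUnitary.2, ?_, ?_⟩
  · have := hA.spectral_theorem
    rw [Unitary.conjStarAlgAut_apply] at this
    exact this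
  · intro f
    simp [matFun, hA, specForm]

lemma specForm_isHermitian (U : Matrix m m ℂ) (a : m → ℝ) : (specForm U a).IsHermitian := by
  unfold specForm Matrix.IsHermitian
  rw [Matrix.conjTranspose_mul, Matrix.conjTranspose_mul, Matrix.diagonal_conjTranspose]
  simp only [Matrix.star_eq_conjTranspose, Matrix.conjTranspose_conjTranspose, Matrix.mul_assoc]
  congr 2
  congr 1
  funext i
  simp

lemma intertwine {U V X : Matrix m m ℂ} (hU : U ∈ Matrix.unitaryGroup m ℂ)
    (hV : V ∈ Matrix.unitaryGroup m ℂ) (a b : m → ℝ)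
    (h : X * specForm U a = specForm V b * X) (f : ℝ → ℝ) :
    X * specForm U (fun i => f (a i)) = specForm V (fun i => f (b i)) * X := by
  have key : ∀ c e : m → ℝ, (X * specForm U c = specForm V e * X ↔
      (star V * X * U) * Matrix.diagonal (fun i => (c i : ℂ)) =
        Matrix.diagonal (fun i => (e i : ℂ)) * (star V * X * U)) := by
    intro c e
    constructor
    · intro h
      have h2 : star V * (X * specForm U c) * U = star V * (specForm V e * X) * U := by rw [h]
      unfold specForm at h2
      calc (star V * X * U) * Matrix.diagonal (fun i => (c i : ℂ))
          = star V * (X * (U * Matrix.diagonal (fun i => (c i : ℂ)) * star U)) * U := by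
            simp only [Matrix.mul_assoc]; rw [unit_left hU]; simp
        _ = star V * ((V * Matrix.diagonal (fun i => (e i : ℂ)) * star V) * X) * U := h2
        _ = (star V * V) * Matrix.diagonal (fun i => (e i : ℂ)) * (star V * X * U) := by
            simp only [Matrix.mul_assoc]
        _ = _ := by rw [unit_left hV]; simp
    · intro h
      unfold specForm
      calc X * (U * Matrix.diagonal (fun i => (c i : ℂ)) * star U)
          = (V * star V) * X * (U * Matrix.diagonal (fun i => (c i : ℂ)) * star U) := by
            rw [unit_right hV]; simp
        _ = V * ((star V * X * U) * Matrix.diagonal (fun i => (c i : ℂ))) * star U := by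
            simp only [Matrix.mul_assoc]
        _ = V * (Matrix.diagonal (fun i => (e i : ℂ)) * (star V * X * U)) * star U := by rw [h]
        _ = (V * Matrix.diagonal (fun i => (e i : ℂ)) * star V) * X * (U * star U) := by
            simp only [Matrix.mul_assoc]
        _ = _ := by rw [unit_right hU]; simp
  rw [key] at h ⊢
  ext i j
  have hij := congrFun (congrFun h i) j
  rw [Matrix.mul_diagonal, Matrix.diagonal_mul] at hij ⊢
  by_cases h0 : (star V * X * U) i j = 0
  · simp [h0]
  · have : (a j : ℂ) = b i := by
      rw [mul_comm] at hij
      exact mul_right_cancel₀ h0 hij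
    have : a j = b i := by exact_mod_cast this
    rw [this, mul_comm]

lemma matFun_specForm {U : Matrix m m ℂ} (hU : U ∈ Matrix.unitaryGroup m ℂ) (a : m → ℝ)
    (f : ℝ → ℝ) : matFun f (specForm U a) = specForm U (fun i => f (a i)) := by
  obtain ⟨V, hV, h1, h2⟩ := exists_specForm (specForm_isHermitian U a)
  rw [h2]
  have := intertwine (X := 1) hV hU _ a (by rw [← h1]; simp) f
  simpa using this

lemma matFun_commute {A X : Matrix m m ℂ} (hA : A.IsHermitian) (h : X * A = A * X) (f : ℝ → ℝ) :
    X * matFun f A = matFun f A * X := by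
  obtain ⟨V, hV, h1, h2⟩ := exists_specForm hA
  rw [h2]
  exact intertwine hV hV _ _ (by rw [← h1]; exact h) f

lemma matFun_isHermitian {A : Matrix m m ℂ} (f : ℝ → ℝ) : (matFun f A).IsHermitian := by
  by_cases hA : A.IsHermitian
  · obtain ⟨V, hV, h1, h2⟩ := exists_specForm hA
    rw [h2]; exact specForm_isHermitian _ _
  · simp [matFun, hA]

lemma specForm_mul {U : Matrix m m ℂ} (hU : U ∈ Matrix.unitaryGroup m ℂ) (a b : m → ℝ) :
    specForm U a * specForm U b = specForm U (fun i => a i * b i) := by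
  unfold specForm
  calc _ = U * Matrix.diagonal (fun i => (a i : ℂ)) * (star U * U) *
      Matrix.diagonal (fun i => (b i : ℂ)) * star U := by simp only [Matrix.mul_assoc]
    _ = _ := by
      rw [unit_left hU, Matrix.mul_one, Matrix.mul_assoc U, Matrix.diagonal_mul_diagonal]
      simp

lemma specForm_posSemidef (U : Matrix m m ℂ) {a : m → ℝ} (ha : ∀ i, 0 ≤ a i) :
    (specForm U a).PosSemidef := by
  unfold specForm
  apply Matrix.PosSemidef.mul_mul_conjTranspose_same
  rw [Matrix.posSemidef_diagonal_iff]
  intro i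
  exact_mod_cast ha i

lemma specForm_trace {U : Matrix m m ℂ} (hU : U ∈ Matrix.unitaryGroup m ℂ) (a : m → ℝ) :
    (specForm U a).trace = ((∑ i, a i : ℝ) : ℂ) := by
  unfold specForm
  rw [Matrix.trace_mul_comm, ← Matrix.mul_assoc, unit_left hU, Matrix.one_mul,
    Matrix.trace_diagonal]
  simp

/-- Expansion of trace against a spectral form. -/
lemma trace_specForm_mul (U : Matrix m m ℂ) (a : m → ℝ) (M : Matrix m m ℂ) :
    (specForm U a * M).trace = ∑ i, (a i : ℂ) * (star U * M * U) i i := by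
  unfold specForm
  rw [Matrix.mul_assoc, Matrix.mul_assoc, Matrix.trace_mul_comm, Matrix.mul_assoc,
    Matrix.trace]
  refine Finset.sum_congr rfl fun i _ => ?_
  rw [Matrix.diag_apply, Matrix.diagonal_mul, Matrix.mul_assoc]

lemma exists_specForm_nonneg {A : Matrix m m ℂ} (hA : A.PosSemidef) :
    ∃ U ∈ Matrix.unitaryGroup m ℂ, ∃ a : m → ℝ, (∀ i, 0 ≤ a i) ∧ A = specForm U a := by
  obtain ⟨U, hU, h1, -⟩ := exists_specForm hA.1
  exact ⟨U, hU, _, hA.eigenvalues_nonneg, h1⟩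

/-- square root -/
lemma exists_sqrt {A : Matrix m m ℂ} (hA : A.PosSemidef) :
    ∃ B : Matrix m m ℂ, B = matFun Real.sqrt A ∧ B.PosSemidef ∧ B * B = A := by
  obtain ⟨U, hU, a, ha, rfl⟩ := exists_specForm_nonneg hA
  refine ⟨_, rfl, ?_, ?_⟩
  · rw [matFun_specForm hU]; exact specForm_posSemidef _ fun i => Real.sqrt_nonneg _
  · rw [matFun_specForm hU, specForm_mul hU]; congr 1; funext i; exact Real.mul_self_sqrt (ha i)

lemma trace_mul_nonneg' {A B : Matrix m m ℂ} (hA : A.PosSemidef) (hB : B.PosSemidef) :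
    0 ≤ (A * B).trace := by
  obtain ⟨C, -, hC, rfl⟩ := exists_sqrt hA
  rw [Matrix.mul_assoc, Matrix.trace_mul_comm]
  have := (hB.mul_mul_conjTranspose_same C).trace_nonneg
  rw [hC.1.eq] at this
  exact this

lemma trace_mul_re_nonneg {A B : Matrix m m ℂ} (hA : A.PosSemidef) (hB : B.PosSemidef) :
    0 ≤ (A * B).trace.re := (Complex.le_def.1 (trace_mul_nonneg' hA hB)).1

lemma trace_mul_re_mono {A B C : Matrix m m ℂ} (hA : A.PosSemidef) (hB : (C - B).PosSemidef) :
    (A * B).trace.re ≤ (A * C).trace.re := by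
  have := trace_mul_re_nonneg hA hB
  rw [Matrix.mul_sub, Matrix.trace_sub, Complex.sub_re] at this
  linarith

lemma psd_rsmul {A : Matrix m m ℂ} (hA : A.PosSemidef) {c : ℝ} (hc : 0 ≤ c) :
    (c • A).PosSemidef := by
  have := hA.smul (a := (c : ℂ)) (by exact_mod_cast hc)
  convert this using 1
  ext i j
  simp

lemma commute_psd_mul {A B : Matrix m m ℂ} (hA : A.PosSemidef) (hB : B.PosSemidef)
    (h : A * B = B * A) : (A * B).PosSemidef := by
  obtain ⟨C, hC0, hC, hCC⟩ := exists_sqrt hA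
  have h1 : B * C = C * B := by rw [hC0]; exact matFun_commute hA.1 h.symm _
  have := hB.mul_mul_conjTranspose_same C
  rw [hC.1.eq, ← h1, Matrix.mul_assoc, hCC, ← h] at this
  exact this

end basics

section onb
open scoped Matrix
set_option linter.unusedSectionVars false
variable {m : Type*} [Fintype m] [DecidableEq m]

/-- matrices as Euclidean vectors -/
def toEuc : Matrix m m ℂ ≃ₗ[ℂ] EuclideanSpace ℂ (m × m) where
  toFun M := WithLp.toLp 2 (fun p => M p.1 p.2)
  invFun v := Matrix.of fun i j => v (i, j)
  left_inv M := by ext i j; simp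
  right_inv v := by ext p; simp
  map_add' M N := by ext p; simp
  map_smul' c M := by ext p; simp

lemma toEuc_inner (M N : Matrix m m ℂ) : inner ℂ (toEuc M) (toEuc N) = (Mᴴ * N).trace := by
  simp only [toEuc, LinearEquiv.coe_mk, LinearMap.coe_mk, AddHom.coe_mk,
    EuclideanSpace.inner_eq_star_dotProduct, dotProduct, Matrix.trace, Matrix.diag_apply,
    Matrix.mul_apply, Matrix.conjTranspose_apply, Fintype.sum_prod_type]
  rw [Finset.sum_comm]
  refine Finset.sum_congr rfl fun i _ => Finset.sum_congr rfl fun j _ => ?_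
  simp [mul_comm]

lemma exists_onb (A : Submodule ℂ (Matrix m m ℂ)) :
    ∃ E : Fin (Module.finrank ℂ A) → Matrix m m ℂ, (∀ j, E j ∈ A) ∧
      (∀ i j, ((E i)ᴴ * E j).trace = if i = j then 1 else 0) ∧
      ∀ a ∈ A, a = ∑ j, ((E j)ᴴ * a).trace • E j := by
  let A' := A.map (toEuc (m := m)).toLinearMap
  have hfr : Module.finrank ℂ A' = Module.finrank ℂ A := LinearEquiv.finrank_map_eq toEuc A
  let b := (stdOrthonormalBasis ℂ A').reindex (finCongr hfr)
  have hb : ∀ j, toEuc.symm (b j : EuclideanSpace ℂ (m × m)) ∈ A := by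
    intro j
    obtain ⟨x, hx, hx2⟩ := (b j).2
    rw [← hx2]
    simpa using hx
  refine ⟨fun j => toEuc.symm (b j : EuclideanSpace ℂ (m × m)), hb, ?_, ?_⟩
  · intro i j
    rw [← toEuc_inner]
    simp only [LinearEquiv.apply_symm_apply]
    have := orthonormal_iff_ite.1 b.orthonormal i j
    rw [← this]
    rfl
  · intro a ha
    have ha' : toEuc a ∈ A' := ⟨a, ha, rfl⟩
    have := b.sum_repr' ⟨toEuc a, ha'⟩
    have h2 := congrArg (fun z : A' => toEuc.symm (z : EuclideanSpace ℂ (m × m))) this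
    simp only [LinearEquiv.symm_apply_apply] at h2
    rw [← h2]
    simp only [Submodule.coe_sum, map_sum, Submodule.coe_smul, map_smul, Submodule.coe_inner]
    refine Finset.sum_congr rfl fun j _ => ?_
    congr 1
    rw [← toEuc_inner]
    simp only [LinearEquiv.apply_symm_apply]
    congr 1
    have := congrArg (fun z : A' => (z : EuclideanSpace ℂ (m × m))) (b.sum_repr' ⟨toEuc a, ha'⟩)
    simp only [Submodule.coe_sum,  Submodule.coe_smul, Submodule.coe_inner] at this
    rw [← toEuc.symm_apply_apply a] 
    simp only [LinearEquiv.apply_symm_apply, map_sum, map_smul]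
    exact this.symm

lemma cs_psd {ι : Type*} [Fintype ι] (α : ι → ℂ) (E : ι → Matrix m m ℂ) {X : Matrix m m ℂ}
    (hX : X.PosSemidef) :
    ((∑ j, α j * star (α j)) • (∑ j, E j * X * (E j)ᴴ) -
      (∑ j, α j • E j) * X * (∑ j, α j • E j)ᴴ).PosSemidef := by
  have h : ((∑ j, α j * star (α j)) • (∑ j, E j * X * (E j)ᴴ) -
      (∑ j, α j • E j) * X * (∑ j, α j • E j)ᴴ) =
      ((1/2 : ℝ)) • ∑ j, ∑ l, (star (α l) • E j - star (α j) • E l) * X *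
        (star (α l) • E j - star (α j) • E l)ᴴ := by
    have h1 : ∀ j l, (star (α l) • E j - star (α j) • E l) * X *
        (star (α l) • E j - star (α j) • E l)ᴴ =
        (α l * star (α l)) • (E j * X * (E j)ᴴ) + (α j * star (α j)) • (E l * X * (E l)ᴴ)
        - (α j * star (α l)) • (E j * X * (E l)ᴴ) - (α l * star (α j)) • (E l * X * (E j)ᴴ) := by
      intro j l
      rw [Matrix.conjTranspose_sub, Matrix.conjTranspose_smul, Matrix.conjTranspose_smul]
      simp only [star_star, Matrix.sub_mul, Matrix.mul_sub, Matrix.smul_mul, Matrix.mul_smul]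
      simp only [smul_sub, smul_smul]
      abel
    simp only [h1, Finset.sum_sub_distrib, Finset.sum_add_distrib]
    have e1 : ∑ j, ∑ l, (α l * star (α l)) • (E j * X * (E j)ᴴ) =
        (∑ j, α j * star (α j)) • (∑ j, E j * X * (E j)ᴴ) := by
      simp only [← Finset.sum_smul, ← Finset.smul_sum]
    have e2 : ∑ j, ∑ l, (α j * star (α j)) • (E l * X * (E l)ᴴ) =
        (∑ j, α j * star (α j)) • (∑ j, E j * X * (E j)ᴴ) := by
      simp only [← Finset.sum_smul, ← Finset.smul_sum]
    have e3 : ∑ j, ∑ l, (α j * star (α l)) • (E j * X * (E l)ᴴ) =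
        (∑ j, α j • E j) * X * (∑ j, α j • E j)ᴴ := by
      rw [Matrix.conjTranspose_sum, Finset.sum_mul, Finset.sum_mul]
      refine Finset.sum_congr rfl fun j _ => ?_
      rw [Finset.mul_sum]
      refine Finset.sum_congr rfl fun l _ => ?_
      rw [Matrix.conjTranspose_smul]
      simp only [Matrix.smul_mul, Matrix.mul_smul, smul_smul]
      rw [mul_comm]
    have e4 : ∑ j, ∑ l, (α l * star (α j)) • (E l * X * (E j)ᴴ) =
        (∑ j, α j • E j) * X * (∑ j, α j • E j)ᴴ := by
      rw [Finset.sum_comm, e3]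
    rw [e1, e2, e3, e4]
    ext i j
    simp
    ring
  rw [h]
  refine psd_rsmul ?_ (by norm_num)
  refine Matrix.posSemidef_sum _ fun j _ => Matrix.posSemidef_sum _ fun l _ => ?_
  exact hX.mul_mul_conjTranspose_same _

variable {ι : Type*} [Fintype ι]

lemma phi_comm (A : StarSubalgebra ℂ (Matrix m m ℂ)) (E : ι → Matrix m m ℂ) (hE : ∀ j, E j ∈ A)
    (hexp : ∀ a ∈ A, a = ∑ j, ((E j)ᴴ * a).trace • E j) (X : Matrix m m ℂ)
    {a : Matrix m m ℂ} (ha : a ∈ A) :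
    a * (∑ j, E j * X * (E j)ᴴ) = (∑ j, E j * X * (E j)ᴴ) * a := by
  have l : a * (∑ j, E j * X * (E j)ᴴ) =
      ∑ j, ∑ l, ((E l)ᴴ * (a * E j)).trace • (E l * X * (E j)ᴴ) := by
    rw [Finset.mul_sum]
    refine Finset.sum_congr rfl fun j _ => ?_
    have h := hexp (a * E j) (mul_mem ha (hE j))
    calc a * (E j * X * (E j)ᴴ) = (a * E j) * X * (E j)ᴴ := by simp only [Matrix.mul_assoc]
      _ = _ := by
        conv_lhs => rw [h]
        simp only [Finset.sum_mul, Matrix.smul_mul]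
  have r : (∑ j, E j * X * (E j)ᴴ) * a =
      ∑ l, ∑ j, ((E l)ᴴ * (a * E j)).trace • (E l * X * (E j)ᴴ) := by
    rw [Finset.sum_mul]
    refine Finset.sum_congr rfl fun l _ => ?_
    have h := hexp (aᴴ * E l) (mul_mem (star_mem ha) (hE l))
    calc (E l * X * (E l)ᴴ) * a = E l * X * (aᴴ * E l)ᴴ := by
          rw [Matrix.conjTranspose_mul, Matrix.conjTranspose_conjTranspose]
          simp only [Matrix.mul_assoc]
      _ = _ := by
        conv_lhs => rw [h]
        rw [Matrix.conjTranspose_sum, Finset.mul_sum]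
        refine Finset.sum_congr rfl fun j _ => ?_
        rw [Matrix.conjTranspose_smul, Matrix.mul_smul]
        congr 1
        rw [← Matrix.trace_conjTranspose]
        simp only [Matrix.conjTranspose_mul, Matrix.conjTranspose_conjTranspose, Matrix.mul_assoc]
  rw [l, r, Finset.sum_comm]

lemma psi_comm (A : StarSubalgebra ℂ (Matrix m m ℂ)) (E : ι → Matrix m m ℂ) (hE : ∀ j, E j ∈ A)
    (hexp : ∀ a ∈ A, a = ∑ j, ((E j)ᴴ * a).trace • E j)
    {a : Matrix m m ℂ} (ha : a ∈ A) :
    a * (∑ j, (E j)ᴴ * E j) = (∑ j, (E j)ᴴ * E j) * a := by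
  have l : a * (∑ j, (E j)ᴴ * E j) =
      ∑ j, ∑ l, ((E j)ᴴ * (E l * a)).trace • ((E l)ᴴ * E j) := by
    rw [Finset.mul_sum]
    refine Finset.sum_congr rfl fun j _ => ?_
    have h := hexp (E j * aᴴ) (mul_mem (hE j) (star_mem ha))
    calc a * ((E j)ᴴ * E j) = (E j * aᴴ)ᴴ * E j := by
          rw [Matrix.conjTranspose_mul, Matrix.conjTranspose_conjTranspose]
          simp only [Matrix.mul_assoc]
      _ = _ := by
        conv_lhs => rw [h]
        rw [Matrix.conjTranspose_sum, Finset.sum_mul]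
        refine Finset.sum_congr rfl fun l _ => ?_
        rw [Matrix.conjTranspose_smul, Matrix.smul_mul]
        congr 1
        rw [← Matrix.trace_conjTranspose]
        simp only [Matrix.conjTranspose_mul, Matrix.conjTranspose_conjTranspose, Matrix.mul_assoc]
        rw [Matrix.trace_mul_comm]
        simp only [Matrix.mul_assoc]
  have r : (∑ j, (E j)ᴴ * E j) * a =
      ∑ l, ∑ j, ((E j)ᴴ * (E l * a)).trace • ((E l)ᴴ * E j) := by
    rw [Finset.sum_mul]
    refine Finset.sum_congr rfl fun l _ => ?_
    have h := hexp (E l * a) (mul_mem (hE l) ha)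
    calc ((E l)ᴴ * E l) * a = (E l)ᴴ * (E l * a) := by simp only [Matrix.mul_assoc]
      _ = _ := by
        conv_lhs => rw [h]
        simp only [Finset.mul_sum, Matrix.mul_smul]
  rw [l, r, Finset.sum_comm]

end onb

section centre
open scoped Matrix
set_option linter.unusedSectionVars false
variable {m : Type*} [Fintype m] [DecidableEq m]

/-- central elements -/
def IsCen (A : StarSubalgebra ℂ (Matrix m m ℂ)) (z : Matrix m m ℂ) : Prop :=
  z ∈ A ∧ ∀ a ∈ A, a * z = z * a

/-- closed under functional calculus -/
def FcClosed (A : StarSubalgebra ℂ (Matrix m m ℂ)) : Prop :=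
  ∀ a ∈ A, a.IsHermitian → ∀ f : ℝ → ℝ, matFun f a ∈ A

lemma IsCen.matFun {A : StarSubalgebra ℂ (Matrix m m ℂ)} (hA : FcClosed A) {z : Matrix m m ℂ}
    (hz : IsCen A z) (hh : z.IsHermitian) (f : ℝ → ℝ) : IsCen A (matFun f z) :=
  ⟨hA z hz.1 hh f, fun a ha => matFun_commute hh (hz.2 a ha) f⟩

lemma IsCen.mul {A : StarSubalgebra ℂ (Matrix m m ℂ)} {y z : Matrix m m ℂ}
    (hy : IsCen A y) (hz : IsCen A z) : IsCen A (y * z) :=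
  ⟨mul_mem hy.1 hz.1, fun a ha => by
    rw [← mul_assoc, hy.2 a ha, mul_assoc, hz.2 a ha, mul_assoc]⟩

lemma IsCen.sub {A : StarSubalgebra ℂ (Matrix m m ℂ)} {y z : Matrix m m ℂ}
    (hy : IsCen A y) (hz : IsCen A z) : IsCen A (y - z) :=
  ⟨sub_mem hy.1 hz.1, fun a ha => by
    rw [mul_sub, sub_mul, hy.2 a ha, hz.2 a ha]⟩

lemma IsCen.one {A : StarSubalgebra ℂ (Matrix m m ℂ)} : IsCen A 1 :=
  ⟨one_mem A, fun a _ => by simp⟩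

/-- nonzero central projection -/
def IsCP (A : StarSubalgebra ℂ (Matrix m m ℂ)) (p : Matrix m m ℂ) : Prop :=
  IsCen A p ∧ p.IsHermitian ∧ p * p = p ∧ p ≠ 0

/-- valid decomposition -/
def CPFam (A : StarSubalgebra ℂ (Matrix m m ℂ)) (s : Finset (Matrix m m ℂ)) : Prop :=
  (∀ p ∈ s, IsCP A p) ∧ (∀ p ∈ s, ∀ q ∈ s, p ≠ q → p * q = 0) ∧ ∑ p ∈ s, p = 1

lemma CPFam.card_le {A : StarSubalgebra ℂ (Matrix m m ℂ)} {s : Finset (Matrix m m ℂ)}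
    (hs : CPFam A s) {T : Type*} [Fintype T] (L : Matrix m m ℂ →ₗ[ℂ] (T → ℂ))
    (hL : ∀ z, IsCen A z → L z = 0 → z = 0) : s.card ≤ Fintype.card T := by
  have hli : LinearIndependent ℂ (fun p : s => L (p : Matrix m m ℂ)) := by
    rw [Fintype.linearIndependent_iff]
    intro g hg p
    have h1 : L (∑ p : s, g p • (p : Matrix m m ℂ)) = 0 := by
      rw [map_sum]; simpa using hg
    have hc : IsCen A (∑ p : s, g p • (p : Matrix m m ℂ)) := by
      refine ⟨sum_mem fun p _ => A.smul_mem (hs.1 p p.2).1.1 _, fun a ha => ?_⟩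
      rw [Finset.mul_sum, Finset.sum_mul]
      refine Finset.sum_congr rfl fun p _ => ?_
      rw [mul_smul_comm, smul_mul_assoc, (hs.1 p p.2).1.2 a ha]
    have h2 := hL _ hc h1
    have h3 : (p : Matrix m m ℂ) * (∑ q : s, g q • (q : Matrix m m ℂ)) = g p • (p : Matrix m m ℂ) := by
      rw [Finset.mul_sum, Finset.sum_eq_single p]
      · rw [mul_smul_comm, (hs.1 p p.2).2.2.1]
      · intro q _ hq
        rw [mul_smul_comm, hs.2.1 p p.2 q q.2 (fun h => hq (Subtype.ext h.symm)), smul_zero]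
      · simp
    rw [h2, mul_zero] at h3
    exact (smul_eq_zero.1 h3.symm).resolve_right (hs.1 p p.2).2.2.2
  have := hli.fintype_card_le_finrank
  simpa using this

lemma CPFam.split {A : StarSubalgebra ℂ (Matrix m m ℂ)} {s : Finset (Matrix m m ℂ)}
    (hs : CPFam A s) {p q : Matrix m m ℂ} (hp : p ∈ s) (hq : IsCen A q) (hqh : q.IsHermitian)
    (hqq : q * q = q) (h1 : p * q ≠ 0) (h2 : p * (1 - q) ≠ 0) :
    ∃ s', CPFam A s' ∧ s.card < s'.card := by
  classical
  have hP := hs.1 p hp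
  have gen : ∀ q : Matrix m m ℂ, IsCen A q → q.IsHermitian → q * q = q → p * q ≠ 0 →
      IsCP A (p * q) := by
    intro q hq hqh hqq h1
    have hc : p * q = q * p := hq.2 p hP.1.1
    refine ⟨hP.1.mul hq, ?_, ?_, h1⟩
    · rw [Matrix.IsHermitian, Matrix.conjTranspose_mul, hP.2.1.eq, hqh.eq, hc]
    · calc p * q * (p * q) = p * (q * p) * q := by simp only [mul_assoc]
        _ = (p * p) * (q * q) := by rw [← hc]; simp only [mul_assoc]
        _ = _ := by rw [hqq, hP.2.2.1]
  have hq' : IsCen A (1 - q) := IsCen.one.sub hq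
  have hqh' : (1 - q).IsHermitian := Matrix.isHermitian_one.sub hqh
  have hqq' : (1 - q) * (1 - q) = 1 - q := by rw [mul_sub, sub_mul, sub_mul, hqq]; simp
  have g1 := gen q hq hqh hqq h1
  have g2 := gen (1 - q) hq' hqh' hqq' h2
  have o12 : p * q * (p * (1 - q)) = 0 := by
    have hc : p * q = q * p := hq.2 p hP.1.1
    calc p * q * (p * (1 - q)) = p * (q * p) * (1 - q) := by simp only [mul_assoc]
      _ = p * p * (q * (1 - q)) := by rw [← hc]; simp only [mul_assoc]
      _ = 0 := by rw [mul_sub, hqq]; simp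
  have o21 : p * (1 - q) * (p * q) = 0 := by
    rw [← g1.1.2 _ g2.1.1] at o12
    exact o12
  have oth : ∀ r ∈ s.erase p, ∀ q : Matrix m m ℂ, IsCen A q →
      r * (p * q) = 0 ∧ (p * q) * r = 0 := by
    intro r hr q hq
    rw [Finset.mem_erase] at hr
    have h0 : r * (p * q) = 0 := by rw [← mul_assoc, hs.2.1 r hr.2 p hp hr.1, zero_mul]
    exact ⟨h0, by rw [(hs.1 r hr.2).1.2 _ (hP.1.mul hq).1] ; exact h0⟩
  have n1 : p * q ∉ s.erase p := by
    intro h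
    exact g1.2.2.2 (by have := (oth _ h q hq).1; rwa [g1.2.2.1] at this)
  have n2 : p * (1 - q) ∉ s.erase p := by
    intro h
    exact g2.2.2.2 (by have := (oth _ h _ hq').1; rwa [g2.2.2.1] at this)
  have n12 : p * q ∉ insert (p * (1 - q)) (s.erase p) := by
    rw [Finset.mem_insert]
    rintro (h | h)
    · rw [← h, g1.2.2.1] at o12
      exact g1.2.2.2 o12
    · exact n1 h
  refine ⟨insert (p * q) (insert (p * (1 - q)) (s.erase p)), ⟨?_, ?_, ?_⟩, ?_⟩
  · intro r hr
    rw [Finset.mem_insert, Finset.mem_insert] at hr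
    rcases hr with rfl | rfl | hr
    · exact g1
    · exact g2
    · exact hs.1 r (Finset.mem_of_mem_erase hr)
  · intro r hr r' hr' hne
    rw [Finset.mem_insert, Finset.mem_insert] at hr hr'
    rcases hr with rfl | rfl | hr <;> rcases hr' with rfl | rfl | hr'
    · exact absurd rfl hne
    · exact o12
    · exact (oth _ hr' _ hq).2
    · exact o21
    · exact absurd rfl hne
    · exact (oth _ hr' _ hq').2
    · exact (oth _ hr _ hq).1
    · exact (oth _ hr _ hq').1
    · exact hs.2.1 r (Finset.mem_of_mem_erase hr) r' (Finset.mem_of_mem_erase hr') hne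
  · rw [Finset.sum_insert n12, Finset.sum_insert n2, ← add_assoc, ← mul_add, add_sub_cancel,
      mul_one, Finset.add_sum_erase _ (fun x => x) hp, hs.2.2]
  · rw [Finset.card_insert_of_notMem n12, Finset.card_insert_of_notMem n2,
      Finset.card_erase_of_mem hp]
    omega

lemma exists_min_fam (A : StarSubalgebra ℂ (Matrix m m ℂ)) (hA : FcClosed A)
    {T : Type*} [Fintype T] (L : Matrix m m ℂ →ₗ[ℂ] (T → ℂ))
    (hL : ∀ z, IsCen A z → L z = 0 → z = 0) :
    ∃ s, CPFam A s ∧ s.card ≤ Fintype.card T ∧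
      ∀ p ∈ s, ∀ z, IsCen A z → z.IsHermitian → ∃ c : ℝ, p * z = (c : ℂ) • p := by
  classical
  have hmax : ∃ s, CPFam A s ∧ ∀ s', CPFam A s' → ¬ s.card < s'.card := by
    by_contra hcon
    push Not at hcon
    have h0 : ∃ s, CPFam A s := by
      by_cases h1 : (1 : Matrix m m ℂ) = 0
      · exact ⟨∅, by simp, by simp, by simp [h1]⟩
      · refine ⟨{1}, ?_, ?_, by simp⟩
        · intro p hp
          rw [Finset.mem_singleton] at hp
          subst hp
          exact ⟨IsCen.one, Matrix.isHermitian_one, by simp, h1⟩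
        · intro p hp q hq hne
          rw [Finset.mem_singleton] at hp hq
          exact absurd (hp.trans hq.symm) hne
    have hk : ∀ k : ℕ, ∃ s, CPFam A s ∧ k ≤ s.card := by
      intro k
      induction k with
      | zero => obtain ⟨s, hs⟩ := h0; exact ⟨s, hs, Nat.zero_le _⟩
      | succ k ih =>
        obtain ⟨s, hs, hk⟩ := ih
        obtain ⟨s', hs', hlt⟩ := hcon s hs
        exact ⟨s', hs', by omega⟩
    obtain ⟨s, hs, hk⟩ := hk (Fintype.card T + 1)
    have := hs.card_le L hL
    omega
  obtain ⟨s, hs, hm⟩ := hmax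
  refine ⟨s, hs, hs.card_le L hL, ?_⟩
  intro p hp z hz hzh
  have hP := hs.1 p hp
  obtain ⟨U, hU, h1, h2⟩ := exists_specForm hzh
  set ev := hzh.eigenvalues with hev
  -- spectral projections
  have hproj : ∀ l : ℝ, p * matFun (fun x => if x = l then 1 else 0) z = 0 ∨
      p * matFun (fun x => if x = l then 1 else 0) z = p := by
    intro l
    by_contra hcon
    push Not at hcon
    have hqq : matFun (fun x => if x = l then 1 else 0) z *
        matFun (fun x => if x = l then 1 else 0) z = matFun (fun x => if x = l then 1 else 0) z := by
      rw [h2, specForm_mul hU]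
      congr 1
      funext i
      by_cases h : ev i = l <;> simp [h]
    obtain ⟨s', hs', hlt⟩ := hs.split hp (hz.matFun hA hzh (fun x => if x = l then 1 else 0))
      (matFun_isHermitian _) hqq hcon.1 (by
        rw [mul_sub, mul_one]
        intro h
        exact hcon.2 (sub_eq_zero.1 h).symm)
    exact hm s' hs' hlt
  have hsum : ∑ l ∈ Finset.univ.image ev, matFun (fun x => if x = l then 1 else 0) z = 1 := by
    simp only [h2, specForm]
    rw [← Finset.sum_mul, ← Finset.mul_sum]
    have : ∑ l ∈ Finset.univ.image ev,
        Matrix.diagonal (fun i => (((if ev i = l then 1 else 0 : ℝ)) : ℂ)) = (1 : Matrix m m ℂ) := by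
      ext i j
      rw [Matrix.sum_apply]
      by_cases hij : i = j
      · subst hij
        simp only [Matrix.diagonal_apply_eq, Matrix.one_apply_eq]
        rw [Finset.sum_eq_single (ev i)]
        · simp
        · intro b _ hb; simp [hb.symm]
        · intro h; exact absurd (Finset.mem_image_of_mem _ (Finset.mem_univ i)) h
      · simp [hij]
    rw [this, Matrix.mul_one, unit_right hU]
  have hex : ∃ l : ℝ, p * matFun (fun x => if x = l then 1 else 0) z = p := by
    by_contra hcon
    push Not at hcon
    apply hP.2.2.2
    rw [← mul_one p, ← hsum, Finset.mul_sum]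
    exact Finset.sum_eq_zero fun l _ => (hproj l).resolve_right (hcon l)
  obtain ⟨l, hl⟩ := hex
  refine ⟨l, ?_⟩
  have h3 : matFun (fun x => if x = l then 1 else 0) z * z =
      (l : ℂ) • matFun (fun x => if x = l then 1 else 0) z := by
    rw [h2]
    conv_lhs => rw [h1]
    rw [specForm_mul hU]
    simp only [specForm]
    rw [← Matrix.smul_mul, ← Matrix.mul_smul, ← Matrix.diagonal_smul]
    congr 3
    funext i
    by_cases h : ev i = l <;> simp [h]
  calc p * z = (p * matFun (fun x => if x = l then 1 else 0) z) * z := by rw [hl]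
    _ = p * (matFun (fun x => if x = l then 1 else 0) z * z) := by rw [mul_assoc]
    _ = _ := by rw [h3, mul_smul_comm, hl]

end centre

section bmain
open scoped Matrix
set_option linter.unusedSectionVars false
variable {m : Type*} [Fintype m] [DecidableEq m]

lemma herm_re {z : ℂ} (h : 0 ≤ z) : z = ((z.re : ℝ) : ℂ) := by
  rw [Complex.le_def] at h
  apply Complex.ext <;> simp [← h.2]

lemma IsCP.psd {A : StarSubalgebra ℂ (Matrix m m ℂ)} {p : Matrix m m ℂ} (hp : IsCP A p) :
    p.PosSemidef := by
  have := Matrix.posSemidef_conjTranspose_mul_self p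
  rwa [hp.2.1.eq, hp.2.2.1] at this

lemma IsCP.trace_pos {A : StarSubalgebra ℂ (Matrix m m ℂ)} {p : Matrix m m ℂ} (hp : IsCP A p) :
    0 < p.trace.re := by
  have h0 := hp.psd.trace_nonneg
  have h1 : p.trace ≠ 0 := fun h => hp.2.2.2 (hp.psd.trace_eq_zero_iff.1 h)
  have h2 := herm_re h0
  rcases lt_or_eq_of_le (Complex.le_def.1 h0).1 with h | h
  · simpa using h
  · exfalso; apply h1; rw [h2, ← h]; simp

lemma block_bound (A : StarSubalgebra ℂ (Matrix m m ℂ)) (hA : FcClosed A)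
    {ι : Type*} [Fintype ι] (E : ι → Matrix m m ℂ) (hE : ∀ j, E j ∈ A)
    (hexp : ∀ a ∈ A, a = ∑ j, ((E j)ᴴ * a).trace • E j)
    {p : Matrix m m ℂ} (hp : IsCP A p)
    (hmin : ∀ z, IsCen A z → z.IsHermitian → ∃ c : ℝ, p * z = (c : ℂ) • p)
    {κ : ℝ} (hκ : ((∑ j, (E j)ᴴ * E j) * p).trace = (κ : ℂ)) (hκ0 : 0 < κ)
    {σ : Matrix m m ℂ} (hσA : σ ∈ A) (hσ : IsDensity σ) :
    (((Real.sqrt κ / p.trace.re : ℝ) : ℂ) • p - p * σ).PosSemidef := by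
  have hpp := hp.psd
  have htp := hp.trace_pos
  have htr : p.trace = ((p.trace.re : ℝ) : ℂ) := herm_re hpp.trace_nonneg
  set r := p.trace.re with hr
  have hcp : ∀ a ∈ A, a * p = p * a := hp.1.2
  have hpi := hp.2.2.1
  -- X = σ p
  have hX : (σ * p).PosSemidef := commute_psd_mul hσ.1 hpp (hcp σ hσA)
  have hXA : σ * p ∈ A := mul_mem hσA hp.1.1
  obtain ⟨Ψc, hΨ⟩ : ∃ c : ℝ, p * (∑ j, (E j)ᴴ * E j) = (c : ℂ) • p := by
    apply hmin
    · exact ⟨sum_mem fun j _ => mul_mem (star_mem (hE j)) (hE j),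
        fun a ha => psi_comm A E hE hexp ha⟩
    · exact (Matrix.posSemidef_sum _ fun j _ => Matrix.posSemidef_conjTranspose_mul_self (E j)).1
  obtain ⟨φ, hφ⟩ : ∃ c : ℝ, p * (∑ j, E j * (σ * p) * (E j)ᴴ) = (c : ℂ) • p := by
    apply hmin
    · exact ⟨sum_mem fun j _ => mul_mem (mul_mem (hE j) hXA) (star_mem (hE j)),
        fun a ha => phi_comm A E hE hexp _ ha⟩
    · exact (Matrix.posSemidef_sum _ fun j _ => hX.mul_mul_conjTranspose_same (E j)).1
  have hΨr : Ψc * r = κ := by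
    have := congrArg Matrix.trace hΨ
    rw [Matrix.trace_mul_comm, hκ, Matrix.trace_smul, htr, smul_eq_mul] at this
    exact_mod_cast this.symm
  set τ := (σ * p).trace.re with hτ
  have hτ' : (σ * p).trace = (τ : ℂ) := herm_re hX.trace_nonneg
  have hτ0 : 0 ≤ τ := trace_mul_re_nonneg hσ.1 hpp
  have hτ1 : τ ≤ 1 := by
    have h1 : ((1 : Matrix m m ℂ) - p).PosSemidef := by
      have : ((1 : Matrix m m ℂ) - p) = (1 - p)ᴴ * (1 - p) := by
        rw [Matrix.conjTranspose_sub, Matrix.conjTranspose_one, hp.2.1.eq]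
        simp [mul_sub, sub_mul, hpi]
      rw [this]; exact Matrix.posSemidef_conjTranspose_mul_self _
    have := trace_mul_re_mono hσ.1 h1
    rw [mul_one, hσ.2] at this
    simpa using this
  have hφr : φ * r = Ψc * τ := by
    have h := congrArg Matrix.trace hφ
    rw [Matrix.trace_smul, htr, smul_eq_mul] at h
    have h2 : (p * (∑ j, E j * (σ * p) * (E j)ᴴ)).trace =
        ((p * (∑ j, (E j)ᴴ * E j)) * (σ * p)).trace := by
      rw [Finset.mul_sum, Finset.mul_sum, Finset.sum_mul, Matrix.trace_sum, Matrix.trace_sum]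
      refine Finset.sum_congr rfl fun j _ => ?_
      have e1 : p * (E j * (σ * p) * (E j)ᴴ) = (E j * (p * (σ * p))) * (E j)ᴴ := by
        simp only [← mul_assoc]
        rw [hcp _ (hE j)]
      have e2 : p * ((E j)ᴴ * E j) * (σ * p) = (E j)ᴴ * (E j * (p * (σ * p))) := by
        have := hcp _ (mul_mem (star_mem (hE j)) (hE j))
        rw [Matrix.star_eq_conjTranspose] at this
        rw [← this]
        simp only [mul_assoc]
      rw [e1, Matrix.trace_mul_comm, e2]
    rw [h2, hΨ, Matrix.smul_mul, Matrix.trace_smul, ← mul_assoc, ← hcp _ hσA, mul_assoc, hpi, hτ',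
      smul_eq_mul] at h
    exact_mod_cast h.symm
  obtain ⟨B, hB0, hB, hBB⟩ := exists_sqrt hσ.1
  have hBA : B ∈ A := by rw [hB0]; exact hA σ hσA hσ.1.1 _
  have haA : B * p ∈ A := mul_mem hBA hp.1.1
  have hcs := cs_psd (fun j => ((E j)ᴴ * (B * p)).trace) E hX
  rw [← hexp _ haA] at hcs
  have hah : (B * p)ᴴ = p * B := by rw [Matrix.conjTranspose_mul, hB.1.eq, hp.2.1.eq]
  have hα : ∑ j, ((E j)ᴴ * (B * p)).trace * star ((E j)ᴴ * (B * p)).trace = (τ : ℂ) := by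
    have h1 : ((B * p)ᴴ * (B * p)).trace = (τ : ℂ) := by
      rw [hah, ← hτ', Matrix.trace_mul_comm]
      congr 1
      rw [mul_assoc, ← mul_assoc p p, hpi, ← hcp _ hBA, ← mul_assoc, hBB]
    rw [← h1]
    conv_rhs => rw [congrArg (fun z => (B * p)ᴴ * z) (hexp _ haA)]
    rw [Finset.mul_sum, Matrix.trace_sum]
    refine Finset.sum_congr rfl fun j _ => ?_
    rw [Matrix.mul_smul, Matrix.trace_smul, smul_eq_mul]
    congr 1
    rw [← Matrix.trace_conjTranspose, Matrix.conjTranspose_mul, Matrix.conjTranspose_conjTranspose]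
  rw [hα, hah] at hcs
  have hq : B * p * (σ * p) * (p * B) = σ * σ * p := by
    calc B * p * (σ * p) * (p * B) = B * (p * σ) * ((p * p) * B) := by simp only [mul_assoc]
      _ = B * σ * (p * B) * p := by
        rw [hpi, ← hcp _ hσA, ← hcp _ hBA]
        simp only [mul_assoc]
        rw [← mul_assoc p B p, ← hcp _ hBA, mul_assoc]
      _ = B * (B * B) * (B * (p * p)) := by rw [← hcp _ hBA, hBB]; simp only [mul_assoc]
      _ = (B * B) * (B * B) * p := by rw [hpi]; simp only [mul_assoc]
      _ = _ := by rw [hBB]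
  rw [hq] at hcs
  have hcs2 := hcs.mul_mul_conjTranspose_same p
  rw [hp.2.1.eq] at hcs2
  have h3 : p * ((τ : ℂ) • ∑ j, E j * (σ * p) * (E j)ᴴ - σ * σ * p) * p =
      ((τ * φ : ℝ) : ℂ) • p - p * (σ * σ) := by
    rw [mul_sub, Matrix.mul_smul, hφ, sub_mul, smul_smul, Matrix.smul_mul, hpi,
      hcp _ (mul_mem hσA hσA), ← mul_assoc, hpi, mul_assoc, hcp _ (mul_mem hσA hσA), ← mul_assoc, hpi]
    push_cast; rfl
  rw [h3] at hcs2
  set c := Real.sqrt κ / r with hc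
  have hc0 : 0 < c := div_pos (Real.sqrt_pos.2 hκ0) htp
  have hc2 : c ^ 2 = κ / r ^ 2 := by rw [hc, div_pow, Real.sq_sqrt hκ0.le]
  have hle : τ * φ ≤ c ^ 2 := by
    have e1 : φ = κ / r ^ 2 * τ := by
      have : φ = Ψc * τ / r := by rw [← hφr]; field_simp
      rw [this, ← hΨr]; field_simp
    have : 0 ≤ κ / r ^ 2 := by positivity
    rw [hc2, e1]
    nlinarith [mul_nonneg hτ0 (sub_nonneg.2 hτ1), mul_le_one₀ hτ1 hτ0 hτ1]
  have h4 := psd_rsmul hpp (sub_nonneg.2 hle)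
  have h5 : (p * ((σ - ((c : ℝ) : ℂ) • 1) * (σ - ((c : ℝ) : ℂ) • 1))).PosSemidef := by
    have hh : (σ - ((c : ℝ) : ℂ) • (1 : Matrix m m ℂ)).IsHermitian := by
      rw [Matrix.IsHermitian, Matrix.conjTranspose_sub, hσ.1.1.eq, Matrix.conjTranspose_smul]
      simp
    have hs : (σ - ((c : ℝ) : ℂ) • (1 : Matrix m m ℂ)) ∈ A :=
      sub_mem hσA (A.smul_mem (one_mem A) _)
    refine commute_psd_mul hpp ?_ (hcp _ (mul_mem hs hs)).symm
    have := Matrix.posSemidef_conjTranspose_mul_self (σ - ((c : ℝ) : ℂ) • (1 : Matrix m m ℂ))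
    rwa [hh.eq] at this
  have h6 := psd_rsmul ((hcs2.add h4).add h5) (c := 1 / (2 * c)) (by positivity)
  convert h6 using 1
  have hcc : (c : ℂ) ≠ 0 := by exact_mod_cast hc0.ne'
  ext i j
  simp only [Matrix.sub_apply, Matrix.smul_apply, Matrix.add_apply, mul_sub, sub_mul, Matrix.mul_smul,
    Matrix.smul_mul, mul_one, one_mul, smul_eq_mul, Complex.real_smul]
  push_cast
  field_simp
  ring

theorem bmain (A : StarSubalgebra ℂ (Matrix m m ℂ)) (hA : FcClosed A)
    {T : Type*} [Fintype T] (L : Matrix m m ℂ →ₗ[ℂ] (T → ℂ))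
    (hL : ∀ z, IsCen A z → L z = 0 → z = 0) :
    ∃ (s : Finset (Matrix m m ℂ)) (c : Matrix m m ℂ → ℝ), CPFam A s ∧ (∀ p ∈ s, 0 < c p) ∧
      (∀ p ∈ s, ∀ σ ∈ A, IsDensity σ → (((c p : ℝ) : ℂ) • p - p * σ).PosSemidef) ∧
      ∑ p ∈ s, c p * p.trace.re ≤
        Real.sqrt (Fintype.card T * Module.finrank ℂ A.toSubalgebra.toSubmodule) := by
  obtain ⟨s, hs, hcard, hmin⟩ := exists_min_fam A hA L hL
  obtain ⟨E, hE, hon, hexp⟩ := exists_onb A.toSubalgebra.toSubmodule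
  have hE' : ∀ j, E j ∈ A := hE
  have hexp' : ∀ a ∈ A, a = ∑ j, ((E j)ᴴ * a).trace • E j := hexp
  have hpsd : ∀ p ∈ s, ((∑ j, (E j)ᴴ * E j) * p).PosSemidef := fun p hp =>
    commute_psd_mul (Matrix.posSemidef_sum _ fun j _ => Matrix.posSemidef_conjTranspose_mul_self _)
      (hs.1 p hp).psd (psi_comm A E hE' hexp' (hs.1 p hp).1.1).symm
  have hκ0 : ∀ p ∈ s, 0 < ((∑ j, (E j)ᴴ * E j) * p).trace.re := by
    intro p hp
    have h0 := (hpsd p hp).trace_nonneg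
    rcases lt_or_eq_of_le (Complex.le_def.1 h0).1 with h | h
    · simpa using h
    exfalso
    have h1 : ((∑ j, (E j)ᴴ * E j) * p).trace = 0 := by
      rw [herm_re h0, ← h]; simp
    have h2 : ∑ j, ((E j * p)ᴴ * (E j * p)).trace = 0 := by
      rw [← h1, Finset.sum_mul, Matrix.trace_sum]
      refine Finset.sum_congr rfl fun j _ => ?_
      rw [Matrix.conjTranspose_mul, (hs.1 p hp).2.1.eq, mul_assoc, Matrix.trace_mul_comm]
      rw [mul_assoc, mul_assoc, (hs.1 p hp).2.2.1, ← mul_assoc]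
    have h3 := (Finset.sum_eq_zero_iff_of_nonneg (fun j _ =>
      (Matrix.posSemidef_conjTranspose_mul_self (E j * p)).trace_nonneg)).1 h2
    have h4 : ∀ j, E j * p = 0 := fun j =>
      Matrix.trace_conjTranspose_mul_self_eq_zero_iff.1 (h3 j (Finset.mem_univ _))
    apply (hs.1 p hp).2.2.2
    rw [← one_mul p, hexp' 1 (one_mem A), Finset.sum_mul]
    exact Finset.sum_eq_zero fun j _ => by rw [Matrix.smul_mul, h4, smul_zero]
  refine ⟨s, fun p => Real.sqrt ((∑ j, (E j)ᴴ * E j) * p).trace.re / p.trace.re, hs,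
    fun p hp => div_pos (Real.sqrt_pos.2 (hκ0 p hp)) (hs.1 p hp).trace_pos, ?_, ?_⟩
  · intro p hp σ hσA hσ
    exact block_bound A hA E hE' hexp' (hs.1 p hp) (hmin p hp)
      (herm_re (hpsd p hp).trace_nonneg) (hκ0 p hp) hσA hσ
  · have e : ∀ p ∈ s, Real.sqrt ((∑ j, (E j)ᴴ * E j) * p).trace.re / p.trace.re * p.trace.re =
        Real.sqrt ((∑ j, (E j)ᴴ * E j) * p).trace.re := fun p hp =>
      div_mul_cancel₀ _ (hs.1 p hp).trace_pos.ne'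
    rw [Finset.sum_congr rfl e]
    have hsum : ∑ p ∈ s, ((∑ j, (E j)ᴴ * E j) * p).trace.re =
        Module.finrank ℂ A.toSubalgebra.toSubmodule := by
      rw [← Complex.re_sum, ← Matrix.trace_sum, ← Finset.mul_sum, hs.2.2, mul_one, Matrix.trace_sum]
      simp [hon]
    apply Real.le_sqrt_of_sq_le
    calc (∑ p ∈ s, Real.sqrt ((∑ j, (E j)ᴴ * E j) * p).trace.re) ^ 2
        ≤ s.card * ∑ p ∈ s, Real.sqrt ((∑ j, (E j)ᴴ * E j) * p).trace.re ^ 2 :=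
          sq_sum_le_card_mul_sum_sq
      _ = s.card * Module.finrank ℂ A.toSubalgebra.toSubmodule := by
          rw [← hsum]
          congr 1
          exact Finset.sum_congr rfl fun p hp => Real.sq_sqrt (hκ0 p hp).le
      _ ≤ _ := by
          gcongr

end bmain

section tens
open scoped Matrix
set_option linter.unusedSectionVars false
variable {k : Type*} [Fintype k] [DecidableEq k] {D : Type*} [Fintype D] [DecidableEq D]

lemma tensorFam_apply (A : k → Matrix D D ℂ) (i j : k → D) :
    tensorFam A i j = ∏ a, A a (i a) (j a) := rfl

lemma tensorFam_mul (A B : k → Matrix D D ℂ) :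
    tensorFam A * tensorFam B = tensorFam (fun a => A a * B a) := by
  ext i j
  simp only [Matrix.mul_apply, tensorFam_apply]
  rw [Finset.prod_univ_sum, Fintype.piFinset_univ]
  exact Finset.sum_congr rfl fun x _ => Finset.prod_mul_distrib.symm

lemma tensorFam_conjTranspose (A : k → Matrix D D ℂ) :
    (tensorFam A)ᴴ = tensorFam (fun a => (A a)ᴴ) := by
  ext i j
  simp [Matrix.conjTranspose_apply, tensorFam_apply]

lemma tensorFam_diagonal (a : k → D → ℂ) :
    tensorFam (fun b => Matrix.diagonal (a b)) = Matrix.diagonal (fun i => ∏ b, a b (i b)) := by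
  ext i j
  rw [tensorFam_apply]
  by_cases h : i = j
  · subst h; simp
  · rw [Matrix.diagonal_apply_ne _ h]
    obtain ⟨b, hb⟩ := Function.ne_iff.1 h
    exact Finset.prod_eq_zero (Finset.mem_univ b) (Matrix.diagonal_apply_ne _ hb)

lemma tensorFam_one : tensorFam (fun _ : k => (1 : Matrix D D ℂ)) = 1 := by
  have := tensorFam_diagonal (k := k) (D := D) (fun _ _ => 1)
  simpa using this

lemma tensorFam_trace (A : k → Matrix D D ℂ) : (tensorFam A).trace = ∏ a, (A a).trace := by
  simp only [Matrix.trace, Matrix.diag_apply, tensorFam_apply]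
  rw [Finset.prod_univ_sum, Fintype.piFinset_univ]

lemma tensorFam_unitary {U : k → Matrix D D ℂ} (hU : ∀ a, U a ∈ Matrix.unitaryGroup D ℂ) :
    tensorFam U ∈ Matrix.unitaryGroup (k → D) ℂ := by
  rw [Matrix.mem_unitaryGroup_iff, Matrix.star_eq_conjTranspose, tensorFam_conjTranspose,
    tensorFam_mul, ← tensorFam_one]
  congr 1
  funext a
  exact unit_right (hU a)

lemma tensorFam_specForm (U : k → Matrix D D ℂ) (a : k → D → ℝ) :
    tensorFam (fun b => specForm (U b) (a b)) = specForm (tensorFam U) (fun i => ∏ b, a b (i b)) := by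
  unfold specForm
  rw [Matrix.star_eq_conjTranspose, tensorFam_conjTranspose]
  have := tensorFam_diagonal (k := k) (D := D) (fun b i => (a b i : ℂ))
  push_cast
  rw [← this, tensorFam_mul, tensorFam_mul]
  rfl

lemma tensorFam_psd {A : k → Matrix D D ℂ} (hA : ∀ a, (A a).PosSemidef) :
    (tensorFam A).PosSemidef := by
  choose U hU a ha h using fun b => exists_specForm_nonneg (hA b)
  have : A = fun b => specForm (U b) (a b) := funext h
  rw [this, tensorFam_specForm]
  exact specForm_posSemidef _ fun i => Finset.prod_nonneg fun b _ => ha b _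

lemma tensorFam_density {A : k → Matrix D D ℂ} (hA : ∀ a, IsDensity (A a)) :
    IsDensity (tensorFam A) :=
  ⟨tensorFam_psd fun a => (hA a).1, by
    rw [tensorFam_trace]; exact Finset.prod_eq_one fun a _ => (hA a).2⟩

lemma tensorFam_sum {S : Type*} [Fintype S] (f : k → S → Matrix D D ℂ) :
    tensorFam (fun b => ∑ s, f b s) = ∑ s : k → S, tensorFam (fun b => f b (s b)) := by
  classical
  ext i j
  simp only [Matrix.sum_apply, tensorFam_apply]
  rw [Finset.prod_univ_sum, Fintype.piFinset_univ]

lemma tensorFam_smul (c : k → ℂ) (A : k → Matrix D D ℂ) :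
    tensorFam (fun b => c b • A b) = (∏ b, c b) • tensorFam A := by
  ext i j
  simp [tensorFam_apply, Finset.prod_mul_distrib]

lemma tensorFam_rsmul (c : k → ℝ) (A : k → Matrix D D ℂ) :
    tensorFam (fun b => c b • A b) = (∏ b, c b) • tensorFam A := by
  ext i j
  simp [tensorFam_apply, Finset.prod_mul_distrib]

lemma tensorFam_mono {A B : k → Matrix D D ℂ} (hA : ∀ a, (A a).PosSemidef)
    (hB : ∀ a, (B a - A a).PosSemidef) : (tensorFam B - tensorFam A).PosSemidef := by
  have h : tensorFam B = ∑ t ∈ (Finset.univ : Finset k).powerset,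
      tensorFam (fun b => if b ∈ t then A b else B b - A b) := by
    ext i j
    rw [Matrix.sum_apply]
    simp only [tensorFam_apply]
    have := Finset.prod_add (fun b => A b (i b) (j b)) (fun b => (B b - A b) (i b) (j b)) Finset.univ
    have e : ∏ b, (A b (i b) (j b) + (B b - A b) (i b) (j b)) = ∏ b, B b (i b) (j b) := by
      refine Finset.prod_congr rfl fun b _ => ?_
      simp
    rw [← e, this]
    refine Finset.sum_congr rfl fun t _ => ?_
    rw [← Finset.prod_mul_prod_compl t]
    congr 1
    · exact Finset.prod_congr rfl fun b hb => by simp [hb]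
    · rw [Finset.compl_eq_univ_sdiff]
      exact Finset.prod_congr rfl fun b hb => by simp [(Finset.mem_sdiff.1 hb).2]
  have hps : ∀ t : Finset k, (tensorFam (fun b => if b ∈ t then A b else B b - A b)).PosSemidef := by
    intro t
    apply tensorFam_psd
    intro b
    by_cases hb : b ∈ t
    · simp [hb, hA b]
    · simp [hb, hB b]
  rw [h, ← Finset.sum_erase_add _ _ (Finset.mem_powerset_self Finset.univ)]
  have : tensorFam (fun b => if b ∈ (Finset.univ : Finset k) then A b else B b - A b) = tensorFam A := by
    simp
  rw [this, add_sub_cancel_right]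
  exact Matrix.posSemidef_sum _ fun t _ => hps t

/-- power on the support -/
def supPow (p u : ℝ) : ℝ := if u ≤ 0 then 0 else u ^ p

lemma supPow_nonneg (p u : ℝ) : 0 ≤ supPow p u := by
  unfold supPow; split_ifs with h
  · exact le_rfl
  · exact Real.rpow_nonneg (not_le.1 h).le _

lemma supPow_prod {ι : Type*} (s : Finset ι) (p : ℝ) (u : ι → ℝ) (hu : ∀ i ∈ s, 0 ≤ u i) :
    supPow p (∏ i ∈ s, u i) = ∏ i ∈ s, supPow p (u i) := by
  by_cases h : ∃ i ∈ s, u i = 0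
  · obtain ⟨i, hi, h0⟩ := h
    rw [Finset.prod_eq_zero hi h0, Finset.prod_eq_zero hi (by simp [supPow, h0])]
    simp [supPow]
  · push Not at h
    have hp : ∀ i ∈ s, 0 < u i := fun i hi => lt_of_le_of_ne (hu i hi) (h i hi).symm
    have : ∀ i ∈ s, supPow p (u i) = u i ^ p := fun i hi => by simp [supPow, not_le.2 (hp i hi)]
    rw [Finset.prod_congr rfl this, Real.finsetProd_rpow _ _ hu]
    simp [supPow, not_le.2 (Finset.prod_pos hp)]

lemma mpow_specForm {U : Matrix D D ℂ} (hU : U ∈ Matrix.unitaryGroup D ℂ) (a : D → ℝ) (p : ℝ) :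
    mpow (specForm U a) p = specForm U (fun i => supPow p (a i)) := matFun_specForm hU a _

lemma mpow_psd {A : Matrix D D ℂ} (hA : A.PosSemidef) (p : ℝ) : (mpow A p).PosSemidef := by
  obtain ⟨U, hU, a, ha, rfl⟩ := exists_specForm_nonneg hA
  rw [mpow_specForm hU]
  exact specForm_posSemidef _ fun i => supPow_nonneg _ _

lemma mpow_tensorFam {A : k → Matrix D D ℂ} (hA : ∀ b, (A b).PosSemidef) (p : ℝ) :
    mpow (tensorFam A) p = tensorFam (fun b => mpow (A b) p) := by
  choose U hU a ha h using fun b => exists_specForm_nonneg (hA b)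
  have : A = fun b => specForm (U b) (a b) := funext h
  rw [this, tensorFam_specForm, mpow_specForm (tensorFam_unitary hU)]
  have e : (fun b => mpow (specForm (U b) (a b)) p) =
      fun b => specForm (U b) (fun i => supPow p (a b i)) := by
    funext b; rw [mpow_specForm (hU b)]
  rw [e, tensorFam_specForm]
  congr 1
  funext i
  exact supPow_prod _ _ _ fun b _ => ha b _

/-- permutation action on operators -/
def permM (π : Equiv.Perm k) (M : Matrix (k → D) (k → D) ℂ) : Matrix (k → D) (k → D) ℂ :=
  M.submatrix (fun i => i ∘ π) (fun i => i ∘ π)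

/-- the reindexing equivalence -/
def permE (π : Equiv.Perm k) : (k → D) ≃ (k → D) where
  toFun i := i ∘ π
  invFun i := i ∘ π.symm
  left_inv i := by funext b; simp
  right_inv i := by funext b; simp

lemma permM_eq (π : Equiv.Perm k) (M : Matrix (k → D) (k → D) ℂ) :
    permM π M = M.submatrix (permE π) (permE π) := rfl

lemma permM_mul (π : Equiv.Perm k) (M N : Matrix (k → D) (k → D) ℂ) :
    permM π (M * N) = permM π M * permM π N := by
  simp only [permM_eq, Matrix.submatrix_mul_equiv]

lemma permM_one (π : Equiv.Perm k) : permM π (1 : Matrix (k → D) (k → D) ℂ) = 1 := by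
  simp only [permM_eq, Matrix.submatrix_one_equiv]

lemma permM_add (π : Equiv.Perm k) (M N : Matrix (k → D) (k → D) ℂ) :
    permM π (M + N) = permM π M + permM π N := rfl

lemma permM_sub (π : Equiv.Perm k) (M N : Matrix (k → D) (k → D) ℂ) :
    permM π (M - N) = permM π M - permM π N := rfl

lemma permM_smul (π : Equiv.Perm k) (c : ℂ) (M : Matrix (k → D) (k → D) ℂ) :
    permM π (c • M) = c • permM π M := rfl

lemma permM_rsmul (π : Equiv.Perm k) (c : ℝ) (M : Matrix (k → D) (k → D) ℂ) :
    permM π (c • M) = c • permM π M := rfl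

lemma permM_sum {ι : Type*} (s : Finset ι) (π : Equiv.Perm k) (M : ι → Matrix (k → D) (k → D) ℂ) :
    permM π (∑ i ∈ s, M i) = ∑ i ∈ s, permM π (M i) := by
  ext i j
  simp [permM, Matrix.sum_apply]

lemma permM_conjTranspose (π : Equiv.Perm k) (M : Matrix (k → D) (k → D) ℂ) :
    permM π Mᴴ = (permM π M)ᴴ := rfl

lemma permM_trace (π : Equiv.Perm k) (M : Matrix (k → D) (k → D) ℂ) :
    (permM π M).trace = M.trace := by
  rw [permM_eq, Matrix.trace, Matrix.trace]
  exact Equiv.sum_comp (permE π) (fun i => M i i)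

lemma permM_psd (π : Equiv.Perm k) {M : Matrix (k → D) (k → D) ℂ} (h : M.PosSemidef) :
    (permM π M).PosSemidef := h.submatrix _

lemma permM_permM (π π' : Equiv.Perm k) (M : Matrix (k → D) (k → D) ℂ) :
    permM π (permM π' M) = permM (π * π') M := rfl

lemma permM_one_perm (M : Matrix (k → D) (k → D) ℂ) : permM (1 : Equiv.Perm k) M = M := rfl

lemma permM_tensorFam (π : Equiv.Perm k) (A : k → Matrix D D ℂ) :
    permM π (tensorFam A) = tensorFam (fun b => A (π.symm b)) := by
  ext i j
  simp only [permM, Matrix.submatrix_apply, tensorFam_apply, Function.comp]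
  rw [← Equiv.prod_comp π.symm]
  simp

lemma specForm_submatrix (π : Equiv.Perm k) (U : Matrix (k → D) (k → D) ℂ) (a : (k → D) → ℝ) :
    permM π (specForm U a) = specForm (permM π U) (fun i => a (permE π i)) := by
  unfold specForm
  rw [permM_mul, permM_mul, Matrix.star_eq_conjTranspose, permM_conjTranspose]
  congr 2
  rw [permM_eq, Matrix.submatrix_diagonal_equiv]
  rfl

lemma permM_unitary (π : Equiv.Perm k) {U : Matrix (k → D) (k → D) ℂ}
    (hU : U ∈ Matrix.unitaryGroup (k → D) ℂ) : permM π U ∈ Matrix.unitaryGroup (k → D) ℂ := by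
  rw [Matrix.mem_unitaryGroup_iff, Matrix.star_eq_conjTranspose, ← permM_conjTranspose, ← permM_mul]
  rw [← Matrix.star_eq_conjTranspose, unit_right hU, permM_one]

lemma permM_matFun (π : Equiv.Perm k) {M : Matrix (k → D) (k → D) ℂ} (hM : M.IsHermitian)
    (f : ℝ → ℝ) : permM π (matFun f M) = matFun f (permM π M) := by
  obtain ⟨U, hU, h1, h2⟩ := exists_specForm hM
  rw [h2]
  conv_rhs => rw [h1]
  rw [specForm_submatrix, specForm_submatrix, matFun_specForm (permM_unitary π hU)]

/-- the algebra of operators invariant under the permutations fixing a label sequence -/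
def invAlg {W : Type*} (D : Type*) [Fintype D] [DecidableEq D] (w : k → W) :
    StarSubalgebra ℂ (Matrix (k → D) (k → D) ℂ) where
  carrier := {M | ∀ π : Equiv.Perm k, w ∘ π = w → permM π M = M}
  mul_mem' := fun {a b} ha hb π hπ => by rw [permM_mul, ha π hπ, hb π hπ]
  add_mem' := fun {a b} ha hb π hπ => by rw [permM_add, ha π hπ, hb π hπ]
  algebraMap_mem' := fun r π hπ => by
    rw [Algebra.algebraMap_eq_smul_one, permM_smul, permM_one]
  star_mem' := fun {a} ha π hπ => by
    rw [Matrix.star_eq_conjTranspose, permM_conjTranspose, ha π hπ]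

lemma mem_invAlg {W : Type*} {w : k → W} {M : Matrix (k → D) (k → D) ℂ} :
    M ∈ invAlg D w ↔ ∀ π : Equiv.Perm k, w ∘ π = w → permM π M = M := Iff.rfl

lemma invAlg_fc {W : Type*} (w : k → W) : FcClosed (invAlg D w) := by
  intro a ha hh f π hπ
  rw [permM_matFun π hh, ha π hπ]

lemma invAlg_comp {W V : Type*} (w : k → W) (q : W → V) {M : Matrix (k → D) (k → D) ℂ}
    (hM : M ∈ invAlg D (q ∘ w)) : M ∈ invAlg D w := by
  intro π hπ
  exact hM π (by rw [Function.comp_assoc, hπ])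

lemma tensorFam_mem {W : Type*} (w : k → W) (A : W → Matrix D D ℂ) :
    tensorFam (fun b => A (w b)) ∈ invAlg D w := by
  intro π hπ
  rw [permM_tensorFam]
  congr 1
  funext b
  have := congrFun hπ (π.symm b)
  simp at this
  rw [this]

/-- operator permuting the tensor factors -/
def permOp (D : Type*) [Fintype D] [DecidableEq D] (g : Equiv.Perm k) : Matrix (k → D) (k → D) ℂ :=
  Matrix.of fun i j => if i = j ∘ g then 1 else 0

end tens

section dims
open scoped Matrix
set_option linter.unusedSectionVars false
variable {k : Type*} [Fintype k] [DecidableEq k] {D : Type*} [Fintype D] [DecidableEq D]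

lemma exists_perm_of_map_eq {α β : Type*} [Fintype α] {f g : α → β}
    (h : (Finset.univ : Finset α).val.map f = Finset.univ.val.map g) :
    ∃ σ : Equiv.Perm α, f = g ∘ σ := by
  classical
  have hc : ∀ b, Nonempty ({x // f x = b} ≃ {x // g x = b}) := by
    intro b
    rw [← Fintype.card_eq, Fintype.card_subtype, Fintype.card_subtype]
    have := congrArg (Multiset.count b) h
    rw [Multiset.count_map, Multiset.count_map] at this
    simpa [Finset.card_def, eq_comm] using this
  refine ⟨((Equiv.sigmaFiberEquiv f).symm.trans (Equiv.sigmaCongrRight fun b => Classical.choice (hc b))).trans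
    (Equiv.sigmaFiberEquiv g), ?_⟩
  funext x
  have := ((Classical.choice (hc (f x))) ⟨x, rfl⟩).2
  exact this.symm

/-- every multiset of card d is the value multiset of a function on D -/
lemma exists_fun_of_multiset {β : Type*} (d : ℕ) (s : Multiset β) (h : s.card = d) :
    ∃ f : Fin d → β, (Finset.univ : Finset (Fin d)).val.map f = s := by
  subst h
  induction s using Quot.inductionOn with
  | h l =>
    refine ⟨fun i => l.get i, ?_⟩
    have : (Finset.univ : Finset (Fin l.length)).val = (List.finRange l.length : Multiset _) := rfl
    change Multiset.map (fun i => l.get i) (Finset.univ : Finset (Fin l.length)).val = (l : Multiset β)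
    rw [this, Multiset.map_coe]
    congr 1
    simp

/-- partitions with at most d parts -/
abbrev PartLe (n d : ℕ) : Type := {p : Nat.Partition n // p.parts.card ≤ d}

lemma PartLe_card (n d : ℕ) : Fintype.card (PartLe n d) = numPartLe n d := by
  rw [numPartLe, Nat.card_eq_fintype_card]

lemma filter_inj {t t' : Multiset ℕ} (hc : t.card = t'.card)
    (hf : t.filter (· ≠ 0) = t'.filter (· ≠ 0)) : t = t' := by
  have h1 := Multiset.filter_add_not (· ≠ 0) t
  have h2 := Multiset.filter_add_not (· ≠ 0) t'
  have e : ∀ u : Multiset ℕ, u.filter (fun a => ¬ a ≠ 0) = Multiset.replicate (u.filter (fun a => ¬ a ≠ 0)).card 0 := by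
    intro u
    rw [Multiset.eq_replicate]
    refine ⟨rfl, fun b hb => ?_⟩
    simpa using (Multiset.mem_filter.1 hb).2
  have c1 := congrArg Multiset.card h1
  have c2 := congrArg Multiset.card h2
  rw [Multiset.card_add] at c1 c2
  rw [← h1, ← h2, hf]
  congr 1
  rw [e t, e t']
  congr 1
  rw [hf] at c1
  omega

/-- pad the largest part -/
def padTop (c : ℕ) (s : Multiset ℕ) : Multiset ℕ := (s.sup + c) ::ₘ s.erase s.sup

lemma sup_mem {s : Multiset ℕ} (h : s ≠ 0) : s.sup ∈ s := by
  induction s using Multiset.induction_on with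
  | empty => exact absurd rfl h
  | cons a s ih =>
    rw [Multiset.sup_cons]
    by_cases hs : s = 0
    · subst hs; simp
    · rcases le_total a s.sup with h' | h'
      · rw [sup_eq_right.2 h']; exact Multiset.mem_cons_of_mem (ih hs)
      · rw [sup_eq_left.2 h']; exact Multiset.mem_cons_self _ _

lemma padTop_card {c : ℕ} {s : Multiset ℕ} (h : s ≠ 0) : (padTop c s).card = s.card := by
  rw [padTop, Multiset.card_cons, Multiset.card_erase_add_one (sup_mem h)]

lemma padTop_sum {c : ℕ} {s : Multiset ℕ} (h : s ≠ 0) : (padTop c s).sum = s.sum + c := by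
  have := congrArg Multiset.sum (Multiset.cons_erase (sup_mem h))
  rw [Multiset.sum_cons] at this
  rw [padTop, Multiset.sum_cons]
  omega

lemma padTop_inj {c : ℕ} {s s' : Multiset ℕ} (h : s ≠ 0) (h' : s' ≠ 0)
    (he : padTop c s = padTop c s') : s = s' := by
  have key : ∀ s : Multiset ℕ, s ≠ 0 → (padTop c s).sup = s.sup + c := by
    intro s hs
    rw [padTop, Multiset.sup_cons]
    apply sup_eq_left.2
    have : (s.erase s.sup).sup ≤ s.sup := Multiset.sup_mono (Multiset.erase_subset _ _)
    omega
  have h1 : s.sup = s'.sup := by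
    have := key s h
    rw [he, key s' h'] at this
    omega
  have h2 : s.erase s.sup = s'.erase s'.sup := by
    unfold padTop at he
    rw [h1] at he ⊢
    exact (Multiset.cons_inj_right _).1 he
  rw [← Multiset.cons_erase (sup_mem h), h2, h1, Multiset.cons_erase (sup_mem h')]

lemma numPartLe_le (n d : ℕ) (hd : 1 ≤ d) : numPartLe n d ≤ (n + 1) ^ (d - 1) := by
  obtain ⟨e, rfl⟩ : ∃ e, d = e + 1 := ⟨d - 1, by omega⟩
  rw [← PartLe_card]
  have hex : ∀ p : PartLe n (e + 1), ∃ f : Fin (e + 1) → ℕ,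
      (Finset.univ : Finset (Fin (e + 1))).val.map f =
        p.1.parts + Multiset.replicate (e + 1 - p.1.parts.card) 0 := by
    intro p
    apply exists_fun_of_multiset
    have := p.2
    simp; omega
  choose f hf using hex
  have hsum : ∀ p, ∑ i, f p i = n := by
    intro p
    have := congrArg Multiset.sum (hf p)
    rw [Multiset.sum_add, p.1.parts_sum] at this
    simpa [Finset.sum] using this
  have hle : ∀ p i, f p i < n + 1 := by
    intro p i
    have := Finset.single_le_sum (f := f p) (fun i _ => Nat.zero_le _) (Finset.mem_univ i)
    rw [hsum] at this; omega
  have hinj : Function.Injective (fun p : PartLe n (e + 1) =>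
      fun i : Fin e => (⟨f p i.succ, hle p _⟩ : Fin (n + 1))) := by
    intro p q hpq
    have h1 : ∀ i : Fin e, f p i.succ = f q i.succ := fun i => by
      have := congrFun hpq i
      simpa using this
    have h0 : f p 0 = f q 0 := by
      have a := hsum p
      have b := hsum q
      rw [Fin.sum_univ_succ] at a b
      rw [Finset.sum_congr rfl (fun i _ => h1 i)] at a
      omega
    have hfeq : f p = f q := by
      funext i
      refine Fin.cases h0 h1 i
    have h2 := hf p
    rw [hfeq, hf q] at h2
    have h3 := congrArg (Multiset.filter (· ≠ 0)) h2
    have e0 : ∀ r : PartLe n (e + 1), (r.1.parts + Multiset.replicate (e + 1 - r.1.parts.card) 0).filter (· ≠ 0)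
        = r.1.parts := by
      intro r
      rw [Multiset.filter_add]
      have h1 : r.1.parts.filter (· ≠ 0) = r.1.parts := by
        rw [Multiset.filter_eq_self]
        intro a ha
        exact (r.1.parts_pos ha).ne'
      have h2 : (Multiset.replicate (e + 1 - r.1.parts.card) 0).filter (· ≠ 0) = 0 := by
        rw [Multiset.filter_eq_nil]
        intro a ha
        simp [Multiset.eq_of_mem_replicate ha]
      rw [h1, h2, add_zero]
    rw [e0, e0] at h3
    exact Subtype.ext (Nat.Partition.ext h3.symm)
  have := Fintype.card_le_of_injective _ hinj
  simpa using this

variable {W : Type*} [Fintype W] [DecidableEq W]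

/-- orbit lemma -/
lemma inv_entry {w : k → W} {M : Matrix (k → D) (k → D) ℂ} (hM : M ∈ invAlg D w)
    {i j i' j' : k → D}
    (h : (Finset.univ : Finset k).val.map (fun b => (w b, i b, j b)) =
      Finset.univ.val.map (fun b => (w b, i' b, j' b))) : M i j = M i' j' := by
  obtain ⟨σ, hσ⟩ := exists_perm_of_map_eq h
  have h1 : w ∘ σ = w := by funext b; exact (congrArg Prod.fst (congrFun hσ b)).symm
  have h2 : i = i' ∘ σ := by funext b; exact (congrArg (fun z => z.2.1) (congrFun hσ b))
  have h3 : j = j' ∘ σ := by funext b; exact (congrArg (fun z => z.2.2) (congrFun hσ b))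
  have := congrFun (congrFun (hM σ h1) i') j'
  rw [h2, h3]
  exact this

/-- the orbit key -/
lemma finrank_invAlg [Nonempty D] (n : ℕ) (hk : Fintype.card k = n) (w : k → W) :
    Module.finrank ℂ (invAlg D w).toSubalgebra.toSubmodule ≤
      ((Fintype.card D * Fintype.card D + n - 1).choose n) ^ Fintype.card W := by
  classical
  let d0 : D × D := (Classical.arbitrary D, Classical.arbitrary D)
  let fib : W → (k → D) → (k → D) → Multiset (D × D) := fun a i j =>
    ((Finset.univ.filter (fun b => w b = a)).val.map (fun b => (i b, j b)))
  have hfc : ∀ a i j, (fib a i j).card = (Finset.univ.filter (fun b => w b = a)).card := by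
    intro a i j; simp only [fib]; rw [Multiset.card_map, Finset.card_def]
  have hle : ∀ a, (Finset.univ.filter (fun b => w b = a)).card ≤ n := by
    intro a; rw [← hk]; exact Finset.card_le_univ _
  let key : (k → D) → (k → D) → (W → Sym (D × D) n) := fun i j a =>
    ⟨fib a i j + Multiset.replicate (n - (Finset.univ.filter (fun b => w b = a)).card) d0, by
      rw [Multiset.card_add, hfc, Multiset.card_replicate]
      have := hle a; omega⟩
  have hkey : ∀ M ∈ invAlg D w, ∀ i j i' j', key i j = key i' j' → M i j = M i' j' := by
    intro M hM i j i' j' h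
    apply inv_entry hM
    have h1 : ∀ a, fib a i j = fib a i' j' := by
      intro a
      have := congrArg Subtype.val (congrFun h a)
      exact add_right_cancel this
    ext ⟨a, b, c⟩
    have := congrArg (Multiset.count (b, c)) (h1 a)
    simp only [fib] at this
    rw [Multiset.count_map, Multiset.count_map] at this ⊢
    rw [← Finset.filter_val, ← Finset.filter_val, ← Finset.card_def, ← Finset.card_def,
      Finset.filter_filter, Finset.filter_filter] at this
    rw [← Finset.filter_val, ← Finset.filter_val, ← Finset.card_def, ← Finset.card_def]
    convert this using 3 <;>
    · simp only [Prod.mk.injEq]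
      constructor
      · rintro ⟨h1, h2⟩; exact ⟨h1.symm, h2⟩
      · rintro ⟨h1, h2⟩; exact ⟨h1.symm, h2⟩
  let rep : (W → Sym (D × D) n) → ((k → D) × (k → D)) := fun τ =>
    if h : ∃ ij : (k → D) × (k → D), key ij.1 ij.2 = τ then h.choose else
      (fun _ => d0.1, fun _ => d0.1)
  have hrep : ∀ i j, key (rep (key i j)).1 (rep (key i j)).2 = key i j := by
    intro i j
    have h : ∃ ij : (k → D) × (k → D), key ij.1 ij.2 = key i j := ⟨(i, j), rfl⟩
    simp only [rep]
    rw [dif_pos h]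
    exact h.choose_spec
  let Lm : (invAlg D w).toSubalgebra.toSubmodule →ₗ[ℂ] ((W → Sym (D × D) n) → ℂ) :=
    { toFun := fun M τ => M.1 (rep τ).1 (rep τ).2
      map_add' := fun _ _ => rfl
      map_smul' := fun _ _ => rfl }
  have hinj : Function.Injective Lm := by
    intro M N h
    apply Subtype.ext
    ext i j
    have := congrFun h (key i j)
    have h1 := hkey M.1 M.2 _ _ _ _ (hrep i j)
    have h2 := hkey N.1 N.2 _ _ _ _ (hrep i j)
    rw [← h1, ← h2]
    exact this
  have := LinearMap.finrank_le_finrank_of_injective hinj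
  rw [Module.finrank_fintype_fun_eq_card, Fintype.card_fun, Sym.card_sym_eq_choose, Fintype.card_prod] at this
  exact this

end dims

section cen
open scoped Matrix
set_option linter.unusedSectionVars false
variable {k : Type*} [Fintype k] [DecidableEq k] {D : Type*} [Fintype D] [DecidableEq D]
variable {W : Type*} [Fintype W] [DecidableEq W]

lemma cen_unitary {w : k → W} {z : Matrix (k → D) (k → D) ℂ} (hz : IsCen (invAlg D w) z)
    {u : W → Matrix D D ℂ} (hu : ∀ a, u a ∈ Matrix.unitaryGroup D ℂ) :
    star (tensorFam fun b => u (w b)) * z * (tensorFam fun b => u (w b)) = z := by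
  have h := hz.2 _ (tensorFam_mem w u)
  rw [mul_assoc, ← h, ← mul_assoc, unit_left (tensorFam_unitary fun b => hu (w b)), one_mul]

lemma cen_herm {w : k → W} {z : Matrix (k → D) (k → D) ℂ} (hz : IsCen (invAlg D w) z)
    (h0 : ∀ i, z i i = 0) {h : W → Matrix D D ℂ} (hh : ∀ a, (h a).IsHermitian) :
    ((tensorFam fun b => h (w b)) * z).trace = 0 := by
  choose u hu h1 h2 using fun a => exists_specForm (hh a)
  have : (fun b => h (w b)) = fun b => specForm (u (w b)) ((hh (w b)).eigenvalues) := by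
    funext b; exact h1 (w b)
  rw [this, tensorFam_specForm (fun b => u (w b)), trace_specForm_mul, cen_unitary hz hu]
  simp [h0]

lemma cen_polar {w : k → W} {z : Matrix (k → D) (k → D) ℂ} (hz : IsCen (invAlg D w) z)
    (h0 : ∀ i, z i i = 0) {h : k → Matrix D D ℂ} (hh : ∀ a, (h a).IsHermitian) :
    (tensorFam h * z).trace = 0 := by
  classical
  -- the label dependent sums
  let H : Finset k → W → Matrix D D ℂ := fun R a => ∑ c, if c ∉ R ∧ w c = a then h c else 0
  have hH : ∀ R a, (H R a).IsHermitian := by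
    intro R a
    unfold Matrix.IsHermitian
    simp only [H]
    rw [Matrix.conjTranspose_sum]
    refine Finset.sum_congr rfl fun c _ => ?_
    split_ifs
    · exact hh c
    · simp
  have hexp : ∀ R, (tensorFam fun b => H R (w b)) =
      ∑ f : k → k, (if (∀ b, f b ∉ R) ∧ w ∘ f = w then (1 : ℂ) else 0) • tensorFam (fun b => h (f b)) := by
    intro R
    simp only [H]
    rw [tensorFam_sum (fun b c => if c ∉ R ∧ w c = w b then h c else 0)]
    refine Finset.sum_congr rfl fun f _ => ?_
    by_cases hf : (∀ b, f b ∉ R) ∧ w ∘ f = w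
    · rw [if_pos hf, one_smul]
      congr 1
      funext b
      rw [if_pos ⟨hf.1 b, congrFun hf.2 b⟩]
    · rw [if_neg hf, zero_smul]
      ext i j
      rw [tensorFam_apply, Matrix.zero_apply]
      have : ∃ b, ¬ (f b ∉ R ∧ w (f b) = w b) := by
        by_contra hcon
        push Not at hcon
        exact hf ⟨fun b => (hcon b).1, funext fun b => (hcon b).2⟩
      obtain ⟨b, hb⟩ := this
      refine Finset.prod_eq_zero (Finset.mem_univ b) ?_
      rw [if_neg hb]; rfl
  have hzero : ∑ R : Finset k, ((-1 : ℤ) ^ R.card : ℂ) * ((tensorFam fun b => H R (w b)) * z).trace = 0 :=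
    Finset.sum_eq_zero fun R _ => by rw [cen_herm hz h0 (hH R), mul_zero]
  have hswap : ∑ R : Finset k, ((-1 : ℤ) ^ R.card : ℂ) * ((tensorFam fun b => H R (w b)) * z).trace =
      ∑ f : k → k, (if w ∘ f = w ∧ Function.Surjective f then (1 : ℂ) else 0) *
        (tensorFam (fun b => h (f b)) * z).trace := by
    simp only [hexp, Finset.sum_mul, Matrix.trace_sum, Finset.mul_sum]
    rw [Finset.sum_comm]
    refine Finset.sum_congr rfl fun f _ => ?_
    simp only [Matrix.smul_mul, Matrix.trace_smul, smul_eq_mul, ← mul_assoc]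
    rw [← Finset.sum_mul]
    congr 1
    by_cases hwf : w ∘ f = w
    · have e : ∀ R : Finset k, ((-1 : ℤ) ^ R.card : ℂ) * (if (∀ b, f b ∉ R) ∧ w ∘ f = w then (1 : ℂ) else 0)
          = if R ∈ (Finset.univ.filter (fun c => ∀ b, f b ≠ c)).powerset then ((-1 : ℤ) ^ R.card : ℂ) else 0 := by
        intro R
        have : (∀ b, f b ∉ R) ∧ w ∘ f = w ↔ R ∈ (Finset.univ.filter (fun c => ∀ b, f b ≠ c)).powerset := by
          rw [Finset.mem_powerset]
          constructor
          · rintro ⟨h1, -⟩ c hc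
            rw [Finset.mem_filter]
            exact ⟨Finset.mem_univ _, fun b hb => h1 b (hb ▸ hc)⟩
          · intro h1
            exact ⟨fun b hb => (Finset.mem_filter.1 (h1 hb)).2 b rfl, hwf⟩
        by_cases h : (∀ b, f b ∉ R) ∧ w ∘ f = w
        · rw [if_pos h, if_pos (this.1 h), mul_one]
        · rw [if_neg h, if_neg (fun h' => h (this.2 h')), mul_zero]
      rw [Finset.sum_congr rfl fun R _ => e R, ← Finset.sum_filter, Finset.filter_mem_eq_inter,
        Finset.univ_inter]
      have := Finset.sum_powerset_neg_one_pow_card (x := Finset.univ.filter (fun c => ∀ b, f b ≠ c))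
      have h2 := congrArg (fun z : ℤ => (z : ℂ)) this
      push_cast at h2 ⊢
      rw [h2]
      have : (Finset.univ.filter (fun c => ∀ b, f b ≠ c)) = ∅ ↔ Function.Surjective f := by
        rw [Finset.filter_eq_empty_iff]
        constructor
        · intro h c
          have := h (Finset.mem_univ c)
          push Not at this
          exact this
        · intro h c _
          push Not
          exact h c
      simp [hwf, this]
    · simp [hwf]
  rw [hswap] at hzero
  have hterm : ∀ f : k → k, (if w ∘ f = w ∧ Function.Surjective f then (1 : ℂ) else 0) *
        (tensorFam (fun b => h (f b)) * z).trace =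
      (if w ∘ f = w ∧ Function.Surjective f then (1 : ℂ) else 0) * (tensorFam h * z).trace := by
    intro f
    split_ifs with hf
    · have hb : Function.Bijective f := Finite.injective_iff_bijective.1
        (Finite.injective_iff_surjective.2 hf.2)
      let π := Equiv.ofBijective f hb
      have h1 : tensorFam (fun b => h (f b)) = permM π.symm (tensorFam h) := by
        rw [permM_tensorFam]; rfl
      have h2 : permM π.symm z = z := by
        apply hz.1
        funext b
        have := congrFun hf.1 (π.symm b)
        simp only [Function.comp] at this ⊢
        rw [← this]
        congr 1
        exact π.apply_symm_apply b
      rw [h1]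
      conv_lhs => rw [← h2]
      rw [← permM_mul, permM_trace]
    · simp
  rw [Finset.sum_congr rfl fun f _ => hterm f, ← Finset.sum_mul] at hzero
  refine (mul_eq_zero.1 hzero).resolve_left ?_
  rw [Finset.sum_ite, Finset.sum_const, Finset.sum_const_zero, add_zero, nsmul_eq_mul, mul_one]
  have : 0 < (Finset.univ.filter (fun f : k → k => w ∘ f = w ∧ Function.Surjective f)).card := by
    rw [Finset.card_pos]
    exact ⟨id, by simp [Function.surjective_id]⟩
  exact_mod_cast this.ne'

lemma cen_zero {w : k → W} {z : Matrix (k → D) (k → D) ℂ} (hz : IsCen (invAlg D w) z)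
    (h0 : ∀ i, z i i = 0) : z = 0 := by
  have gen : ∀ M : k → Matrix D D ℂ, (tensorFam M * z).trace = 0 := by
    intro M
    let c : Bool → ℂ := fun s => if s then 1 else Complex.I
    let P : k → Bool → Matrix D D ℂ := fun b s =>
      if s then (1 / 2 : ℂ) • (M b + (M b)ᴴ) else (-Complex.I / 2) • (M b - (M b)ᴴ)
    have hP : ∀ b s, (P b s).IsHermitian := by
      intro b s
      unfold Matrix.IsHermitian
      cases s
      · simp only [P, Bool.false_eq_true, if_false]
        rw [Matrix.conjTranspose_smul, Matrix.conjTranspose_sub, Matrix.conjTranspose_conjTranspose]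
        ext i j
        simp
        ring
      · simp only [P, if_true]
        rw [Matrix.conjTranspose_smul, Matrix.conjTranspose_add, Matrix.conjTranspose_conjTranspose, add_comm]
        simp
    have hM : M = fun b => ∑ s, c s • P b s := by
      funext b
      rw [Fintype.sum_bool]
      simp only [c, P, if_true, Bool.false_eq_true, if_false]
      rw [smul_smul]
      ext i j
      simp only [Matrix.add_apply, Matrix.smul_apply, Matrix.sub_apply, smul_eq_mul]
      have hI : Complex.I * (-Complex.I / 2) = 1 / 2 := by
        rw [mul_div_assoc', mul_neg, Complex.I_mul_I]; simp
      linear_combination (-(M b i j - (M b)ᴴ i j)) * hI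
    rw [hM, tensorFam_sum (fun b s => c s • P b s), Finset.sum_mul, Matrix.trace_sum]
    refine Finset.sum_eq_zero fun s _ => ?_
    rw [tensorFam_smul (fun b => c (s b)) (fun b => P b (s b)), Matrix.smul_mul, Matrix.trace_smul,
      cen_polar hz h0 (fun b => hP b (s b)), smul_zero]
  ext i j
  have h1 := gen (fun b => Matrix.single (j b) (i b) 1)
  have h2 : tensorFam (fun b => Matrix.single (j b) (i b) (1 : ℂ)) = Matrix.single j i 1 := by
    ext x y
    rw [tensorFam_apply, Matrix.single_apply]
    simp only [Matrix.single_apply]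
    rw [Finset.prod_ite_zero]
    simp only [Finset.prod_const_one]
    congr 1
    simp [funext_iff, forall_and]
  rw [h2, Matrix.trace_single_mul] at h1
  simpa using h1

lemma exists_cenL [Nonempty D] (n : ℕ) (hk : Fintype.card k = n) (w : k → W) :
    ∃ L : Matrix (k → D) (k → D) ℂ →ₗ[ℂ] ((W → PartLe n (Fintype.card D)) → ℂ),
      ∀ z, IsCen (invAlg D w) z → L z = 0 → z = 0 := by
  classical
  let cnt : (k → D) → W → D → ℕ := fun i a c => (Finset.univ.filter (fun b => w b = a ∧ i b = c)).card
  let fib : W → ℕ := fun a => (Finset.univ.filter (fun b => w b = a)).card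
  have hle : ∀ a, fib a ≤ n := by
    intro a; rw [← hk]; exact Finset.card_le_univ _
  let ms : (k → D) → W → Multiset ℕ := fun i a => (Finset.univ : Finset D).val.map (cnt i a)
  have hms0 : ∀ i a, ms i a ≠ 0 := by
    intro i a h
    have := congrArg Multiset.card h
    simp [ms] at this
  have hmsum : ∀ i a, (ms i a).sum = fib a := by
    intro i a
    change ∑ c, cnt i a c = fib a
    simp only [cnt, fib]
    rw [Finset.card_eq_sum_card_fiberwise (f := i) (t := Finset.univ) (fun _ _ => Finset.mem_coe.2 (Finset.mem_univ _))]
    simp only [Finset.filter_filter]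
  let key : (k → D) → (W → PartLe n (Fintype.card D)) := fun i a =>
    ⟨Nat.Partition.ofSums n (padTop (n - fib a) (ms i a)) (by
      rw [padTop_sum (hms0 i a), hmsum]; have := hle a; omega), by
      refine (Multiset.card_le_card (Multiset.filter_le _ _)).trans ?_
      rw [padTop_card (hms0 i a)]
      simp [ms]⟩
  have hkey : ∀ z, IsCen (invAlg D w) z → ∀ i j, key i = key j → z i i = z j j := by
    intro z hz i j hij
    have h1 : ∀ a, ms i a = ms j a := by
      intro a
      have e1 := congrArg (fun p => p.1.parts) (congrFun hij a)
      have e2 : padTop (n - fib a) (ms i a) = padTop (n - fib a) (ms j a) := by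
        apply filter_inj _ e1
        rw [padTop_card (hms0 i a), padTop_card (hms0 j a)]
        simp [ms]
      exact padTop_inj (hms0 i a) (hms0 j a) e2
    choose u hu using fun a => exists_perm_of_map_eq (h1 a)
    -- cnt i a = cnt j a ∘ u a
    have h2 : z i i = z (fun b => u (w b) (i b)) (fun b => u (w b) (i b)) := by
      have hc := hz.2 _ (tensorFam_mem w (fun a => (Matrix.of fun x y => if x = u a y then (1 : ℂ) else 0)))
      have ent := congrFun (congrFun hc (fun b => u (w b) (i b))) i
      rw [Matrix.mul_apply, Matrix.mul_apply] at ent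
      simp only [tensorFam_apply, Matrix.of_apply] at ent
      rw [Finset.sum_eq_single i, Finset.sum_eq_single (fun b => u (w b) (i b))] at ent
      · simpa using ent
      · intro x _ hx
        obtain ⟨b, hb⟩ := Function.ne_iff.1 hx
        rw [Finset.prod_eq_zero (Finset.mem_univ b) (if_neg hb), mul_zero]
      · simp
      · intro x _ hx
        obtain ⟨b, hb⟩ := Function.ne_iff.1 hx
        rw [Finset.prod_eq_zero (Finset.mem_univ b), zero_mul]
        rw [if_neg]
        intro h
        exact hb ((u (w b)).injective h).symm
      · simp
    rw [h2]
    apply inv_entry hz.1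
    ext ⟨a, b, c⟩
    rw [Multiset.count_map, Multiset.count_map]
    rw [← Finset.filter_val, ← Finset.filter_val, ← Finset.card_def, ← Finset.card_def]
    by_cases hbc : b = c
    · subst hbc
      have h3 := congrFun (hu a) ((u a).symm b)
      simp only [cnt, Function.comp, Equiv.apply_symm_apply] at h3
      convert h3 using 3
      · simp only [Prod.mk.injEq]
        constructor
        · rintro ⟨rfl, h, -⟩; exact ⟨rfl, by rw [h]; simp⟩
        · rintro ⟨rfl, h⟩; rw [h]; simp
      · simp only [Prod.mk.injEq]
        constructor
        · rintro ⟨rfl, h, -⟩; exact ⟨rfl, h.symm⟩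
        · rintro ⟨rfl, h⟩; exact ⟨rfl, h.symm, h.symm⟩
    · rw [Finset.filter_false_of_mem, Finset.filter_false_of_mem]
      · intro x _ h; simp only [Prod.mk.injEq] at h; exact hbc (h.2.1.trans h.2.2.symm)
      · intro x _ h; simp only [Prod.mk.injEq] at h; exact hbc (h.2.1.trans h.2.2.symm)
  let rep : (W → PartLe n (Fintype.card D)) → (k → D) := fun τ =>
    if h : ∃ i, key i = τ then h.choose else fun _ => Classical.arbitrary D
  have hrep : ∀ i, key (rep (key i)) = key i := by
    intro i
    have h : ∃ j, key j = key i := ⟨i, rfl⟩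
    simp only [rep]
    rw [dif_pos h]
    exact h.choose_spec
  refine ⟨{ toFun := fun M τ => M (rep τ) (rep τ), map_add' := fun _ _ => rfl,
            map_smul' := fun _ _ => rfl }, ?_⟩
  intro z hz hL
  apply cen_zero hz
  intro i
  rw [← hkey z hz _ _ (hrep i)]
  exact congrFun hL (key i)

/-- the volume bound -/
def Vol (n d c : ℕ) : ℝ := Real.sqrt (((numPartLe n d * (d * d + n - 1).choose n : ℕ) : ℝ) ^ c)

theorem exists_univ [Nonempty D] (n : ℕ) (hk : Fintype.card k = n) (w : k → W) :
    ∃ (s : Finset (Matrix (k → D) (k → D) ℂ)) (c : Matrix (k → D) (k → D) ℂ → ℝ),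
      CPFam (invAlg D w) s ∧ (∀ p ∈ s, 0 < c p) ∧
      (∀ p ∈ s, ∀ σ ∈ invAlg D w, IsDensity σ → (((c p : ℝ) : ℂ) • p - p * σ).PosSemidef) ∧
      ∑ p ∈ s, c p * p.trace.re ≤ Vol n (Fintype.card D) (Fintype.card W) := by
  obtain ⟨L, hL⟩ := exists_cenL (D := D) n hk w
  obtain ⟨s, c, h1, h2, h3, h4⟩ := bmain _ (invAlg_fc w) L hL
  refine ⟨s, c, h1, h2, h3, h4.trans ?_⟩
  apply Real.sqrt_le_sqrt
  rw [Fintype.card_fun, PartLe_card]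
  have := finrank_invAlg (D := D) n hk w
  push_cast
  rw [mul_pow]
  gcongr
  exact_mod_cast this

end cen

section typ
open scoped Matrix Nat
set_option linter.unusedSectionVars false

lemma fact_pow_le (m k : ℕ) : m ! * m ^ k ≤ k ! * m ^ m := by
  rcases le_total m k with h | h
  · have := Nat.factorial_mul_pow_sub_le_factorial h
    calc m ! * m ^ k = (m ! * m ^ (k - m)) * m ^ m := by
          rw [mul_assoc, ← pow_add, Nat.sub_add_cancel h]
      _ ≤ _ := Nat.mul_le_mul_right _ this
  · have h1 := Nat.factorial_mul_descFactorial (Nat.sub_le m k)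
    rw [Nat.sub_sub_self h] at h1
    have h2 := Nat.descFactorial_le_pow m (m - k)
    calc m ! * m ^ k = k ! * (m.descFactorial (m - k) * m ^ k) := by rw [← h1, mul_assoc]
      _ ≤ k ! * (m ^ (m - k) * m ^ k) := by gcongr
      _ = _ := by rw [← pow_add, Nat.sub_add_cancel h]

variable {S : Type*} [Fintype S] [DecidableEq S]

lemma card_piAntidiag_le [Nonempty S] (n : ℕ) :
    (Finset.piAntidiag (Finset.univ : Finset S) n).card ≤ (n + 1) ^ (Fintype.card S - 1) := by
  obtain ⟨a0⟩ := ‹Nonempty S›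
  have hc : Fintype.card {a : S // a ≠ a0} = Fintype.card S - 1 := by
    simp [Fintype.card_subtype_compl]
  rw [← hc, show (n + 1) ^ Fintype.card {a : S // a ≠ a0}
    = Fintype.card ({a : S // a ≠ a0} → Fin (n + 1)) by simp, ← Finset.card_univ]
  apply Finset.card_le_card_of_injOn
    (fun f => fun a : {a : S // a ≠ a0} => (Fin.ofNat (n + 1) (f a.1)))
  · intro f hf; simp
  · intro f hf g hg hfg
    rw [Finset.mem_coe, Finset.mem_piAntidiag] at hf hg
    have hle : ∀ (f : S → ℕ), ∑ x, f x = n → ∀ a, f a < n + 1 := by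
      intro f hf a
      have := Finset.single_le_sum (f := f) (fun i _ => Nat.zero_le _) (Finset.mem_univ a)
      omega
    have h1 : ∀ a, a ≠ a0 → f a = g a := by
      intro a ha
      have := congrFun hfg ⟨a, ha⟩
      have := congrArg Fin.val this
      simp only [Fin.ofNat] at this
      rwa [Nat.mod_eq_of_lt (hle f hf.1 a), Nat.mod_eq_of_lt (hle g hg.1 a)] at this
    funext a
    by_cases ha : a = a0
    · subst ha
      have e1 := hf.1; have e2 := hg.1
      rw [← Finset.add_sum_erase _ _ (Finset.mem_univ a)] at e1 e2
      have : ∑ x ∈ Finset.univ.erase a, f x = ∑ x ∈ Finset.univ.erase a, g x :=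
        Finset.sum_congr rfl fun x hx => h1 x (Finset.ne_of_mem_erase hx)
      omega
    · exact h1 a ha

lemma type_num [Nonempty S] (n : ℕ) (m : S → ℕ) (hm : ∑ a, m a = n) :
    (∏ a, (m a)!) * n ^ n ≤ n ! * ((n + 1) ^ (Fintype.card S - 1) * ∏ a, m a ^ m a) := by
  have h := Finset.sum_pow_eq_sum_piAntidiag (Finset.univ : Finset S) m n
  rw [hm] at h
  rw [h, Finset.mul_sum]
  calc _ ≤ ∑ f ∈ Finset.piAntidiag (Finset.univ : Finset S) n, n ! * ∏ a, m a ^ m a := by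
        apply Finset.sum_le_sum
        intro f hf
        rw [Finset.mem_piAntidiag] at hf
        have h2 := Nat.multinomial_spec (Finset.univ : Finset S) f
        rw [hf.1] at h2
        calc (∏ a, (m a)!) * (((Nat.multinomial Finset.univ f : ℕ)) * ∏ a, m a ^ f a)
            = (Nat.multinomial Finset.univ f) * ∏ a, ((m a)! * m a ^ f a) := by
              rw [Finset.prod_mul_distrib]; ring
          _ ≤ (Nat.multinomial Finset.univ f) * ∏ a, ((f a)! * m a ^ m a) := by
              exact Nat.mul_le_mul_left _ (Finset.prod_le_prod' fun a _ => fact_pow_le _ _)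
          _ = n ! * ∏ a, m a ^ m a := by
              rw [Finset.prod_mul_distrib, ← h2]; ring
    _ = (Finset.piAntidiag (Finset.univ : Finset S) n).card * (n ! * ∏ a, m a ^ m a) := by
        rw [Finset.sum_const, smul_eq_mul]
    _ ≤ (n + 1) ^ (Fintype.card S - 1) * (n ! * ∏ a, m a ^ m a) := by
        gcongr; exact card_piAntidiag_le n
    _ = _ := by ring

variable {k : Type*} [Fintype k] [DecidableEq k] {D : Type*} [Fintype D] [DecidableEq D]

/-- the empirical distribution -/
def typ (s : k → S) (a : S) : ℝ := (Fintype.card {b // s b = a} : ℝ) / (Fintype.card k : ℝ)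

lemma typ_nonneg (s : k → S) (a : S) : 0 ≤ typ s a := by unfold typ; positivity

lemma sum_fiber (s : k → S) : ∑ a, Fintype.card {b // s b = a} = Fintype.card k := by
  rw [← Fintype.card_sigma]
  exact Fintype.card_congr (Equiv.sigmaFiberEquiv s)

lemma typ_sum [Nonempty k] (s : k → S) : ∑ a, typ s a = 1 := by
  unfold typ
  rw [← Finset.sum_div, ← Nat.cast_sum, sum_fiber, div_self]
  exact_mod_cast Fintype.card_ne_zero

lemma perm_count (s : k → S) (f : k → S) :
    (∃ π : Equiv.Perm k, s ∘ π.symm = f) →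
    (Finset.univ.filter fun π : Equiv.Perm k => s ∘ π.symm = f).card
      = ∏ a, (Fintype.card {b // s b = a})! := by
  rintro ⟨π0, h0⟩
  rw [← DomMulAct.stabilizer_card s, Fintype.card_subtype]
  refine Finset.card_bij' (fun π _ => π0.trans π.symm) (fun g _ => g.symm.trans π0) ?_ ?_ ?_ ?_
  · intro π hπ
    simp only [Finset.mem_filter, Finset.mem_univ, true_and] at hπ ⊢
    funext b
    have := congrFun (hπ.trans h0.symm) (π0 b)
    simpa using this
  · intro g hg
    simp only [Finset.mem_filter, Finset.mem_univ, true_and] at hg ⊢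
    rw [← h0]
    funext b
    have := congrFun hg (π0.symm b)
    simpa using this
  · intro π _; ext b; simp
  · intro π _; ext b; simp

lemma prod_typ (s : k → S) : ∏ b, typ s (s b) = ∏ a, typ s a ^ (Fintype.card {b // s b = a}) := by
  rw [← Finset.prod_fiberwise Finset.univ s]
  apply Finset.prod_congr rfl
  intro a _
  rw [Finset.prod_congr rfl (g := fun _ => typ s a), Finset.prod_const, Fintype.card_subtype]
  intro b hb
  rw [(Finset.mem_filter.1 hb).2]

lemma type_coeff [Nonempty k] [Nonempty S] (s : k → S) (f : k → S) :
    ((Fintype.card k)! : ℝ)⁻¹ *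
      ((Finset.univ.filter fun π : Equiv.Perm k => s ∘ π.symm = f).card : ℝ)
      ≤ ((Fintype.card k : ℝ) + 1) ^ (Fintype.card S - 1) * ∏ b, typ s (f b) := by
  by_cases h : ∃ π : Equiv.Perm k, s ∘ π.symm = f
  · rw [perm_count s f h]
    obtain ⟨π, rfl⟩ := h
    have e : ∏ b, typ s ((s ∘ π.symm) b) = ∏ b, typ s (s b) :=
      Equiv.prod_comp π.symm (fun b => typ s (s b))
    rw [e, prod_typ]
    have h1 := type_num (Fintype.card k) (fun a => Fintype.card {b // s b = a}) (sum_fiber s)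
    have h2 : ∏ a, typ s a ^ (Fintype.card {b // s b = a})
        = (∏ a, (Fintype.card {b // s b = a} : ℝ) ^ (Fintype.card {b // s b = a}))
          / (Fintype.card k : ℝ) ^ (Fintype.card k) := by
      unfold typ
      simp_rw [div_pow]
      rw [Finset.prod_div_distrib]
      congr 1
      conv_rhs => rw [← sum_fiber s]
      rw [Finset.prod_pow_eq_pow_sum, sum_fiber]
    rw [h2]
    have hk : (0 : ℝ) < (Fintype.card k : ℝ) ^ (Fintype.card k) := by
      have : 0 < Fintype.card k := Fintype.card_pos
      positivity
    have hf : (0 : ℝ) < ((Fintype.card k)! : ℝ) := by exact_mod_cast Nat.factorial_pos _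
    rw [inv_mul_le_iff₀ hf, ← mul_div_assoc, ← mul_div_assoc, le_div_iff₀ hk]
    exact_mod_cast h1
  · have : (Finset.univ.filter fun π : Equiv.Perm k => s ∘ π.symm = f) = ∅ := by
      rw [Finset.filter_eq_empty_iff]
      intro π _ hπ; exact h ⟨π, hπ⟩
    rw [this]
    simp only [Finset.card_empty, Nat.cast_zero, mul_zero]
    have := Finset.prod_nonneg fun b (_ : b ∈ (Finset.univ : Finset k)) => typ_nonneg s (f b)
    positivity

lemma type_lemma [Nonempty k] [Nonempty S] (s : k → S) {R : k → S → Matrix D D ℂ}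
    (hR : ∀ b a, (R b a).PosSemidef) :
    ((((Fintype.card k : ℝ) + 1) ^ (Fintype.card S - 1)) •
        tensorFam (fun b => ∑ a, typ s a • R b a)
      - ((Fintype.card k)! : ℝ)⁻¹ • ∑ π : Equiv.Perm k,
          tensorFam (fun b => R b (s (π.symm b)))).PosSemidef := by
  have h1 : ∑ π : Equiv.Perm k, tensorFam (fun b => R b (s (π.symm b)))
      = ∑ f : k → S, ((Finset.univ.filter fun π : Equiv.Perm k => s ∘ π.symm = f).card : ℝ) •
          tensorFam (fun b => R b (f b)) := by
    rw [← Finset.sum_fiberwise Finset.univ (fun π : Equiv.Perm k => s ∘ π.symm)]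
    apply Finset.sum_congr rfl
    intro f _
    rw [Finset.sum_congr rfl (g := fun _ => tensorFam (fun b => R b (f b))), Finset.sum_const]
    · rw [Nat.cast_smul_eq_nsmul]
    · intro π hπ
      rw [← (Finset.mem_filter.1 hπ).2]; rfl
  rw [h1, tensorFam_sum, Finset.smul_sum, Finset.smul_sum, ← Finset.sum_sub_distrib]
  apply Matrix.posSemidef_sum
  intro f _
  rw [tensorFam_rsmul (fun b => typ s (f b)) (fun b => R b (f b)), smul_smul, smul_smul, ← sub_smul]
  exact psd_rsmul (tensorFam_psd fun b => hR b (f b)) (sub_nonneg.2 (type_coeff s f))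

end typ

section key
open scoped Matrix Nat
set_option linter.unusedSectionVars false
variable {m : Type*} [Fintype m] [DecidableEq m]

lemma conj_diag_nonneg {A : Matrix m m ℂ} (hA : A.PosSemidef) (U : Matrix m m ℂ) (i : m) :
    0 ≤ ((star U * A * U) i i).re := by
  have h := (hA.conjTranspose_mul_mul_same U).diag_nonneg (i := i)
  exact (Complex.le_def.1 h).1

lemma trace_specForm_mul_re (U : Matrix m m ℂ) (a : m → ℝ) (M : Matrix m m ℂ) :
    (M * specForm U a).trace.re = ∑ i, a i * ((star U * M * U) i i).re := by
  rw [Matrix.trace_mul_comm, trace_specForm_mul, Complex.re_sum]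
  simp

lemma trace_pow_bound {N p ω : Matrix m m ℂ} (hN : N.PosSemidef) (hpN : (p - N).PosSemidef)
    (hω : ω.PosSemidef) {c : ℝ} (hc : 0 < c) (h : (((c : ℝ) : ℂ) • p - p * ω).PosSemidef)
    {t : ℝ} (ht0 : 0 < t) (ht1 : t < 1) :
    c ^ (-t) * (N * ω).trace.re ≤ (N * mpow ω (1 - t)).trace.re := by
  obtain ⟨U, hU, a, ha, rfl⟩ := exists_specForm_nonneg hω
  rw [mpow_specForm hU, trace_specForm_mul_re, trace_specForm_mul_re, Finset.mul_sum]
  apply Finset.sum_le_sum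
  intro i _
  have h1 := conj_diag_nonneg hN U i
  have h2 := conj_diag_nonneg hpN U i
  have h3 := conj_diag_nonneg h U i
  have e2 : ((star U * (p - N) * U) i i).re = ((star U * p * U) i i).re - ((star U * N * U) i i).re := by
    rw [Matrix.mul_sub, Matrix.sub_mul, Matrix.sub_apply, Complex.sub_re]
  have e3 : ((star U * (((c : ℝ) : ℂ) • p - p * specForm U a) * U) i i).re
      = (c - a i) * ((star U * p * U) i i).re := by
    have : star U * (((c : ℝ) : ℂ) • p - p * specForm U a) * U
        = ((c : ℝ) : ℂ) • (star U * p * U)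
          - (star U * p * U) * Matrix.diagonal (fun i => (a i : ℂ)) := by
      rw [Matrix.mul_sub, Matrix.sub_mul, Matrix.mul_smul, Matrix.smul_mul]
      congr 1
      unfold specForm
      simp only [Matrix.mul_assoc, unit_left hU, Matrix.mul_one]
    rw [this, Matrix.sub_apply, Matrix.mul_diagonal, Matrix.smul_apply, Complex.sub_re, smul_eq_mul]
    simp only [Complex.mul_re, Complex.ofReal_re, Complex.ofReal_im, mul_zero, zero_mul, sub_zero]
    ring
  rw [e2] at h2
  rw [e3] at h3
  set x := ((star U * N * U) i i).re
  set y := ((star U * p * U) i i).re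
  rcases h1.eq_or_lt with hx | hx
  · rw [← hx]; simp
  have hy : 0 < y := by linarith
  have hac : a i ≤ c := by
    by_contra hcon
    push Not at hcon
    nlinarith
  rw [← mul_assoc]
  apply mul_le_mul_of_nonneg_right _ h1
  rcases (ha i).eq_or_lt with h0 | h0
  · rw [← h0]; simp [supPow]
  · have : supPow (1 - t) (a i) = a i ^ (-t) * a i := by
      unfold supPow
      rw [if_neg (not_le.2 h0), sub_eq_neg_add, Real.rpow_add h0, Real.rpow_one]
    rw [this]
    apply mul_le_mul_of_nonneg_right _ h0.le
    exact Real.rpow_le_rpow_of_nonpos h0 hac (by linarith)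

lemma holder_op {s : Finset (Matrix m m ℂ)} (hs : ∀ q ∈ s, q.PosSemidef) (hs1 : ∑ q ∈ s, q = 1)
    {c : Matrix m m ℂ → ℝ} (hc : ∀ q ∈ s, 0 < c q) {K : Matrix m m ℂ} (hK : K.PosSemidef)
    {t : ℝ} (ht0 : 0 < t) (ht1 : t < 1) :
    ∑ q ∈ s, c q ^ t * (q * K).trace.re
      ≤ (mpow K (1 / (1 - t))).trace.re ^ (1 - t) * (∑ q ∈ s, c q * q.trace.re) ^ t := by
  obtain ⟨U, hU, a, ha, rfl⟩ := exists_specForm_nonneg hK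
  rw [mpow_specForm hU, specForm_trace hU, Complex.ofReal_re]
  set μ : m → Matrix m m ℂ → ℝ := fun l q => ((star U * q * U) l l).re with hμ
  have hμ0 : ∀ l, ∀ q ∈ s, 0 ≤ μ l q := fun l q hq => conj_diag_nonneg (hs q hq) U l
  have hμ1 : ∀ l, ∑ q ∈ s, μ l q = 1 := by
    intro l
    simp only [hμ]
    rw [← Complex.re_sum, ← Matrix.sum_apply, ← Finset.sum_mul, ← Finset.mul_sum, hs1, mul_one,
      unit_left hU]
    simp
  have hμ2 : ∀ q, ∑ l, μ l q = q.trace.re := by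
    intro q
    simp only [hμ]
    rw [← Complex.re_sum]
    have : ∑ l, (star U * q * U) l l = (star U * q * U).trace := rfl
    rw [this, Matrix.trace_mul_cycle, unit_right hU, Matrix.one_mul]
  have hpq : (1 / (1 - t)).HolderConjugate (1 / t) := by
    rw [Real.holderConjugate_iff]
    constructor
    · rw [lt_div_iff₀ (by linarith)]; linarith
    · simp
  have key := Real.inner_le_Lp_mul_Lq_of_nonneg (Finset.univ ×ˢ s) (f := fun x => a x.1 * μ x.1 x.2 ^ (1 - t))
    (g := fun x => c x.2 ^ t * μ x.1 x.2 ^ t) hpq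
    (fun x hx => mul_nonneg (ha _) (Real.rpow_nonneg (hμ0 _ _ (Finset.mem_product.1 hx).2) _))
    (fun x hx => mul_nonneg (Real.rpow_nonneg (hc _ (Finset.mem_product.1 hx).2).le _)
      (Real.rpow_nonneg (hμ0 _ _ (Finset.mem_product.1 hx).2) _))
  rw [one_div_one_div, one_div_one_div] at key
  have e1 : ∑ x ∈ Finset.univ ×ˢ s, (a x.1 * μ x.1 x.2 ^ (1 - t)) ^ (1 / (1 - t))
      = ∑ i, supPow (1 / (1 - t)) (a i) := by
    rw [Finset.sum_product]
    apply Finset.sum_congr rfl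
    intro l _
    have hz : supPow (1 / (1 - t)) (a l) = ∑ q ∈ s, supPow (1 / (1 - t)) (a l) * μ l q := by
      rw [← Finset.mul_sum, hμ1 l, mul_one]
    rw [hz]
    apply Finset.sum_congr rfl
    intro q hq
    simp only
    rw [Real.mul_rpow (ha l) (Real.rpow_nonneg (hμ0 l q hq) _), ← Real.rpow_mul (hμ0 l q hq),
      mul_one_div_cancel (by linarith), Real.rpow_one]
    congr 1
    unfold supPow
    split_ifs with h
    · rw [le_antisymm h (ha l), Real.zero_rpow]
      exact (one_div_pos.2 (by linarith)).ne'
    · rfl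
  have e2 : ∑ x ∈ Finset.univ ×ˢ s, (c x.2 ^ t * μ x.1 x.2 ^ t) ^ (1 / t)
      = ∑ q ∈ s, c q * q.trace.re := by
    rw [Finset.sum_product_right]
    apply Finset.sum_congr rfl
    intro q hq
    rw [← hμ2, Finset.mul_sum]
    apply Finset.sum_congr rfl
    intro l _
    simp only
    rw [Real.mul_rpow (Real.rpow_nonneg (hc q hq).le _) (Real.rpow_nonneg (hμ0 l q hq) _),
      ← Real.rpow_mul (hμ0 l q hq), ← Real.rpow_mul (hc q hq).le,
      mul_one_div_cancel (by linarith), Real.rpow_one, Real.rpow_one]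
  have e3 : ∑ x ∈ Finset.univ ×ˢ s, a x.1 * μ x.1 x.2 ^ (1 - t) * (c x.2 ^ t * μ x.1 x.2 ^ t)
      = ∑ q ∈ s, c q ^ t * (q * specForm U a).trace.re := by
    rw [Finset.sum_product_right]
    apply Finset.sum_congr rfl
    intro q hq
    rw [trace_specForm_mul_re, Finset.mul_sum]
    apply Finset.sum_congr rfl
    intro l _
    simp only
    have : μ l q ^ (1 - t) * μ l q ^ t = μ l q := by
      rw [← Real.rpow_add_of_nonneg (hμ0 l q hq) (by linarith) ht0.le]; simp
    calc _ = c q ^ t * (a l * (μ l q ^ (1 - t) * μ l q ^ t)) := by ring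
      _ = _ := by rw [this]
  rw [e1, e2, e3] at key
  exact key

end key

section symm
open scoped Matrix Nat
set_option linter.unusedSectionVars false
variable {k : Type*} [Fintype k] [DecidableEq k] {D : Type*} [Fintype D] [DecidableEq D]
variable {W V : Type*}

/-- symmetrisation of a labelled family of matrices -/
def symF (F : (k → W) → Matrix (k → D) (k → D) ℂ) (w : k → W) : Matrix (k → D) (k → D) ℂ :=
  ((Fintype.card k)! : ℝ)⁻¹ • ∑ π : Equiv.Perm k, permM π (F (w ∘ π))

lemma fact_inv_nonneg : (0 : ℝ) ≤ ((Fintype.card k)! : ℝ)⁻¹ := by positivity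

lemma fact_cancel (r : ℝ) : ((Fintype.card k)! : ℝ)⁻¹ * ∑ _π : Equiv.Perm k, r = r := by
  rw [Finset.sum_const, Finset.card_univ, Fintype.card_perm, nsmul_eq_mul, ← mul_assoc,
    inv_mul_cancel₀, one_mul]
  exact_mod_cast (Nat.factorial_pos _).ne'

lemma symF_psd {F : (k → W) → Matrix (k → D) (k → D) ℂ} (hF : ∀ w, (F w).PosSemidef) (w : k → W) :
    (symF F w).PosSemidef :=
  psd_rsmul (Matrix.posSemidef_sum _ fun π _ => permM_psd π (hF _)) fact_inv_nonneg

lemma symF_one (w : k → W) : symF (fun _ : k → W => (1 : Matrix (k → D) (k → D) ℂ)) w = 1 := by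
  unfold symF
  simp only [permM_one]
  rw [Finset.sum_const, Finset.card_univ, Fintype.card_perm, ← Nat.cast_smul_eq_nsmul ℝ, smul_smul,
    inv_mul_cancel₀, one_smul]
  exact_mod_cast (Nat.factorial_pos _).ne'

lemma symF_sub (F G : (k → W) → Matrix (k → D) (k → D) ℂ) (w : k → W) :
    symF (fun w => F w - G w) w = symF F w - symF G w := by
  unfold symF
  simp only [permM_sub]
  rw [Finset.sum_sub_distrib, smul_sub]

lemma symF_comp (σ : (k → V) → Matrix (k → D) (k → D) ℂ) (q : W → V) (w : k → W) :
    symF (fun w => σ (q ∘ w)) w = symF σ (q ∘ w) := rfl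

lemma symF_mem (F : (k → W) → Matrix (k → D) (k → D) ℂ) (w : k → W) :
    symF F w ∈ invAlg D w := by
  intro π hπ
  unfold symF
  rw [permM_rsmul, permM_sum]
  congr 1
  have h2 : w ∘ π.symm = w := by
    conv_lhs => rw [← hπ]
    funext b; simp
  rw [← Equiv.sum_comp (Equiv.mulLeft π) (fun τ => permM τ (F (w ∘ τ)))]
  apply Finset.sum_congr rfl
  intro τ _
  rw [permM_permM]
  simp only [Equiv.coe_mulLeft]
  rw [Equiv.Perm.coe_mul, ← Function.comp_assoc, hπ]

lemma symF_trace_re (F : (k → W) → Matrix (k → D) (k → D) ℂ) (w : k → W) :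
    (symF F w).trace = ((Fintype.card k)! : ℝ)⁻¹ • ∑ π : Equiv.Perm k, (F (w ∘ π)).trace := by
  unfold symF
  rw [Matrix.trace_smul, Matrix.trace_sum]
  simp only [permM_trace]

lemma symF_density {F : (k → W) → Matrix (k → D) (k → D) ℂ} (hF : ∀ w, IsDensity (F w)) (w : k → W) :
    IsDensity (symF F w) := by
  refine ⟨symF_psd (fun w => (hF w).1) w, ?_⟩
  rw [symF_trace_re, Finset.sum_congr rfl (g := fun _ => (1 : ℂ)) (fun (π : Equiv.Perm k) _ => (hF (w ∘ π)).2)]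
  rw [Finset.sum_const, Finset.card_univ, Fintype.card_perm, ← Nat.cast_smul_eq_nsmul ℝ, smul_smul,
    inv_mul_cancel₀, one_smul]
  exact_mod_cast (Nat.factorial_pos _).ne'

lemma trace_symF_mul (F : (k → W) → Matrix (k → D) (k → D) ℂ) (w : k → W)
    (G : Matrix (k → D) (k → D) ℂ) :
    (symF F w * G).trace.re
      = ((Fintype.card k)! : ℝ)⁻¹ * ∑ π : Equiv.Perm k, (permM π (F (w ∘ π)) * G).trace.re := by
  unfold symF
  rw [Matrix.smul_mul, Matrix.trace_smul, Complex.smul_re, Finset.sum_mul, Matrix.trace_sum,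
    Complex.re_sum, smul_eq_mul]

lemma trace_mul_permM (π : Equiv.Perm k) (M N : Matrix (k → D) (k → D) ℂ) :
    (permM π M * N).trace = (M * permM π⁻¹ N).trace := by
  rw [← permM_trace π (M * permM π⁻¹ N), permM_mul, permM_permM, mul_inv_cancel, permM_one_perm]

lemma sym_swap [Fintype W] [DecidableEq W] {P : (k → W) → ℝ}
    (hP : ∀ w (π : Equiv.Perm k), P (w ∘ π) = P w)
    (F G : (k → W) → Matrix (k → D) (k → D) ℂ) :
    ∑ w, P w * (symF F w * G w).trace.re = ∑ w, P w * (F w * symF G w).trace.re := by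
  have h1 : ∀ w, P w * (symF F w * G w).trace.re = ((Fintype.card k)! : ℝ)⁻¹ *
      ∑ π : Equiv.Perm k, P w * (F (w ∘ π) * permM π⁻¹ (G w)).trace.re := by
    intro w
    rw [trace_symF_mul, mul_left_comm, Finset.mul_sum]
    simp only [trace_mul_permM]
  have h2 : ∀ w, P w * (F w * symF G w).trace.re = ((Fintype.card k)! : ℝ)⁻¹ *
      ∑ π : Equiv.Perm k, P w * (F w * permM π (G (w ∘ π))).trace.re := by
    intro w
    rw [Matrix.trace_mul_comm, trace_symF_mul, mul_left_comm, Finset.mul_sum]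
    simp only [Matrix.trace_mul_comm (F w)]
  simp only [h1, h2]
  rw [← Finset.mul_sum, ← Finset.mul_sum, Finset.sum_comm, Finset.sum_comm (s := (Finset.univ : Finset (k → W)))]
  congr 1
  refine Fintype.sum_equiv (Equiv.inv (Equiv.Perm k)) _ _ fun π => ?_
  refine Fintype.sum_equiv (permE π) _ _ fun w => ?_
  have e1 : (permE π) w = w ∘ π := rfl
  have e2 : (w ∘ π) ∘ (π⁻¹ : Equiv.Perm k) = w := by funext b; simp
  rw [e1, hP, Equiv.inv_apply, e2]

end symm

section tri
open scoped Matrix Nat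
set_option linter.unusedSectionVars false
variable {m : Type*} [Fintype m] [DecidableEq m]

/-- resolution of the identity by positive semidefinite matrices -/
def Res (s : Finset (Matrix m m ℂ)) : Prop := (∀ p ∈ s, p.PosSemidef) ∧ ∑ p ∈ s, p = 1

/-- two commuting families -/
def Com (s s' : Finset (Matrix m m ℂ)) : Prop := ∀ p ∈ s, ∀ q ∈ s', p * q = q * p

lemma CPFam.res {A : StarSubalgebra ℂ (Matrix m m ℂ)} {s : Finset (Matrix m m ℂ)}
    (h : CPFam A s) : Res s := ⟨fun p hp => (h.1 p hp).psd, h.2.2⟩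

lemma Res.le_one {s : Finset (Matrix m m ℂ)} (h : Res s) {q : Matrix m m ℂ} (hq : q ∈ s) :
    (1 - q).PosSemidef := by
  rw [← h.2, ← Finset.add_sum_erase _ _ hq, add_sub_cancel_left]
  exact Matrix.posSemidef_sum _ fun p hp => h.1 p (Finset.mem_of_mem_erase hp)

lemma psd3 {p q r : Matrix m m ℂ} (hp : p.PosSemidef) (hq : q.PosSemidef) (hr : r.PosSemidef)
    (h1 : p * q = q * p) (h2 : p * r = r * p) (h3 : q * r = r * q) : (p * q * r).PosSemidef := by
  apply commute_psd_mul (commute_psd_mul hp hq h1) hr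
  rw [mul_assoc, h3, ← mul_assoc, h2, mul_assoc]

/-- the weight of the smooth comparison test -/
def wt (c u v : ℝ) : ℝ := c / (c + u + v)

lemma wt_nonneg {c u v : ℝ} (hc : 0 < c) (hu : 0 < u) (hv : 0 < v) : 0 ≤ wt c u v := by
  unfold wt; positivity

lemma wt_le_one {c u v : ℝ} (hc : 0 < c) (hu : 0 < u) (hv : 0 < v) : wt c u v ≤ 1 := by
  unfold wt; rw [div_le_one (by positivity)]; linarith

lemma wt_le1 {c u v : ℝ} (hc : 0 < c) (hu : 0 < u) (hv : 0 < v) : wt c u v ≤ c / u := by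
  unfold wt; gcongr; linarith

lemma wt_le2 {c u v : ℝ} (hc : 0 < c) (hu : 0 < u) (hv : 0 < v) : wt c u v ≤ c / v := by
  unfold wt; gcongr; linarith

lemma frac_le {c u t : ℝ} (hc : 0 < c) (hu : 0 < u) (ht0 : 0 < t) (ht1 : t < 1) :
    u / (c + u) ≤ u ^ t * c ^ (-t) := by
  have e : u ^ t * c ^ (-t) = (u / c) ^ t := by
    rw [Real.div_rpow hu.le hc.le, Real.rpow_neg hc.le, div_eq_mul_inv]
  rw [e]
  rcases le_total u c with h | h
  · have h1 : u / c ≤ 1 := by rw [div_le_one hc]; exact h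
    calc u / (c + u) ≤ u / c := by gcongr; linarith
      _ = (u / c) ^ (1 : ℝ) := (Real.rpow_one _).symm
      _ ≤ (u / c) ^ t := Real.rpow_le_rpow_of_exponent_ge (by positivity) h1 ht1.le
  · calc u / (c + u) ≤ 1 := by rw [div_le_one (by positivity)]; linarith
      _ ≤ (u / c) ^ t := Real.one_le_rpow (by rw [le_div_iff₀ hc]; linarith) ht0.le

lemma one_sub_wt {c u v t : ℝ} (hc : 0 < c) (hu : 0 < u) (hv : 0 < v) (ht0 : 0 < t) (ht1 : t < 1) :
    1 - wt c u v ≤ u ^ t * c ^ (-t) + v ^ t * c ^ (-t) := by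
  have h1 : 1 - wt c u v = u / (c + u + v) + v / (c + u + v) := by
    unfold wt; field_simp; ring
  have h2 : u / (c + u + v) ≤ u / (c + u) :=
    div_le_div_of_nonneg_left hu.le (by positivity) (by linarith)
  have h3 : v / (c + u + v) ≤ v / (c + v) :=
    div_le_div_of_nonneg_left hv.le (by positivity) (by linarith)
  have := frac_le hc hu ht0 ht1
  have := frac_le hc hv ht0 ht1
  linarith

/-- the comparison test -/
def tri (s1 s2 s3 : Finset (Matrix m m ℂ)) (F : Matrix m m ℂ → Matrix m m ℂ → Matrix m m ℂ → ℝ) :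
    Matrix m m ℂ := ∑ p ∈ s1, ∑ q ∈ s2, ∑ r ∈ s3, F p q r • (p * q * r)

variable {s1 s2 s3 : Finset (Matrix m m ℂ)}

lemma tri_psd (h1 : Res s1) (h2 : Res s2) (h3 : Res s3) (h12 : Com s1 s2) (h13 : Com s1 s3)
    (h23 : Com s2 s3) {F : Matrix m m ℂ → Matrix m m ℂ → Matrix m m ℂ → ℝ}
    (hF : ∀ p ∈ s1, ∀ q ∈ s2, ∀ r ∈ s3, 0 ≤ F p q r) : (tri s1 s2 s3 F).PosSemidef := by
  unfold tri
  refine Matrix.posSemidef_sum _ fun p hp => Matrix.posSemidef_sum _ fun q hq =>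
    Matrix.posSemidef_sum _ fun r hr => psd_rsmul (psd3 (h1.1 p hp) (h2.1 q hq) (h3.1 r hr)
      (h12 p hp q hq) (h13 p hp r hr) (h23 q hq r hr)) (hF p hp q hq r hr)

lemma tri_one (h1 : Res s1) (h2 : Res s2) (h3 : Res s3) :
    tri s1 s2 s3 (fun _ _ _ => 1) = 1 := by
  unfold tri
  simp only [one_smul]
  have e : ∀ p q : Matrix m m ℂ, ∑ r ∈ s3, p * q * r = p * q := fun p q => by
    rw [← Finset.mul_sum, h3.2, mul_one]
  have e2 : ∀ p : Matrix m m ℂ, ∑ q ∈ s2, p * q = p := fun p => by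
    rw [← Finset.mul_sum, h2.2, mul_one]
  simp only [e, e2, h1.2]

lemma one_sub_tri (h1 : Res s1) (h2 : Res s2) (h3 : Res s3)
    (F : Matrix m m ℂ → Matrix m m ℂ → Matrix m m ℂ → ℝ) :
    1 - tri s1 s2 s3 F = tri s1 s2 s3 (fun p q r => 1 - F p q r) := by
  rw [← tri_one h1 h2 h3]
  unfold tri
  simp only [← Finset.sum_sub_distrib, ← sub_smul]

lemma tri_trace (F : Matrix m m ℂ → Matrix m m ℂ → Matrix m m ℂ → ℝ) (ω : Matrix m m ℂ) :
    (tri s1 s2 s3 F * ω).trace.re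
      = ∑ p ∈ s1, ∑ q ∈ s2, ∑ r ∈ s3, F p q r * (p * q * r * ω).trace.re := by
  unfold tri
  simp only [Finset.sum_mul, Matrix.trace_sum, Complex.re_sum, Matrix.smul_mul, Matrix.trace_smul,
    Complex.smul_re, smul_eq_mul]

lemma marg3 (h3 : Res s3) (G : Matrix m m ℂ → Matrix m m ℂ → ℝ) (ω : Matrix m m ℂ) :
    ∑ p ∈ s1, ∑ q ∈ s2, ∑ r ∈ s3, G p q * (p * q * r * ω).trace.re
      = ∑ p ∈ s1, ∑ q ∈ s2, G p q * (p * q * ω).trace.re := by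
  refine Finset.sum_congr rfl fun p _ => Finset.sum_congr rfl fun q _ => ?_
  rw [← Finset.mul_sum, ← Complex.re_sum, ← Matrix.trace_sum, ← Finset.sum_mul, ← Finset.mul_sum,
    h3.2, mul_one]

lemma marg2 (h2 : Res s2) (G : Matrix m m ℂ → Matrix m m ℂ → ℝ) (ω : Matrix m m ℂ) :
    ∑ p ∈ s1, ∑ q ∈ s2, ∑ r ∈ s3, G p r * (p * q * r * ω).trace.re
      = ∑ p ∈ s1, ∑ r ∈ s3, G p r * (p * r * ω).trace.re := by
  refine Finset.sum_congr rfl fun p _ => ?_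
  rw [Finset.sum_comm]
  refine Finset.sum_congr rfl fun r _ => ?_
  rw [← Finset.mul_sum, ← Complex.re_sum, ← Matrix.trace_sum, ← Finset.sum_mul, ← Finset.sum_mul,
    ← Finset.mul_sum, h2.2, mul_one]

lemma tri_le {F G : Matrix m m ℂ → Matrix m m ℂ → Matrix m m ℂ → ℝ} (h1 : Res s1) (h2 : Res s2)
    (h3 : Res s3) (h12 : Com s1 s2) (h13 : Com s1 s3) (h23 : Com s2 s3)
    (hF : ∀ p ∈ s1, ∀ q ∈ s2, ∀ r ∈ s3, F p q r ≤ G p q r) {ω : Matrix m m ℂ} (hω : ω.PosSemidef) :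
    (tri s1 s2 s3 F * ω).trace.re
      ≤ ∑ p ∈ s1, ∑ q ∈ s2, ∑ r ∈ s3, G p q r * (p * q * r * ω).trace.re := by
  rw [tri_trace]
  refine Finset.sum_le_sum fun p hp => Finset.sum_le_sum fun q hq => Finset.sum_le_sum fun r hr => ?_
  exact mul_le_mul_of_nonneg_right (hF p hp q hq r hr) (trace_mul_re_nonneg
    (psd3 (h1.1 p hp) (h2.1 q hq) (h3.1 r hr) (h12 p hp q hq) (h13 p hp r hr) (h23 q hq r hr)) hω)

lemma pair_upper (h1 : Res s1) (h2 : Res s2) {c c' : Matrix m m ℂ → ℝ} (hc : ∀ p ∈ s1, 0 < c p)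
    (hc' : ∀ q ∈ s2, 0 < c' q) {K : ℝ} (hK : 0 < K) {σ : Matrix m m ℂ}
    (hσ : ∀ q ∈ s2, (((c' q : ℝ) : ℂ) • q - q * σ).PosSemidef) :
    ∑ p ∈ s1, ∑ q ∈ s2, c p / (K * c' q) * (p * q * σ).trace.re
      ≤ (∑ p ∈ s1, c p * p.trace.re) / K := by
  rw [Finset.sum_div]
  refine Finset.sum_le_sum fun p hp => ?_
  have h : ∀ q ∈ s2, c p / (K * c' q) * (p * q * σ).trace.re ≤ c p / K * (p * q).trace.re := by
    intro q hq
    have := trace_mul_re_mono (h1.1 p hp) (hσ q hq)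
    rw [← mul_assoc, Matrix.mul_smul, Matrix.trace_smul, smul_eq_mul, Complex.re_ofReal_mul] at this
    calc _ ≤ c p / (K * c' q) * (c' q * (p * q).trace.re) := by
          apply mul_le_mul_of_nonneg_left this
          have := hc p hp; have := hc' q hq; positivity
      _ = _ := by have := hc' q hq; field_simp
  refine (Finset.sum_le_sum h).trans_eq ?_
  rw [← Finset.mul_sum, ← Complex.re_sum, ← Matrix.trace_sum, ← Finset.mul_sum, h2.2, mul_one]
  ring

lemma pair_lower (h1 : Res s1) (h2 : Res s2) (h12 : Com s1 s2) {c c' : Matrix m m ℂ → ℝ}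
    (hc : ∀ p ∈ s1, 0 < c p)
    (hc' : ∀ q ∈ s2, 0 < c' q) {K : ℝ} (hK : 0 < K) {ω : Matrix m m ℂ} (hω : ω.PosSemidef)
    (hσ : ∀ p ∈ s1, (((c p : ℝ) : ℂ) • p - p * ω).PosSemidef) {t : ℝ} (ht0 : 0 < t) (ht1 : t < 1) :
    ∑ p ∈ s1, ∑ q ∈ s2, (K * c' q) ^ t * c p ^ (-t) * (p * q * ω).trace.re
      ≤ K ^ t * ∑ q ∈ s2, c' q ^ t * (q * mpow ω (1 - t)).trace.re := by
  rw [Finset.sum_comm, Finset.mul_sum]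
  refine Finset.sum_le_sum fun q hq => ?_
  have h : ∀ p ∈ s1, (K * c' q) ^ t * c p ^ (-t) * (p * q * ω).trace.re
      ≤ (K * c' q) ^ t * (p * q * mpow ω (1 - t)).trace.re := by
    intro p hp
    rw [mul_assoc]
    apply mul_le_mul_of_nonneg_left _ (Real.rpow_nonneg (mul_pos hK (hc' q hq)).le _)
    refine trace_pow_bound (p := p) (commute_psd_mul (h1.1 p hp) (h2.1 q hq) (h12 p hp q hq)) ?_ hω
      (hc p hp) (hσ p hp) ht0 ht1
    have : p - p * q = p * (1 - q) := by rw [mul_sub, mul_one]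
    rw [this]
    apply commute_psd_mul (h1.1 p hp) (h2.le_one hq)
    rw [mul_sub, sub_mul, h12 p hp q hq, mul_one, one_mul]
  refine (Finset.sum_le_sum h).trans_eq ?_
  rw [← Finset.mul_sum, ← Complex.re_sum, ← Matrix.trace_sum, ← Finset.sum_mul, ← Finset.sum_mul,
    h1.2, one_mul, Real.mul_rpow hK.le (hc' q hq).le, mul_assoc]

/-- the concrete test weight -/
def triW (c c' c'' : Matrix m m ℂ → ℝ) (K1 K2 : ℝ) (p q r : Matrix m m ℂ) : ℝ :=
  wt (c p) (K1 * c' q) (K2 * c'' r)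

variable {c c' c'' : Matrix m m ℂ → ℝ} {K1 K2 : ℝ}

lemma tri_upper1 (h1 : Res s1) (h2 : Res s2)
    (h3 : Res s3) (h12 : Com s1 s2) (h13 : Com s1 s3) (h23 : Com s2 s3) (hc : ∀ p ∈ s1, 0 < c p)
    (hc' : ∀ q ∈ s2, 0 < c' q) (hc'' : ∀ r ∈ s3, 0 < c'' r) (hK1 : 0 < K1) (hK2 : 0 < K2)
    {σ : Matrix m m ℂ} (hσ0 : σ.PosSemidef)
    (hσ : ∀ q ∈ s2, (((c' q : ℝ) : ℂ) • q - q * σ).PosSemidef) :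
    (tri s1 s2 s3 (triW c c' c'' K1 K2) * σ).trace.re ≤ (∑ p ∈ s1, c p * p.trace.re) / K1 := by
  refine le_trans (tri_le h1 h2 h3 h12 h13 h23 (G := fun p q r => c p / (K1 * c' q)) ?_ hσ0) ?_
  · intro p hp q hq r hr
    exact wt_le1 (hc p hp) (mul_pos hK1 (hc' q hq)) (mul_pos hK2 (hc'' r hr))
  · rw [marg3 h3 (fun p q => c p / (K1 * c' q))]
    exact pair_upper h1 h2 hc hc' hK1 hσ

lemma tri_upper2 (h1 : Res s1) (h2 : Res s2)
    (h3 : Res s3) (h12 : Com s1 s2) (h13 : Com s1 s3) (h23 : Com s2 s3) (hc : ∀ p ∈ s1, 0 < c p)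
    (hc' : ∀ q ∈ s2, 0 < c' q) (hc'' : ∀ r ∈ s3, 0 < c'' r) (hK1 : 0 < K1) (hK2 : 0 < K2)
    {σ : Matrix m m ℂ} (hσ0 : σ.PosSemidef)
    (hσ : ∀ q ∈ s3, (((c'' q : ℝ) : ℂ) • q - q * σ).PosSemidef) :
    (tri s1 s2 s3 (triW c c' c'' K1 K2) * σ).trace.re ≤ (∑ p ∈ s1, c p * p.trace.re) / K2 := by
  refine le_trans (tri_le h1 h2 h3 h12 h13 h23 (G := fun p q r => c p / (K2 * c'' r)) ?_ hσ0) ?_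
  · intro p hp q hq r hr
    exact wt_le2 (hc p hp) (mul_pos hK1 (hc' q hq)) (mul_pos hK2 (hc'' r hr))
  · rw [marg2 h2 (fun p r => c p / (K2 * c'' r))]
    exact pair_upper h1 h3 hc hc'' hK2 hσ

lemma tri_lower (h1 : Res s1) (h2 : Res s2)
    (h3 : Res s3) (h12 : Com s1 s2) (h13 : Com s1 s3) (h23 : Com s2 s3) (hc : ∀ p ∈ s1, 0 < c p)
    (hc' : ∀ q ∈ s2, 0 < c' q) (hc'' : ∀ r ∈ s3, 0 < c'' r) (hK1 : 0 < K1) (hK2 : 0 < K2)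
    {ω : Matrix m m ℂ} (hω : ω.PosSemidef)
    (hσ : ∀ p ∈ s1, (((c p : ℝ) : ℂ) • p - p * ω).PosSemidef) {t : ℝ} (ht0 : 0 < t) (ht1 : t < 1) :
    ((1 - tri s1 s2 s3 (triW c c' c'' K1 K2)) * ω).trace.re
      ≤ K1 ^ t * ∑ q ∈ s2, c' q ^ t * (q * mpow ω (1 - t)).trace.re
        + K2 ^ t * ∑ q ∈ s3, c'' q ^ t * (q * mpow ω (1 - t)).trace.re := by
  rw [one_sub_tri h1 h2 h3]
  refine le_trans (tri_le h1 h2 h3 h12 h13 h23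
    (G := fun p q r => (K1 * c' q) ^ t * c p ^ (-t) + (K2 * c'' r) ^ t * c p ^ (-t)) ?_ hω) ?_
  · intro p hp q hq r hr
    exact one_sub_wt (hc p hp) (mul_pos hK1 (hc' q hq)) (mul_pos hK2 (hc'' r hr)) ht0 ht1
  · simp only [add_mul, Finset.sum_add_distrib]
    rw [marg3 h3 (fun p q => (K1 * c' q) ^ t * c p ^ (-t)),
      marg2 h2 (fun p r => (K2 * c'' r) ^ t * c p ^ (-t))]
    exact add_le_add (pair_lower h1 h2 h12 hc hc' hK1 hω hσ ht0 ht1)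
      (pair_lower h1 h3 h13 hc hc'' hK2 hω hσ ht0 ht1)

end tri

section gen
open scoped Matrix Nat
set_option linter.unusedSectionVars false
variable {k : Type*} [Fintype k] [DecidableEq k] {D : Type*} [Fintype D] [DecidableEq D]
variable {W V : Type*} [Fintype W] [DecidableEq W] [Fintype V] [DecidableEq V]

/-- partial averages over the fibres of `q` -/
def Kf (q : W → V) (p : W → ℝ) (M : W → Matrix D D ℂ) (v : V) : Matrix D D ℂ :=
  ∑ a, (if q a = v then p a else 0) • M a

lemma Kf_psd (q : W → V) {p : W → ℝ} (hp : ∀ a, 0 ≤ p a) {M : W → Matrix D D ℂ}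
    (hM : ∀ a, (M a).PosSemidef) (v : V) : (Kf q p M v).PosSemidef := by
  refine Matrix.posSemidef_sum _ fun a _ => psd_rsmul (hM a) ?_
  split_ifs
  · exact hp a
  · exact le_rfl

lemma Kf_tensor (q : W → V) (p : W → ℝ) (M : W → Matrix D D ℂ) (v : k → V) :
    tensorFam (fun b => Kf q p M (v b))
      = ∑ w : k → W, (if q ∘ w = v then ∏ b, p (w b) else 0) • tensorFam (fun b => M (w b)) := by
  unfold Kf
  rw [tensorFam_sum (fun b a => (if q a = v b then p a else 0) • M a)]
  refine Finset.sum_congr rfl fun w _ => ?_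
  rw [tensorFam_rsmul (fun b => if q (w b) = v b then p (w b) else 0) (fun b => M (w b))]
  congr 1
  rw [Finset.prod_ite_zero]
  simp [funext_iff]

lemma trace_tensor_re {A : k → Matrix D D ℂ} (hA : ∀ b, (A b).PosSemidef) :
    (tensorFam A).trace.re = ∏ b, (A b).trace.re := by
  rw [tensorFam_trace, Finset.prod_congr rfl fun b _ => herm_re (hA b).trace_nonneg,
    ← Complex.ofReal_prod, Complex.ofReal_re]

lemma psd_trace_re {m : Type*} [Fintype m] {A : Matrix m m ℂ} (hA : A.PosSemidef) :
    0 ≤ A.trace.re := (Complex.le_def.1 hA.trace_nonneg).1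

lemma regroup (q : W → V) {p : W → ℝ} (hp : ∀ a, 0 ≤ p a) {R : W → Matrix D D ℂ}
    (hR : ∀ a, (R a).PosSemidef)
    (s : (k → V) → Finset (Matrix (k → D) (k → D) ℂ))
    (c : (k → V) → Matrix (k → D) (k → D) ℂ → ℝ) (hs : ∀ v, Res (s v))
    (hc : ∀ v, ∀ r ∈ s v, 0 < c v r) {L : ℝ} (hL : ∀ v, ∑ r ∈ s v, c v r * r.trace.re ≤ L)
    {t : ℝ} (ht0 : 0 < t) (ht1 : t < 1) :
    ∑ w : k → W, (∏ b, p (w b)) * ∑ r ∈ s (q ∘ w), c (q ∘ w) r ^ t *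
        (r * mpow (tensorFam fun b => R (w b)) (1 - t)).trace.re
      ≤ L ^ t * (∑ v, (mpow (Kf q p (fun a => mpow (R a) (1 - t)) v) (1 / (1 - t))).trace.re
          ^ (1 - t)) ^ (Fintype.card k) := by
  set M : W → Matrix D D ℂ := fun a => mpow (R a) (1 - t) with hM
  have hMp : ∀ a, (M a).PosSemidef := fun a => mpow_psd (hR a) _
  have hKp := Kf_psd q hp hMp
  have e1 : ∑ w : k → W, (∏ b, p (w b)) * ∑ r ∈ s (q ∘ w), c (q ∘ w) r ^ t *
        (r * mpow (tensorFam fun b => R (w b)) (1 - t)).trace.re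
      = ∑ v : k → V, ∑ r ∈ s v, c v r ^ t * (r * tensorFam (fun b => Kf q p M (v b))).trace.re := by
    have h1 : ∀ (v : k → V) (r : Matrix (k → D) (k → D) ℂ),
        (r * tensorFam (fun b => Kf q p M (v b))).trace.re
        = ∑ w : k → W, (if q ∘ w = v then ∏ b, p (w b) else 0) *
            (r * tensorFam (fun b => M (w b))).trace.re := by
      intro v r
      rw [Kf_tensor, Finset.mul_sum, Matrix.trace_sum, Complex.re_sum]
      refine Finset.sum_congr rfl fun w _ => ?_
      rw [Matrix.mul_smul, Matrix.trace_smul, Complex.smul_re, smul_eq_mul]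
    have h2 : ∀ v : k → V,
        ∑ r ∈ s v, c v r ^ t * (r * tensorFam (fun b => Kf q p M (v b))).trace.re
        = ∑ w : k → W, if q ∘ w = v then (∏ b, p (w b)) * ∑ r ∈ s v, c v r ^ t *
            (r * tensorFam (fun b => M (w b))).trace.re else 0 := by
      intro v
      simp only [h1, Finset.mul_sum]
      rw [Finset.sum_comm]
      refine Finset.sum_congr rfl fun w _ => ?_
      split_ifs with h
      · refine Finset.sum_congr rfl fun r _ => ?_
        ring
      · simp
    simp only [h2]
    rw [Finset.sum_comm]
    refine Finset.sum_congr rfl fun w _ => ?_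
    rw [Finset.sum_ite_eq]
    simp only [Finset.mem_univ, if_true]
    rw [mpow_tensorFam (fun b => hR (w b))]
  rw [e1]
  have e2 : ∀ v : k → V,
      ∑ r ∈ s v, c v r ^ t * (r * tensorFam (fun b => Kf q p M (v b))).trace.re
      ≤ L ^ t * ∏ b, (mpow (Kf q p M (v b)) (1 / (1 - t))).trace.re ^ (1 - t) := by
    intro v
    have h := holder_op (hs v).1 (hs v).2 (hc v) (tensorFam_psd fun b => hKp (v b)) ht0 ht1
    refine h.trans ?_
    rw [mpow_tensorFam (fun b => hKp (v b)), trace_tensor_re (fun b => mpow_psd (hKp (v b)) _),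
      ← Real.finsetProd_rpow _ _ (fun b _ => psd_trace_re (mpow_psd (hKp (v b)) _)), mul_comm]
    apply mul_le_mul_of_nonneg_right
    · apply Real.rpow_le_rpow _ (hL v) ht0.le
      exact Finset.sum_nonneg fun r hr => mul_nonneg (hc v r hr).le (psd_trace_re ((hs v).1 r hr))
    · exact Finset.prod_nonneg fun b _ => Real.rpow_nonneg (psd_trace_re (mpow_psd (hKp (v b)) _)) _
  refine (Finset.sum_le_sum fun v _ => e2 v).trans_eq ?_
  rw [← Finset.mul_sum, ← Finset.card_univ, ← Finset.prod_const, Finset.prod_univ_sum,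
    Fintype.piFinset_univ]

lemma density_mix {S : Type*} [Fintype S] {Q : S → ℝ} (h0 : ∀ a, 0 ≤ Q a) (h1 : ∑ a, Q a = 1)
    {R : S → Matrix D D ℂ} (hR : ∀ a, IsDensity (R a)) : IsDensity (∑ a, Q a • R a) := by
  refine ⟨Matrix.posSemidef_sum _ fun a _ => psd_rsmul (hR a).1 (h0 a), ?_⟩
  rw [Matrix.trace_sum]
  simp only [Matrix.trace_smul, (hR _).2]
  rw [← Finset.sum_smul, h1, one_smul]

theorem exists_test.{u} [Nonempty D] [Nonempty k] (q : W → V) {n : ℕ} (hk : Fintype.card k = n)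
    {K1 K2 : ℝ} (hK1 : 0 < K1) (hK2 : 0 < K2) :
    ∃ T : (k → W) → Matrix (k → D) (k → D) ℂ,
      (∀ w, (T w).PosSemidef) ∧ (∀ w, (1 - T w).PosSemidef) ∧
      ∀ p : W → ℝ, (∀ a, 0 ≤ p a) → ∑ a, p a = 1 →
      (∀ σ : (k → V) → Matrix (k → D) (k → D) ℂ, (∀ v, IsDensity (σ v)) →
        ∑ w : k → W, (∏ b, p (w b)) * (T w * σ (q ∘ w)).trace.re
          ≤ Vol n (Fintype.card D) (Fintype.card W) / K1) ∧
      (∀ σ : Matrix (k → D) (k → D) ℂ, IsDensity σ →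
        ∑ w : k → W, (∏ b, p (w b)) * (T w * σ).trace.re
          ≤ Vol n (Fintype.card D) (Fintype.card W) / K2) ∧
      (∀ (S : Type u) [Fintype S] [DecidableEq S] [Nonempty S] (R : W → S → Matrix D D ℂ),
        (∀ a s, IsDensity (R a s)) → ∀ (s : k → S) (t : ℝ), 0 < t → t < 1 →
        ∑ w : k → W, (∏ b, p (w b)) * ((1 - T w) * tensorFam (fun b => R (w b) (s b))).trace.re
          ≤ ((n : ℝ) + 1) ^ (Fintype.card S - 1) *
            (K1 ^ t * (Vol n (Fintype.card D) (Fintype.card V) ^ t *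
              (∑ v, (mpow (Kf q p (fun a => mpow (∑ i, typ s i • R a i) (1 - t)) v)
                (1 / (1 - t))).trace.re ^ (1 - t)) ^ n) +
            K2 ^ t * (Vol n (Fintype.card D) 1 ^ t *
              ((mpow (∑ a, p a • mpow (∑ i, typ s i • R a i) (1 - t))
                (1 / (1 - t))).trace.re ^ (1 - t)) ^ n))) := by
  subst hk
  choose s1 c1 hs1 hc1 hb1 hv1 using fun w : k → W => exists_univ (D := D) _ rfl w
  choose s2 c2 hs2 hc2 hb2 hv2 using fun w : k → V => exists_univ (D := D) _ rfl w
  choose s3 c3 hs3 hc3 hb3 hv3 using fun w : k → Unit => exists_univ (D := D) _ rfl w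
  set u : W → Unit := fun _ => () with hu
  have h12 : ∀ w : k → W, Com (s1 w) (s2 (q ∘ w)) := fun w a ha b hb =>
    (((hs1 w).1 a ha).1.2 b (invAlg_comp w q ((hs2 _).1 b hb).1.1)).symm
  have h13 : ∀ w : k → W, Com (s1 w) (s3 (u ∘ w)) := fun w a ha b hb =>
    (((hs1 w).1 a ha).1.2 b (invAlg_comp w u ((hs3 _).1 b hb).1.1)).symm
  have h23 : ∀ w : k → W, Com (s2 (q ∘ w)) (s3 (u ∘ w)) := fun w a ha b hb =>
    (((hs2 (q ∘ w)).1 a ha).1.2 b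
      (invAlg_comp (q ∘ w) (fun _ : V => ()) ((hs3 _).1 b hb).1.1)).symm
  set T0 : (k → W) → Matrix (k → D) (k → D) ℂ := fun w =>
    tri (s1 w) (s2 (q ∘ w)) (s3 (u ∘ w)) (triW (c1 w) (c2 (q ∘ w)) (c3 (u ∘ w)) K1 K2) with hT0
  have hT0p : ∀ w, (T0 w).PosSemidef := by
    intro w
    refine tri_psd (hs1 w).res (hs2 _).res (hs3 _).res (h12 w) (h13 w) (h23 w) ?_
    intro a ha b hb d hd
    exact wt_nonneg (hc1 w a ha) (mul_pos hK1 (hc2 _ b hb)) (mul_pos hK2 (hc3 _ d hd))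
  have hT0q : ∀ w, (1 - T0 w).PosSemidef := by
    intro w
    simp only [hT0]
    rw [one_sub_tri (hs1 w).res (hs2 _).res (hs3 _).res]
    refine tri_psd (hs1 w).res (hs2 _).res (hs3 _).res (h12 w) (h13 w) (h23 w) ?_
    intro a ha b hb d hd
    exact sub_nonneg.2 (wt_le_one (hc1 w a ha) (mul_pos hK1 (hc2 _ b hb)) (mul_pos hK2 (hc3 _ d hd)))
  have h1T : ∀ w, 1 - symF T0 w = symF (fun w => 1 - T0 w) w := by
    intro w
    rw [symF_sub, symF_one]
  refine ⟨symF T0, symF_psd hT0p, fun w => by rw [h1T]; exact symF_psd hT0q w, ?_⟩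
  intro p hp hp1
  have hP0 : ∀ w : k → W, 0 ≤ ∏ b, p (w b) := fun w => Finset.prod_nonneg fun b _ => hp _
  have hP1 : ∑ w : k → W, ∏ b, p (w b) = 1 := by
    have := Finset.prod_univ_sum (fun _ : k => (Finset.univ : Finset W)) (fun _ a => p a)
    rw [Fintype.piFinset_univ] at this
    rw [← this, hp1]; simp
  have hPs : ∀ (w : k → W) (π : Equiv.Perm k), ∏ b, p ((w ∘ π) b) = ∏ b, p (w b) := fun w π =>
    Equiv.prod_comp π (fun b => p (w b))
  have havg : ∀ (f : (k → W) → ℝ) (C : ℝ), (∀ w, f w ≤ C) → ∑ w, (∏ b, p (w b)) * f w ≤ C := by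
    intro f C hf
    calc ∑ w, (∏ b, p (w b)) * f w ≤ ∑ w : k → W, (∏ b, p (w b)) * C :=
          Finset.sum_le_sum fun w _ => mul_le_mul_of_nonneg_left (hf w) (hP0 w)
      _ = C := by rw [← Finset.sum_mul, hP1, one_mul]
  refine ⟨?_, ?_, ?_⟩
  · intro σ hσ
    rw [sym_swap (P := fun w : k → W => ∏ b, p (w b)) hPs T0 (fun w => σ (q ∘ w))]
    apply havg
    intro w
    rw [symF_comp]
    have hd := symF_density hσ (q ∘ w)
    refine (tri_upper1 (hs1 w).res (hs2 _).res (hs3 _).res (h12 w) (h13 w) (h23 w) (hc1 w) (hc2 _)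
      (hc3 _) hK1 hK2 hd.1 (fun r hr => hb2 _ r hr _ (symF_mem σ _) hd)).trans ?_
    exact div_le_div_of_nonneg_right (hv1 w) hK1.le
  · intro σ hσ
    have := sym_swap (P := fun w : k → W => ∏ b, p (w b)) hPs T0 (fun w => (fun _ : k → Unit => σ) (u ∘ w))
    simp only at this
    rw [this]
    apply havg
    intro w
    have e : symF (fun _ : k → W => σ) w = symF (fun _ : k → Unit => σ) (u ∘ w) := rfl
    rw [e]
    have hd := symF_density (fun _ : k → Unit => hσ) (u ∘ w)
    refine (tri_upper2 (hs1 w).res (hs2 _).res (hs3 _).res (h12 w) (h13 w) (h23 w) (hc1 w) (hc2 _)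
      (hc3 _) hK1 hK2 hd.1 (fun r hr => hb3 _ r hr _ (symF_mem _ _) hd)).trans ?_
    exact div_le_div_of_nonneg_right (hv1 w) hK2.le
  · intro S _ _ _ R hR s t ht0 ht1
    simp only [h1T]
    rw [sym_swap (P := fun w : k → W => ∏ b, p (w b)) hPs (fun w => 1 - T0 w) (fun w => tensorFam (fun b => R (w b) (s b)))]
    set RQ : W → Matrix D D ℂ := fun a => ∑ i, typ s i • R a i with hRQ
    have hRQd : ∀ a, IsDensity (RQ a) := fun a => density_mix (typ_nonneg s) (typ_sum s) (hR a)
    set C : ℝ := ((Fintype.card k : ℝ) + 1) ^ (Fintype.card S - 1) with hC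
    have hC0 : 0 ≤ C := by positivity
    have hsym : ∀ w : k → W, symF (fun w => tensorFam (fun b => R (w b) (s b))) w
        = ((Fintype.card k)! : ℝ)⁻¹ • ∑ π : Equiv.Perm k,
          tensorFam (fun b => R (w b) (s (π.symm b))) := by
      intro w
      unfold symF
      congr 1
      refine Finset.sum_congr rfl fun π _ => ?_
      rw [permM_tensorFam]
      simp
    have step : ∀ w : k → W, ((1 - T0 w) * symF (fun w => tensorFam (fun b => R (w b) (s b))) w).trace.re
        ≤ C * (K1 ^ t * ∑ r ∈ s2 (q ∘ w), c2 (q ∘ w) r ^ t *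
              (r * mpow (tensorFam fun b => RQ (w b)) (1 - t)).trace.re
            + K2 ^ t * ∑ r ∈ s3 (u ∘ w), c3 (u ∘ w) r ^ t *
              (r * mpow (tensorFam fun b => RQ (w b)) (1 - t)).trace.re) := by
      intro w
      rw [hsym]
      have h1 := trace_mul_re_mono (hT0q w) (type_lemma s (R := fun b i => R (w b) i)
        (fun b i => (hR _ _).1))
      refine h1.trans ?_
      rw [Matrix.mul_smul, Matrix.trace_smul, Complex.smul_re, smul_eq_mul]
      apply mul_le_mul_of_nonneg_left _ hC0
      have hd : IsDensity (tensorFam fun b => RQ (w b)) := tensorFam_density fun b => hRQd (w b)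
      exact tri_lower (hs1 w).res (hs2 _).res (hs3 _).res (h12 w) (h13 w) (h23 w) (hc1 w) (hc2 _)
        (hc3 _) hK1 hK2 hd.1 (fun r hr => hb1 w r hr _ (tensorFam_mem w RQ) hd) ht0 ht1
    have r2 := regroup q hp (fun a => (hRQd a).1) s2 c2 (fun v => (hs2 v).res) hc2 hv2 ht0 ht1
    have r3 := regroup u hp (fun a => (hRQd a).1) s3 c3 (fun v => (hs3 v).res) hc3 hv3 ht0 ht1
    have eU : ∑ v : Unit, (mpow (Kf u p (fun a => mpow (RQ a) (1 - t)) v) (1 / (1 - t))).trace.re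
          ^ (1 - t) = (mpow (∑ a, p a • mpow (RQ a) (1 - t)) (1 / (1 - t))).trace.re ^ (1 - t) := by
      simp [Kf]
    rw [eU, Fintype.card_unit] at r3
    calc _ ≤ ∑ w : k → W, (∏ b, p (w b)) * (C * (K1 ^ t * ∑ r ∈ s2 (q ∘ w), c2 (q ∘ w) r ^ t *
              (r * mpow (tensorFam fun b => RQ (w b)) (1 - t)).trace.re
            + K2 ^ t * ∑ r ∈ s3 (u ∘ w), c3 (u ∘ w) r ^ t *
              (r * mpow (tensorFam fun b => RQ (w b)) (1 - t)).trace.re)) :=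
          Finset.sum_le_sum fun w _ => mul_le_mul_of_nonneg_left (step w) (hP0 w)
      _ = C * (K1 ^ t * (∑ w : k → W, (∏ b, p (w b)) * ∑ r ∈ s2 (q ∘ w), c2 (q ∘ w) r ^ t *
              (r * mpow (tensorFam fun b => RQ (w b)) (1 - t)).trace.re)
            + K2 ^ t * (∑ w : k → W, (∏ b, p (w b)) * ∑ r ∈ s3 (u ∘ w), c3 (u ∘ w) r ^ t *
              (r * mpow (tensorFam fun b => RQ (w b)) (1 - t)).trace.re)) := by
          rw [Finset.mul_sum (a := K1 ^ t), Finset.mul_sum (a := K2 ^ t), ← Finset.sum_add_distrib,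
            Finset.mul_sum]
          refine Finset.sum_congr rfl fun w _ => ?_
          ring
      _ ≤ _ := by
          apply mul_le_mul_of_nonneg_left _ hC0
          exact add_le_add (mul_le_mul_of_nonneg_left r2 (Real.rpow_nonneg hK1.le _))
            (mul_le_mul_of_nonneg_left r3 (Real.rpow_nonneg hK2.le _))

end gen

section num
set_option linter.unusedSectionVars false

lemma choose_le_pow' (n m : ℕ) : (n + m).choose m ≤ (n + 1) ^ m := by
  induction m with
  | zero => simp
  | succ m ih =>
    have h := Nat.add_one_mul_choose_eq (n + m) m
    have h2 : (n + m + 1).choose (m + 1) * (m + 1) ≤ (n + 1) ^ (m + 1) * (m + 1) := by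
      calc (n + m + 1).choose (m + 1) * (m + 1) = (n + m + 1) * (n + m).choose m := h.symm
        _ ≤ ((n + 1) * (m + 1)) * (n + 1) ^ m := Nat.mul_le_mul (by nlinarith) ih
        _ = _ := by ring
    exact Nat.le_of_mul_le_mul_right h2 (Nat.succ_pos m)

lemma choose_le_pow2 (n m : ℕ) (hn : 2 ≤ n) : (n + (m + 1)).choose (m + 1) ≤ (n + 1) * n ^ m := by
  induction m with
  | zero => simp
  | succ m ih =>
    have h := Nat.add_one_mul_choose_eq (n + (m + 1)) (m + 1)
    have h2 : (n + (m + 1) + 1).choose (m + 1 + 1) * (m + 1 + 1)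
        ≤ ((n + 1) * n ^ (m + 1)) * (m + 1 + 1) := by
      calc (n + (m + 1) + 1).choose (m + 1 + 1) * (m + 1 + 1)
          = (n + (m + 1) + 1) * (n + (m + 1)).choose (m + 1) := h.symm
        _ ≤ (n * (m + 1 + 1)) * ((n + 1) * n ^ m) := Nat.mul_le_mul (by nlinarith) ih
        _ = _ := by ring
    exact Nat.le_of_mul_le_mul_right h2 (Nat.succ_pos _)

lemma sq_le_two_pow (e a : ℕ) (ha : 2 * a = e * (e + 1)) : (e + 1) ^ 2 ≤ 2 ^ (a + e) := by
  induction e generalizing a with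
  | zero => simpa using Nat.one_le_two_pow
  | succ e ih =>
    obtain ⟨a', ha'⟩ : ∃ a', 2 * a' = e * (e + 1) := by
      obtain ⟨r, hr⟩ := Nat.even_mul_succ_self e
      exact ⟨r, by rw [hr]; ring⟩
    have h := ih a' ha'
    have e1 : a = a' + (e + 1) := by nlinarith
    have h3 : 2 ^ (a + (e + 1)) = 2 ^ (a' + e) * 2 ^ (e + 2) := by
      rw [← pow_add]; congr 1; omega
    rw [h3]
    have h4 : 4 ≤ 2 ^ (e + 2) := by
      have := Nat.one_le_two_pow (n := e)
      rw [pow_add]; omega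
    calc (e + 1 + 1) ^ 2 ≤ (e + 1) ^ 2 * 4 := by nlinarith
      _ ≤ _ := Nat.mul_le_mul h h4

lemma choose_star (n e a : ℕ) (hn : 1 ≤ n) (ha : 2 * a = e * (e + 1)) :
    ((e + 1) * (e + 1) + n - 1).choose n ≤ n ^ a * (n + 1) ^ (a + e) := by
  have hidx : (e + 1) * (e + 1) + n - 1 = n + (a + (a + e)) := by
    have : (e + 1) * (e + 1) = 2 * a + e + 1 := by rw [ha]; ring
    omega
  rw [hidx]
  have hs : (n + (a + (a + e))).choose n = (n + (a + (a + e))).choose (a + (a + e)) :=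
    (Nat.choose_symm_add).trans (by rfl)
  rcases Nat.lt_or_ge n 2 with h | h
  · obtain rfl : n = 1 := by omega
    have := sq_le_two_pow e a ha
    simp only [Nat.choose_one_right, one_pow, one_mul]
    have : 1 + (a + (a + e)) = (e + 1) ^ 2 := by nlinarith
    rw [this]; assumption
  · rw [hs]
    rcases Nat.eq_zero_or_pos e with he | he
    · subst he
      have : a = 0 := by omega
      subst this; simp
    · obtain ⟨f, rfl⟩ : ∃ f, e = f + 1 := ⟨e - 1, by omega⟩
      have h2 := choose_le_pow2 n (a + (a + f)) h
      have : a + (a + (f + 1)) = a + (a + f) + 1 := by ring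
      rw [this]
      refine h2.trans ?_
      calc (n + 1) * n ^ (a + (a + f)) = n ^ a * ((n + 1) * n ^ (a + f)) := by rw [pow_add n a]; ring
        _ ≤ n ^ a * ((n + 1) * (n + 1) ^ (a + f)) := by gcongr; omega
        _ = _ := by ring

lemma numPartLe_pos (n d : ℕ) (hd : 1 ≤ d) : 0 < numPartLe n d := by
  unfold numPartLe
  have : Nonempty {p : Nat.Partition n // p.parts.card ≤ d} := by
    refine ⟨⟨Nat.Partition.indiscrete n, ?_⟩⟩
    rcases Nat.eq_zero_or_pos n with h | h
    · subst h; simp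
    · rw [Nat.Partition.indiscrete_parts (by omega)]; simpa using hd
  exact Nat.card_pos

lemma gFac_pos (n c d : ℕ) (hn : 1 ≤ n) (hd : 1 ≤ d) : 0 < gFac n c d := by
  unfold gFac
  have := numPartLe_pos n d hd
  have h : (0 : ℝ) < n := by exact_mod_cast hn
  have h2 : (0 : ℝ) < numPartLe n d := by exact_mod_cast this
  positivity

lemma vol_pow (n d c : ℕ) : Vol n d c = Vol n d 1 ^ c := by
  unfold Vol
  rw [pow_one]
  induction c with
  | zero => simp
  | succ c ih => rw [pow_succ, Real.sqrt_mul (by positivity), ih, pow_succ]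

lemma vol_pos (n d c : ℕ) (hd : 1 ≤ d) : 0 < Vol n d c := by
  unfold Vol
  have h1 := numPartLe_pos n d hd
  have h2 : 0 < (d * d + n - 1).choose n := Nat.choose_pos (by nlinarith [Nat.sub_add_cancel (show 1 ≤ d * d + n by nlinarith)])
  have : 0 < numPartLe n d * (d * d + n - 1).choose n := Nat.mul_pos h1 h2
  have h3 : (0 : ℝ) < ((numPartLe n d * (d * d + n - 1).choose n : ℕ) : ℝ) := by exact_mod_cast this
  positivity

/-- exponent of the polynomial factor -/
def dl (e : ℕ) : ℕ := e * (e + 1) / 2 + e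

lemma vol_gFac (n e N c : ℕ) (hn : 1 ≤ n) (hc : c ≤ N) :
    Vol n (e + 1) N * Vol n (e + 1) c
      ≤ gFac n c (e + 1) * (((n : ℝ) + 1) ^ dl e) ^ N := by
  obtain ⟨a, ha⟩ : ∃ a, 2 * a = e * (e + 1) := by
    obtain ⟨r, hr⟩ := Nat.even_mul_succ_self e
    exact ⟨r, by rw [hr]; ring⟩
  have hdl : dl e = a + e := by unfold dl; rw [← ha]; simp
  rw [hdl]
  set v := Vol n (e + 1) 1 with hv
  have hv0 : 0 < v := vol_pos n (e + 1) 1 (by omega)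
  have hvv : v ^ 2 = (numPartLe n (e + 1) : ℝ) * (((e + 1) * (e + 1) + n - 1).choose n : ℝ) := by
    rw [hv]; unfold Vol
    rw [pow_one, Real.sq_sqrt (by positivity)]; push_cast; rfl
  set E : ℝ := ((n : ℝ) + 1) ^ (a + e) with hE
  have hE0 : 0 < E := by positivity
  have hA := numPartLe_le n (e + 1) (by omega)
  have h1 : v ≤ E := by
    apply le_of_sq_le_sq _ hE0.le
    rw [hvv]
    have hB : ((e + 1) * (e + 1) + n - 1).choose n ≤ (n + 1) ^ (a + (a + e)) := by
      have hidx : (e + 1) * (e + 1) + n - 1 = n + (a + (a + e)) := by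
        have : (e + 1) * (e + 1) = 2 * a + e + 1 := by rw [ha]; ring
        omega
      rw [hidx]
      rw [Nat.choose_symm_add]
      exact choose_le_pow' n _
    have := Nat.mul_le_mul hA hB
    have h2 : (n + 1) ^ (e + 1 - 1) * (n + 1) ^ (a + (a + e)) = ((n + 1) ^ (a + e)) ^ 2 := by
      rw [← pow_add, ← pow_mul]; congr 1; simp only [Nat.add_sub_cancel]; ring
    rw [h2] at this
    rw [hE]
    exact_mod_cast this
  set h : ℝ := (n : ℝ) ^ a * numPartLe n (e + 1) with hh
  have h2 : v ^ 2 ≤ h * E := by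
    rw [hvv]
    have hB : ((((e + 1) * (e + 1) + n - 1).choose n : ℕ) : ℝ) ≤ (n : ℝ) ^ a * ((n : ℝ) + 1) ^ (a + e) := by
      exact_mod_cast choose_star n e a hn ha
    calc _ ≤ (numPartLe n (e + 1) : ℝ) * ((n : ℝ) ^ a * ((n : ℝ) + 1) ^ (a + e)) := by gcongr
      _ = h * E := by rw [hh, hE]; ring
  have hg : gFac n c (e + 1) = h ^ c := by
    unfold gFac
    have : (2 : ℝ) * a = e * (e + 1) := by exact_mod_cast ha
    have hx : (c : ℝ) * ((e + 1 : ℕ) : ℝ) * (((e + 1 : ℕ) : ℝ) - 1) / 2 = ((a * c : ℕ) : ℝ) := by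
      push_cast
      linear_combination (-(c : ℝ) / 2) * this
    rw [hh, mul_pow, ← pow_mul, hx, Real.rpow_natCast]
  rw [hg, vol_pow n (e + 1) N, vol_pow n (e + 1) c, ← hv]
  obtain ⟨M, rfl⟩ := Nat.exists_eq_add_of_le hc
  calc v ^ (c + M) * v ^ c = v ^ M * (v ^ 2) ^ c := by rw [← pow_mul]; ring
    _ ≤ E ^ M * (h * E) ^ c := by gcongr
    _ = _ := by rw [mul_pow, pow_add]; ring

lemma fFac_eq (n S x y e : ℕ) (hS : 1 ≤ S) (t : ℝ) :
    fFac n S x y (e + 1) t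
      = ((n : ℝ) + 1) ^ (S - 1) * ((((n : ℝ) + 1) ^ dl e) ^ (x * y)) ^ t := by
  unfold fFac
  have h0 : (0 : ℝ) < (n : ℝ) + 1 := by positivity
  rw [← Real.rpow_natCast _ (S - 1), ← pow_mul, ← Real.rpow_natCast _ (dl e * (x * y)),
    ← Real.rpow_mul h0.le, ← Real.rpow_add h0]
  congr 1
  have h1 : (dl e : ℝ) = e * (e + 1) / 2 + e := by
    unfold dl
    rw [Nat.cast_add, Nat.cast_div (Nat.even_mul_succ_self e).two_dvd (by norm_num)]
    push_cast; ring
  push_cast [Nat.cast_sub hS]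
  rw [h1]; ring

end num

section ren
open scoped Matrix
set_option linter.unusedSectionVars false
variable {D : Type*} [Fintype D] [DecidableEq D]

lemma specForm_rsmul (U : Matrix D D ℂ) (a : D → ℝ) (c : ℝ) :
    c • specForm U a = specForm U (fun i => c * a i) := by
  unfold specForm
  rw [← Matrix.smul_mul, ← Matrix.mul_smul]
  congr 2
  ext i j
  by_cases h : i = j
  · subst h; simp
  · simp [h]

lemma mpow_smul_trace {K : Matrix D D ℂ} (hK : K.PosSemidef) {c : ℝ} (hc : 0 ≤ c) {r : ℝ}
    (hr : 0 < r) : (mpow (c • K) r).trace.re = c ^ r * (mpow K r).trace.re := by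
  obtain ⟨U, hU, a, ha, rfl⟩ := exists_specForm_nonneg hK
  rw [specForm_rsmul, mpow_specForm hU, mpow_specForm hU, specForm_trace hU, specForm_trace hU,
    Complex.ofReal_re, Complex.ofReal_re, Finset.mul_sum]
  refine Finset.sum_congr rfl fun i _ => ?_
  have h : ∀ u : ℝ, 0 ≤ u → supPow r u = u ^ r := by
    intro u hu
    unfold supPow
    split_ifs with h
    · rw [le_antisymm h hu, Real.zero_rpow hr.ne']
    · rfl
  rw [h _ (mul_nonneg hc (ha i)), h _ (ha i), Real.mul_rpow hc (ha i)]

lemma one_sub_specForm {U : Matrix D D ℂ} (hU : U ∈ Matrix.unitaryGroup D ℂ) (a : D → ℝ) :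
    1 - specForm U a = specForm U (fun i => 1 - a i) := by
  unfold specForm
  have : Matrix.diagonal (fun i => ((1 - a i : ℝ) : ℂ))
      = 1 - Matrix.diagonal (fun i => (a i : ℂ)) := by
    ext i j
    by_cases h : i = j
    · subst h; simp
    · simp [h]
  rw [this, mul_sub, sub_mul, mul_one, unit_right hU]

lemma supPow_le_one {p u : ℝ} (hp : 0 < p) (hu : u ≤ 1) : supPow p u ≤ 1 := by
  unfold supPow
  split_ifs with h
  · exact zero_le_one
  · exact Real.rpow_le_one (not_le.1 h).le hu hp.le

lemma mpow_le_one {A : Matrix D D ℂ} (hA : IsDensity A) {p : ℝ} (hp : 0 < p) :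
    (1 - mpow A p).PosSemidef := by
  obtain ⟨U, hU, a, ha, rfl⟩ := exists_specForm_nonneg hA.1
  have h1 := hA.2
  rw [specForm_trace hU] at h1
  have h2 : ∑ i, a i = 1 := by exact_mod_cast h1
  rw [mpow_specForm hU, one_sub_specForm hU]
  refine specForm_posSemidef _ fun i => sub_nonneg.2 (supPow_le_one hp ?_)
  rw [← h2]
  exact Finset.single_le_sum (fun j _ => ha j) (Finset.mem_univ i)

lemma mix_le_one {W : Type*} [Fintype W] {p : W → ℝ} (hp : ∀ a, 0 ≤ p a) (hp1 : ∑ a, p a = 1)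
    {M : W → Matrix D D ℂ} (hM : ∀ a, (1 - M a).PosSemidef) : (1 - ∑ a, p a • M a).PosSemidef := by
  have : 1 - ∑ a, p a • M a = ∑ a, p a • (1 - M a) := by
    simp only [smul_sub, Finset.sum_sub_distrib]
    rw [← Finset.sum_smul, hp1, one_smul]
  rw [this]
  exact Matrix.posSemidef_sum _ fun a _ => psd_rsmul (hM a) (hp a)

lemma trace_mpow_le {K : Matrix D D ℂ} (hK : K.PosSemidef) (hK1 : (1 - K).PosSemidef) {r : ℝ}
    (hr : 0 < r) : (mpow K r).trace.re ≤ Fintype.card D := by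
  obtain ⟨U, hU, a, ha, rfl⟩ := exists_specForm_nonneg hK
  rw [mpow_specForm hU, specForm_trace hU, Complex.ofReal_re]
  have h : ∀ i, a i ≤ 1 := by
    intro i
    have h1 := conj_diag_nonneg hK1 U i
    rw [one_sub_specForm hU] at h1
    have h2 : star U * specForm U (fun i => 1 - a i) * U
        = Matrix.diagonal (fun i => ((1 - a i : ℝ) : ℂ)) := by
      unfold specForm
      simp only [Matrix.mul_assoc, unit_left hU, Matrix.mul_one]
      rw [← Matrix.mul_assoc, unit_left hU, Matrix.one_mul]
    rw [h2, Matrix.diagonal_apply_eq, Complex.ofReal_re] at h1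
    linarith
  calc _ ≤ ∑ _i : D, (1 : ℝ) := Finset.sum_le_sum fun i _ => supPow_le_one hr (h i)
    _ = _ := by simp

/-- scalar form of the Renyi quantities -/
def ren (t S : ℝ) : ℝ := -((1 - t) / t) * Real.logb 2 S

lemma ren_lower {t S : ℝ} (ht0 : 0 < t) (ht1 : t < 1) {d : ℕ} (hd : 1 ≤ d) (hS0 : 0 ≤ S) (hS : S ≤ d) :
    -((1 - t) / t) * Real.logb 2 d ≤ ren t S := by
  unfold ren
  have h1 : (1 : ℝ) ≤ d := by exact_mod_cast hd
  have h : Real.logb 2 S ≤ Real.logb 2 d := by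
    rcases hS0.eq_or_lt with h | h
    · rw [← h, Real.logb_zero]
      exact Real.logb_nonneg (by norm_num) h1
    · exact Real.logb_le_logb_of_le (by norm_num) h hS
  have h2 : 0 ≤ (1 - t) / t := div_nonneg (by linarith) ht0.le
  nlinarith

lemma pow_ren {t S : ℝ} (ht0 : 0 < t) (ht1 : t < 1) (hS0 : 0 ≤ S) :
    S ^ (1 - t) ≤ (2 : ℝ) ^ (-(t * ren t S)) := by
  have e : -(t * ren t S) = Real.logb 2 S * (1 - t) := by
    unfold ren; field_simp
  rw [e]
  rcases hS0.eq_or_lt with h | h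
  · rw [← h, Real.zero_rpow (by linarith)]; positivity
  · rw [Real.rpow_mul (by norm_num), Real.rpow_logb (by norm_num) (by norm_num) h]

lemma conc_sum {V : Type*} [Fintype V] {p z : V → ℝ} (hp : ∀ v, 0 ≤ p v) (hp1 : ∑ v, p v = 1)
    (hz : ∀ v, 0 ≤ z v) {t : ℝ} (ht0 : 0 < t) (ht1 : t < 1) :
    ∑ v, p v * z v ^ (1 - t) ≤ (∑ v, p v * z v) ^ (1 - t) := by
  have h := (Real.concaveOn_rpow (p := 1 - t) (by linarith) (by linarith)).le_map_sum
    (t := Finset.univ) (w := p) (p := z) (fun v _ => hp v) hp1 (fun v _ => hz v)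
  simpa [smul_eq_mul] using h

/-- bound of the fibre sum by the Renyi exponent -/
lemma fib_bound {V : Type*} [Fintype V] {p : V → ℝ} (hp : ∀ v, 0 ≤ p v)
    (hp1 : ∑ v, p v = 1) {K : V → Matrix D D ℂ} (hK : ∀ v, (K v).PosSemidef)
    {t : ℝ} (ht0 : 0 < t) (ht1 : t < 1) (n : ℕ) {I : ℝ}
    (hI : I ≤ ren t (∑ v, p v * (mpow (K v) (1 / (1 - t))).trace.re)) :
    (∑ v, (mpow (p v • K v) (1 / (1 - t))).trace.re ^ (1 - t)) ^ n
      ≤ (2 : ℝ) ^ (-((n : ℝ) * t * I)) := by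
  have h1t : 0 < 1 - t := by linarith
  have hz : ∀ v, 0 ≤ (mpow (K v) (1 / (1 - t))).trace.re := fun v => psd_trace_re (mpow_psd (hK v) _)
  have h1 : ∑ v, (mpow (p v • K v) (1 / (1 - t))).trace.re ^ (1 - t)
      = ∑ v, p v * (mpow (K v) (1 / (1 - t))).trace.re ^ (1 - t) := by
    refine Finset.sum_congr rfl fun v _ => ?_
    rw [mpow_smul_trace (hK v) (hp v) (by positivity),
      Real.mul_rpow (Real.rpow_nonneg (hp v) _) (hz v), ← Real.rpow_mul (hp v),
      one_div_mul_cancel h1t.ne', Real.rpow_one]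
  have hS0 : 0 ≤ ∑ v, p v * (mpow (K v) (1 / (1 - t))).trace.re :=
    Finset.sum_nonneg fun v _ => mul_nonneg (hp v) (hz v)
  rw [h1]
  have h2 := (conc_sum hp hp1 hz ht0 ht1).trans (pow_ren ht0 ht1 hS0)
  have h3 : (2 : ℝ) ^ (-(t * ren t (∑ v, p v * (mpow (K v) (1 / (1 - t))).trace.re)))
      ≤ (2 : ℝ) ^ (-(t * I)) := by
    apply Real.rpow_le_rpow_of_exponent_le (by norm_num)
    nlinarith
  calc _ ≤ ((2 : ℝ) ^ (-(t * I))) ^ n := by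
        apply pow_le_pow_left₀ _ (h2.trans h3)
        exact Finset.sum_nonneg fun v _ => mul_nonneg (hp v) (Real.rpow_nonneg (hz v) _)
    _ = _ := by
        rw [← Real.rpow_natCast, ← Real.rpow_mul (by norm_num)]
        congr 1; ring

lemma single_bound {K : Matrix D D ℂ} (hK : K.PosSemidef)
    {t : ℝ} (ht0 : 0 < t) (ht1 : t < 1) (n : ℕ) {I : ℝ}
    (hI : I ≤ ren t (mpow K (1 / (1 - t))).trace.re) :
    ((mpow K (1 / (1 - t))).trace.re ^ (1 - t)) ^ n ≤ (2 : ℝ) ^ (-((n : ℝ) * t * I)) := by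
  have hS0 : 0 ≤ (mpow K (1 / (1 - t))).trace.re := psd_trace_re (mpow_psd hK _)
  have h2 := pow_ren ht0 ht1 hS0
  have h3 : (2 : ℝ) ^ (-(t * ren t (mpow K (1 / (1 - t))).trace.re))
      ≤ (2 : ℝ) ^ (-(t * I)) := by
    apply Real.rpow_le_rpow_of_exponent_le (by norm_num)
    nlinarith
  calc _ ≤ ((2 : ℝ) ^ (-(t * I))) ^ n :=
        pow_le_pow_left₀ (Real.rpow_nonneg hS0 _) (h2.trans h3) _
    _ = _ := by
        rw [← Real.rpow_natCast, ← Real.rpow_mul (by norm_num)]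
        congr 1; ring

end ren

section fin1
open scoped Matrix
set_option linter.unusedSectionVars false
variable {𝒳 𝒴 : Type*} [Fintype 𝒳] [DecidableEq 𝒳] [Fintype 𝒴] [DecidableEq 𝒴]

lemma renyiXgY_eq {d : ℕ} (PX : 𝒳 → ℝ) (PY : 𝒴 → ℝ)
    (ρQ : 𝒳 → 𝒴 → Matrix (Fin d) (Fin d) ℂ) (t : ℝ) :
    renyiXgY PX PY ρQ t = ren t (∑ y, PY y *
      (mpow (∑ x, PX x • mpow (ρQ x y) (1 - t)) (1 / (1 - t))).trace.re) := rfl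

lemma renyiXY_eq {d : ℕ} (PX : 𝒳 → ℝ) (PY : 𝒴 → ℝ)
    (ρQ : 𝒳 → 𝒴 → Matrix (Fin d) (Fin d) ℂ) (t : ℝ) :
    renyiXY PX PY ρQ t = ren t (mpow (∑ a : 𝒳 × 𝒴, (PX a.1 * PY a.2) • mpow (ρQ a.1 a.2) (1 - t))
      (1 / (1 - t))).trace.re := by
  rw [Fintype.sum_prod_type]; rfl

lemma sum_prod_one {PX : 𝒳 → ℝ} {PY : 𝒴 → ℝ} (hX : ∑ x, PX x = 1) (hY : ∑ y, PY y = 1) :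
    ∑ a : 𝒳 × 𝒴, PX a.1 * PY a.2 = 1 := by
  rw [Fintype.sum_prod_type, ← Finset.sum_mul_sum, hX, hY, one_mul]

lemma renyiXgY_lower {d : ℕ} (hd : 1 ≤ d) {PX : 𝒳 → ℝ} {PY : 𝒴 → ℝ}
    (hX0 : ∀ x, 0 ≤ PX x) (hX : ∑ x, PX x = 1) (hY0 : ∀ x, 0 ≤ PY x) (hY : ∑ y, PY y = 1)
    {ρQ : 𝒳 → 𝒴 → Matrix (Fin d) (Fin d) ℂ} (hρ : ∀ x y, IsDensity (ρQ x y)) {t : ℝ}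
    (ht0 : 0 < t) (ht1 : t < 1) :
    -((1 - t) / t) * Real.logb 2 d ≤ renyiXgY PX PY ρQ t := by
  rw [renyiXgY_eq]
  have h1t : 0 < 1 - t := by linarith
  have hK : ∀ y, (∑ x, PX x • mpow (ρQ x y) (1 - t)).PosSemidef := fun y =>
    Matrix.posSemidef_sum _ fun x _ => psd_rsmul (mpow_psd (hρ x y).1 _) (hX0 x)
  refine ren_lower ht0 ht1 hd ?_ ?_
  · exact Finset.sum_nonneg fun y _ => mul_nonneg (hY0 y) (psd_trace_re (mpow_psd (hK y) _))
  · calc _ ≤ ∑ y, PY y * (d : ℝ) := by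
          refine Finset.sum_le_sum fun y _ => mul_le_mul_of_nonneg_left ?_ (hY0 y)
          have := trace_mpow_le (hK y) (mix_le_one hX0 hX fun x => mpow_le_one (hρ x y) h1t)
            (r := 1 / (1 - t)) (by positivity)
          simpa using this
      _ = d := by rw [← Finset.sum_mul, hY, one_mul]

lemma renyiXY_lower {d : ℕ} (hd : 1 ≤ d) {PX : 𝒳 → ℝ} {PY : 𝒴 → ℝ}
    (hX0 : ∀ x, 0 ≤ PX x) (hX : ∑ x, PX x = 1) (hY0 : ∀ x, 0 ≤ PY x) (hY : ∑ y, PY y = 1)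
    {ρQ : 𝒳 → 𝒴 → Matrix (Fin d) (Fin d) ℂ} (hρ : ∀ x y, IsDensity (ρQ x y)) {t : ℝ}
    (ht0 : 0 < t) (ht1 : t < 1) :
    -((1 - t) / t) * Real.logb 2 d ≤ renyiXY PX PY ρQ t := by
  rw [renyiXY_eq]
  have h1t : 0 < 1 - t := by linarith
  have hp : ∀ a : 𝒳 × 𝒴, 0 ≤ PX a.1 * PY a.2 := fun a => mul_nonneg (hX0 _) (hY0 _)
  have hK : (∑ a : 𝒳 × 𝒴, (PX a.1 * PY a.2) • mpow (ρQ a.1 a.2) (1 - t)).PosSemidef :=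
    Matrix.posSemidef_sum _ fun a _ => psd_rsmul (mpow_psd (hρ _ _).1 _) (hp a)
  refine ren_lower ht0 ht1 hd (psd_trace_re (mpow_psd hK _)) ?_
  have := trace_mpow_le hK (mix_le_one hp (sum_prod_one hX hY) fun a => mpow_le_one (hρ a.1 a.2) h1t)
            (r := 1 / (1 - t)) (by positivity)
  simpa using this

lemma Kf_snd {D : Type*} [Fintype D] [DecidableEq D] (PX : 𝒳 → ℝ) (PY : 𝒴 → ℝ)
    (M : 𝒳 × 𝒴 → Matrix D D ℂ) (v : 𝒴) :
    Kf (Prod.snd : 𝒳 × 𝒴 → 𝒴) (fun a => PX a.1 * PY a.2) M v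
      = PY v • ∑ x, PX x • M (x, v) := by
  unfold Kf
  rw [Fintype.sum_prod_type, Finset.smul_sum]
  refine Finset.sum_congr rfl fun x _ => ?_
  simp only [ite_smul, zero_smul, Finset.sum_ite_eq', Finset.sum_ite_eq, Finset.mem_univ, if_true]
  rw [smul_smul, mul_comm]

lemma sum_arrow {n : ℕ} (f : (Fin n → 𝒳) → (Fin n → 𝒴) → ℝ) :
    ∑ xv, ∑ yv, f xv yv = ∑ w : Fin n → 𝒳 × 𝒴, f (fun b => (w b).1) (fun b => (w b).2) := by
  rw [← Fintype.sum_prod_type' f,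
    ← Equiv.sum_comp (Equiv.arrowProdEquivProdArrow (Fin n) (fun _ => 𝒳) (fun _ => 𝒴))]
  rfl

lemma const_bound {V c g E r t : ℝ} (hV : 0 < V) (hc : 0 < c) (hg : 0 < g) (hE : 0 < E)
    (h : V * c ≤ g * E) (ht : 0 < t) {n : ℕ} {I z : ℝ} (hz : z ≤ (2 : ℝ) ^ (-((n : ℝ) * t * I))) :
    (V / g * (2 : ℝ) ^ ((n : ℝ) * r)) ^ t * (c ^ t * z)
      ≤ E ^ t * (2 : ℝ) ^ ((n : ℝ) * t * (r - I)) := by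
  have h1 : (V / g * (2 : ℝ) ^ ((n : ℝ) * r)) ^ t * c ^ t
      ≤ E ^ t * (2 : ℝ) ^ ((n : ℝ) * t * r) := by
    have e : (2 : ℝ) ^ ((n : ℝ) * t * r) = ((2 : ℝ) ^ ((n : ℝ) * r)) ^ t := by
      rw [← Real.rpow_mul (by norm_num)]; congr 1; ring
    rw [e, ← Real.mul_rpow (by positivity) (by positivity),
      ← Real.mul_rpow (by positivity) (by positivity)]
    refine Real.rpow_le_rpow (by positivity) ?_ ht.le
    have : V / g * c ≤ E := by
      rw [div_mul_eq_mul_div, div_le_iff₀ hg]; linarith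
    calc _ = (V / g * c) * (2 : ℝ) ^ ((n : ℝ) * r) := by ring
      _ ≤ _ := by gcongr
  calc _ = ((V / g * (2 : ℝ) ^ ((n : ℝ) * r)) ^ t * c ^ t) * z := by ring
    _ ≤ ((V / g * (2 : ℝ) ^ ((n : ℝ) * r)) ^ t * c ^ t) * (2 : ℝ) ^ (-((n : ℝ) * t * I)) := by
        gcongr
    _ ≤ (E ^ t * (2 : ℝ) ^ ((n : ℝ) * t * r)) * (2 : ℝ) ^ (-((n : ℝ) * t * I)) := by gcongr
    _ = _ := by
        rw [mul_assoc, ← Real.rpow_add (by norm_num)]; congr 2; ring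

end fin1

section fin2
open scoped Matrix
set_option linter.unusedSectionVars false

/-- the mixing distributions supported on `S` -/
abbrev QS {𝒮 : Type*} (S : Finset 𝒮) : Type _ :=
  {Q : 𝒮 → ℝ // (∀ s, 0 ≤ Q s) ∧ (∀ s ∉ S, Q s = 0) ∧ ∑ s ∈ S, Q s = 1}

lemma QS_density {𝒮 : Type*} {S : Finset 𝒮} (Q : QS S) {d : ℕ} {R : 𝒮 → Matrix (Fin d) (Fin d) ℂ}
    (hR : ∀ s, IsDensity (R s)) : IsDensity (∑ s ∈ S, Q.1 s • R s) := by
  rw [← Finset.sum_coe_sort S (fun s => Q.1 s • R s)]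
  refine density_mix (S := S) (Q := fun a : S => Q.1 a) (R := fun a : S => R a)
    (fun a => Q.2.1 a) ?_ fun a => hR a
  rw [Finset.sum_coe_sort S (fun s => Q.1 s)]
  exact Q.2.2.2

lemma exists_QS {𝒮 : Type*} (S : Finset 𝒮) (q : S → ℝ) (h0 : ∀ s, 0 ≤ q s) (h1 : ∑ s, q s = 1) :
    ∃ Q : QS S, ∀ s : S, Q.1 s = q s := by
  classical
  have hv : ∀ s : S, (fun s => if h : s ∈ S then q ⟨s, h⟩ else 0) (s : 𝒮) = q s := by
    intro s; simp
  refine ⟨⟨fun s => if h : s ∈ S then q ⟨s, h⟩ else 0, ?_, ?_, ?_⟩, ?_⟩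
  · intro s
    dsimp only
    split_ifs
    · exact h0 _
    · exact le_rfl
  · intro s hs; simp [hs]
  · rw [← Finset.sum_coe_sort S, ← h1]
    exact Finset.sum_congr rfl fun s _ => hv s
  · exact hv

theorem half_test {𝒳 𝒴 𝒮 : Type*} [Fintype 𝒳] [DecidableEq 𝒳] [Fintype 𝒴] [DecidableEq 𝒴]
    [Nonempty 𝒮] {e : ℕ}
    (ρ : 𝒳 → 𝒴 → 𝒮 → Matrix (Fin (e + 1)) (Fin (e + 1)) ℂ)
    (hρ : ∀ x y s, IsDensity (ρ x y s)) (n : ℕ) (hn : 1 ≤ n) (R1 Rs : ℝ) :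
    ∃ T : (Fin n → 𝒳) → (Fin n → 𝒴) →
        Matrix (Fin n → Fin (e + 1)) (Fin n → Fin (e + 1)) ℂ,
      (∀ xv yv, (T xv yv).PosSemidef) ∧ (∀ xv yv, (1 - T xv yv).PosSemidef) ∧
      ∀ PX : 𝒳 → ℝ, (∀ x, 0 ≤ PX x) → (∑ x, PX x = 1) →
      ∀ PY : 𝒴 → ℝ, (∀ y, 0 ≤ PY y) → (∑ y, PY y = 1) →
      (∀ t : ℝ, t ∈ Set.Ioo (0 : ℝ) 1 →
      ∀ ε : ℝ, 0 < ε →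
      ∀ Sε : Finset 𝒮,
        (∀ s : 𝒮, ∃ s' ∈ Sε, ∀ x y, Loewner (ρ x y s) ((1 + ε) • ρ x y s')) →
        ∀ sv : Fin n → 𝒮,
          ∑ xv, ∑ yv, (∏ k, PX (xv k)) * (∏ k, PY (yv k)) *
            ((1 - T xv yv) * tensorFam fun k => ρ (xv k) (yv k) (sv k)).trace.re ≤
            fFac n Sε.card (Fintype.card 𝒳) (Fintype.card 𝒴) (e + 1) t * (1 + ε) ^ n *
              ((2 : ℝ) ^ ((n : ℝ) * t *
                  (R1 - ⨅ Q : QS Sε,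
                    renyiXgY PX PY (fun x y => ∑ s ∈ Sε, Q.1 s • ρ x y s) t)) +
                (2 : ℝ) ^ ((n : ℝ) * t *
                  (Rs - ⨅ Q : QS Sε,
                    renyiXY PX PY (fun x y => ∑ s ∈ Sε, Q.1 s • ρ x y s) t)))) ∧
      (∀ σf : (Fin n → 𝒴) → Matrix (Fin n → Fin (e + 1)) (Fin n → Fin (e + 1)) ℂ,
          (∀ yv, IsDensity (σf yv)) →
          ∑ xv, ∑ yv, (∏ k, PX (xv k)) * (∏ k, PY (yv k)) * (T xv yv * σf yv).trace.re ≤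
            gFac n (Fintype.card 𝒴) (e + 1) * (2 : ℝ) ^ (-(n : ℝ) * R1)) ∧
      (∀ σ : Matrix (Fin n → Fin (e + 1)) (Fin n → Fin (e + 1)) ℂ, IsDensity σ →
          ∑ xv, ∑ yv, (∏ k, PX (xv k)) * (∏ k, PY (yv k)) * (T xv yv * σ).trace.re ≤
            gFac n 1 (e + 1) * (2 : ℝ) ^ (-(n : ℝ) * Rs)) := by
  classical
  have : Nonempty (Fin n) := ⟨⟨0, hn⟩⟩
  set N := Fintype.card 𝒳 * Fintype.card 𝒴 with hN
  have hVN : 0 < Vol n (e + 1) N := vol_pos _ _ _ (by omega)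
  have hg1 : 0 < gFac n (Fintype.card 𝒴) (e + 1) := gFac_pos _ _ _ hn (by omega)
  have hg2 : 0 < gFac n 1 (e + 1) := gFac_pos _ _ _ hn (by omega)
  have hK1 : 0 < Vol n (e + 1) N / gFac n (Fintype.card 𝒴) (e + 1) * (2 : ℝ) ^ ((n : ℝ) * R1) := by
    positivity
  have hK2 : 0 < Vol n (e + 1) N / gFac n 1 (e + 1) * (2 : ℝ) ^ ((n : ℝ) * Rs) := by
    positivity
  obtain ⟨T, hT0, hT1, hT⟩ := exists_test (D := Fin (e + 1)) (k := Fin n)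
    (Prod.snd : 𝒳 × 𝒴 → 𝒴) (n := n) (by simp) hK1 hK2
  refine ⟨fun xv yv => T (fun b => (xv b, yv b)), fun _ _ => hT0 _, fun _ _ => hT1 _, ?_⟩
  intro PX hX0 hX PY hY0 hY
  obtain ⟨h3, h4, h1⟩ := hT (fun a => PX a.1 * PY a.2) (fun a => mul_nonneg (hX0 _) (hY0 _))
    (sum_prod_one hX hY)
  simp only [Fintype.card_fin, Fintype.card_prod, ← hN] at h3 h4 h1
  have hsum : ∀ F : (Fin n → 𝒳) → (Fin n → 𝒴) → ℝ,
      ∑ xv, ∑ yv, (∏ k, PX (xv k)) * (∏ k, PY (yv k)) * F xv yv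
        = ∑ w : Fin n → 𝒳 × 𝒴, (∏ b, PX (w b).1 * PY (w b).2) *
            F (fun b => (w b).1) (fun b => (w b).2) := by
    intro F
    rw [sum_arrow]
    simp only [Finset.prod_mul_distrib]
  have hX1 : 1 ≤ Fintype.card 𝒳 := by
    rw [Nat.one_le_iff_ne_zero]
    intro h
    have := Fintype.card_eq_zero_iff.1 h
    simp at hX
  have hY1 : 1 ≤ Fintype.card 𝒴 := by
    rw [Nat.one_le_iff_ne_zero]
    intro h
    have := Fintype.card_eq_zero_iff.1 h
    simp at hY
  refine ⟨?_, ?_, ?_⟩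
  · intro t ht ε hε Sε hS sv
    have ht0 := ht.1
    have ht1 := ht.2
    choose g hg hgL using hS
    have : Nonempty Sε := ⟨⟨g (Classical.arbitrary 𝒮), hg _⟩⟩
    have hScard : 1 ≤ Sε.card := Finset.card_pos.2 ⟨_, hg (Classical.arbitrary 𝒮)⟩
    set s : Fin n → Sε := fun b => ⟨g (sv b), hg _⟩ with hs
    have h := h1 Sε (fun a i => ρ a.1 a.2 i) (fun a i => hρ _ _ _) s t ht0 ht1
    obtain ⟨Q, hQ⟩ := exists_QS Sε (typ s) (typ_nonneg s) (typ_sum s)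
    have hmix : ∀ x y, ∑ i : Sε, typ s i • ρ x y i = ∑ i ∈ Sε, Q.1 i • ρ x y i := by
      intro x y
      rw [← Finset.sum_coe_sort Sε (fun i => Q.1 i • ρ x y i)]
      simp only [hQ]
    simp only [hmix, Kf_snd, Fintype.card_coe] at h
    set E : ℝ := (((n : ℝ) + 1) ^ dl e) ^ N with hE
    have hE0 : 0 < E := by positivity
    have hdens : ∀ (Q : QS Sε) x y, IsDensity (∑ s ∈ Sε, Q.1 s • ρ x y s) :=
      fun Q x y => QS_density Q (hρ x y)
    have hI1 : (⨅ Q : QS Sε, renyiXgY PX PY (fun x y => ∑ s ∈ Sε, Q.1 s • ρ x y s) t)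
        ≤ renyiXgY PX PY (fun x y => ∑ s ∈ Sε, Q.1 s • ρ x y s) t := by
      refine ciInf_le ⟨-((1 - t) / t) * Real.logb 2 ((e + 1 : ℕ) : ℝ), ?_⟩ Q
      rintro _ ⟨Q, rfl⟩
      exact renyiXgY_lower (by omega) hX0 hX hY0 hY (hdens Q) ht0 ht1
    have hI2 : (⨅ Q : QS Sε, renyiXY PX PY (fun x y => ∑ s ∈ Sε, Q.1 s • ρ x y s) t)
        ≤ renyiXY PX PY (fun x y => ∑ s ∈ Sε, Q.1 s • ρ x y s) t := by
      refine ciInf_le ⟨-((1 - t) / t) * Real.logb 2 ((e + 1 : ℕ) : ℝ), ?_⟩ Q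
      rintro _ ⟨Q, rfl⟩
      exact renyiXY_lower (by omega) hX0 hX hY0 hY (hdens Q) ht0 ht1
    rw [renyiXgY_eq] at hI1
    rw [renyiXY_eq] at hI2
    have b1 := fib_bound hY0 hY (fun y => Matrix.posSemidef_sum _ fun x _ =>
      psd_rsmul (mpow_psd (hdens Q x y).1 (1 - t)) (hX0 x)) ht0 ht1 n hI1
    have b2 := single_bound (Matrix.posSemidef_sum _ fun a _ =>
      psd_rsmul (mpow_psd (hdens Q a.1 a.2).1 (1 - t)) (mul_nonneg (hX0 a.1) (hY0 a.2)))
      ht0 ht1 n hI2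
    have c1 := const_bound (r := R1) hVN (vol_pos n (e + 1) (Fintype.card 𝒴) (by omega)) hg1 hE0
      (vol_gFac n e N _ hn (Nat.le_mul_of_pos_left _ hX1)) ht0 b1
    have c2 := const_bound (r := Rs) hVN (vol_pos n (e + 1) 1 (by omega)) hg2 hE0
      (vol_gFac n e N 1 hn (Nat.mul_pos hX1 hY1)) ht0 b2
    rw [hsum (fun xv yv => ((1 - T (fun b => (xv b, yv b))) *
      tensorFam fun k => ρ (xv k) (yv k) (sv k)).trace.re)]
    have hstep : ∀ w : Fin n → 𝒳 × 𝒴,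
        ((1 - T w) * tensorFam fun k => ρ (w k).1 (w k).2 (sv k)).trace.re
          ≤ (1 + ε) ^ n * ((1 - T w) * tensorFam fun k => ρ (w k).1 (w k).2 (s k)).trace.re := by
      intro w
      have hm := tensorFam_mono (A := fun k => ρ (w k).1 (w k).2 (sv k))
        (B := fun k => (1 + ε) • ρ (w k).1 (w k).2 (s k)) (fun k => (hρ _ _ _).1)
        (fun k => hgL (sv k) _ _)
      rw [tensorFam_rsmul (fun _ => 1 + ε) (fun k => ρ (w k).1 (w k).2 (s k))] at hm
      have := trace_mul_re_mono (hT1 w) hm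
      refine this.trans (le_of_eq ?_)
      rw [Matrix.mul_smul, Matrix.trace_smul, Complex.smul_re, smul_eq_mul, Finset.prod_const,
        Finset.card_univ, Fintype.card_fin]
    have hp : ∀ w : Fin n → 𝒳 × 𝒴, 0 ≤ ∏ b, PX (w b).1 * PY (w b).2 := fun w =>
      Finset.prod_nonneg fun b _ => mul_nonneg (hX0 _) (hY0 _)
    rw [fFac_eq n _ _ _ e hScard t, ← hN, ← hE]
    calc _ ≤ ∑ w : Fin n → 𝒳 × 𝒴, (∏ b, PX (w b).1 * PY (w b).2) *
          ((1 + ε) ^ n * ((1 - T w) * tensorFam fun k => ρ (w k).1 (w k).2 (s k)).trace.re) :=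
          Finset.sum_le_sum fun w _ => mul_le_mul_of_nonneg_left (hstep w) (hp w)
      _ = (1 + ε) ^ n * ∑ w : Fin n → 𝒳 × 𝒴, (∏ b, PX (w b).1 * PY (w b).2) *
          ((1 - T w) * tensorFam fun k => ρ (w k).1 (w k).2 (s k)).trace.re := by
          rw [Finset.mul_sum]; exact Finset.sum_congr rfl fun w _ => by ring
      _ ≤ (1 + ε) ^ n * (((n : ℝ) + 1) ^ (Sε.card - 1) * (_ + _)) := by
          refine mul_le_mul_of_nonneg_left (h.trans ?_) (by positivity)
          refine mul_le_mul_of_nonneg_left (add_le_add c1 c2) (by positivity)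
      _ = _ := by ring
  · intro σf hσ
    rw [hsum (fun xv yv => (T (fun b => (xv b, yv b)) * σf yv).trace.re)]
    refine (h3 σf hσ).trans (le_of_eq ?_)
    rw [neg_mul, Real.rpow_neg (by norm_num)]
    have : (0 : ℝ) < (2 : ℝ) ^ ((n : ℝ) * R1) := by positivity
    field_simp
  · intro σ hσ
    rw [hsum (fun xv yv => (T (fun b => (xv b, yv b)) * σ).trace.re)]
    refine (h4 σ hσ).trans (le_of_eq ?_)
    rw [neg_mul, Real.rpow_neg (by norm_num)]
    have : (0 : ℝ) < (2 : ℝ) ^ ((n : ℝ) * Rs) := by positivity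
    field_simp

end fin2

section blk
open scoped Matrix
set_option linter.unusedSectionVars false
variable {X Y B : Type*} [Fintype X] [DecidableEq X] [Fintype Y] [DecidableEq Y]
  [Fintype B] [DecidableEq B]

/-- the block-diagonal operator with blocks `T x y` -/
def blk (T : X → Y → Matrix B B ℂ) : Matrix ((X × Y) × B) ((X × Y) × B) ℂ :=
  Matrix.of fun p q => if p.1 = q.1 then T p.1.1 p.1.2 p.2 q.2 else 0

lemma blk_mul (S T : X → Y → Matrix B B ℂ) : blk S * blk T = blk fun x y => S x y * T x y := by
  ext ⟨a, i⟩ ⟨b, j⟩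
  rw [Matrix.mul_apply, Fintype.sum_prod_type, Finset.sum_eq_single a]
  · by_cases h : a = b
    · subst h; simp [blk, Matrix.mul_apply]
    · simp [blk, h]
  · intro c _ hc
    refine Finset.sum_eq_zero fun k _ => ?_
    simp [blk, Ne.symm hc]
  · simp

lemma blk_conj (S : X → Y → Matrix B B ℂ) : (blk S)ᴴ = blk fun x y => (S x y)ᴴ := by
  ext ⟨a, i⟩ ⟨b, j⟩
  by_cases h : a = b
  · subst h; simp [blk]
  · simp [blk, h, Ne.symm h]

lemma blk_psd {T : X → Y → Matrix B B ℂ} (hT : ∀ x y, (T x y).PosSemidef) : (blk T).PosSemidef := by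
  choose C hC0 hC hCC using fun x y => exists_sqrt (hT x y)
  have : blk T = (blk C)ᴴ * blk C := by
    rw [blk_conj, blk_mul]
    congr 1
    ext x y : 2
    rw [(hC x y).1.eq, hCC]
  rw [this]
  exact Matrix.posSemidef_conjTranspose_mul_self _

lemma one_sub_blk (T : X → Y → Matrix B B ℂ) : 1 - blk T = blk fun x y => 1 - T x y := by
  ext ⟨a, i⟩ ⟨b, j⟩
  by_cases h : a = b
  · subst h; simp [blk, Matrix.one_apply]
  · simp [blk, h, Matrix.one_apply]

lemma cq_blk (wX : X → ℝ) (wY : Y → ℝ) (F : X → Y → Matrix B B ℂ) :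
    cqState2 wX wY F = blk fun x y => (wX x * wY y) • F x y := by
  ext ⟨a, i⟩ ⟨b, j⟩
  by_cases h : a = b
  · subst h; simp [blk, cqState2]
  · simp [blk, cqState2, h]

lemma blk_trace (T : X → Y → Matrix B B ℂ) : (blk T).trace = ∑ x, ∑ y, (T x y).trace := by
  simp [Matrix.trace, blk, Fintype.sum_prod_type]

lemma blk_cq_trace {𝒳 𝒴 : Type*} [Fintype 𝒳] [DecidableEq 𝒳] [Fintype 𝒴] [DecidableEq 𝒴] {d n : ℕ}
    (PX : 𝒳 → ℝ) (PY : 𝒴 → ℝ)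
    (T F : (Fin n → 𝒳) → (Fin n → 𝒴) → Matrix (Fin n → Fin d) (Fin n → Fin d) ℂ) :
    (blk T * cq2n n PX PY F).trace.re
      = ∑ xv, ∑ yv, (∏ k, PX (xv k)) * (∏ k, PY (yv k)) * (T xv yv * F xv yv).trace.re := by
  unfold cq2n
  rw [cq_blk, blk_mul, blk_trace, Complex.re_sum]
  refine Finset.sum_congr rfl fun x _ => ?_
  rw [Complex.re_sum]
  refine Finset.sum_congr rfl fun y _ => ?_
  rw [Matrix.mul_smul, Matrix.trace_smul, Complex.smul_re, smul_eq_mul]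

end blk

/-- Universal non-simultaneous tests for multiple independence testing,
under Assumption A for the family `{ρ_{x,y,s}}`. -/
theorem statement6 {𝒳 𝒴 𝒮 : Type*} [Fintype 𝒳] [DecidableEq 𝒳] [Fintype 𝒴] [DecidableEq 𝒴]
    [Nonempty 𝒮] {d : ℕ}
    (ρ : 𝒳 → 𝒴 → 𝒮 → Matrix (Fin d) (Fin d) ℂ)
    (hρ : ∀ x y s, IsDensity (ρ x y s))
    (hAss : ∀ ε : ℝ, 0 < ε → ∃ Sε : Finset 𝒮, ∀ s : 𝒮, ∃ s' ∈ Sε, ∀ x y,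
      Loewner (ρ x y s) ((1 + ε) • ρ x y s'))
    (n : ℕ) (hn : 1 ≤ n) (R1 R2 : ℝ) (hR1 : 0 < R1) (hR2 : 0 < R2) :
    ∃ TX TY : Matrix (((Fin n → 𝒳) × (Fin n → 𝒴)) × (Fin n → Fin d))
        (((Fin n → 𝒳) × (Fin n → 𝒴)) × (Fin n → Fin d)) ℂ,
      TX.PosSemidef ∧ (1 - TX).PosSemidef ∧ TY.PosSemidef ∧ (1 - TY).PosSemidef ∧
      ∀ PX : 𝒳 → ℝ, (∀ x, 0 ≤ PX x) → (∑ x, PX x = 1) →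
      ∀ PY : 𝒴 → ℝ, (∀ y, 0 ≤ PY y) → (∑ y, PY y = 1) →
      ∀ t : ℝ, t ∈ Set.Ioo (0 : ℝ) 1 →
      ∀ ε : ℝ, 0 < ε →
      ∀ Sε : Finset 𝒮,
        (∀ s : 𝒮, ∃ s' ∈ Sε, ∀ x y, Loewner (ρ x y s) ((1 + ε) • ρ x y s')) →
        -- (i)
        (∀ sv : Fin n → 𝒮,
          (Matrix.trace ((1 - TX) *
            cq2n n PX PY (fun xv yv => tensorFam fun k => ρ (xv k) (yv k) (sv k)))).re ≤
            fFac n Sε.card (Fintype.card 𝒳) (Fintype.card 𝒴) d t * (1 + ε) ^ n *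
              ((2 : ℝ) ^ ((n : ℝ) * t *
                  (R1 - ⨅ Q : {Q : 𝒮 → ℝ // (∀ s, 0 ≤ Q s) ∧ (∀ s ∉ Sε, Q s = 0) ∧
                      ∑ s ∈ Sε, Q s = 1},
                    renyiXgY PX PY (fun x y => ∑ s ∈ Sε, Q.1 s • ρ x y s) t)) +
                (2 : ℝ) ^ ((n : ℝ) * t *
                  (R1 + R2 - ⨅ Q : {Q : 𝒮 → ℝ // (∀ s, 0 ≤ Q s) ∧ (∀ s ∉ Sε, Q s = 0) ∧
                      ∑ s ∈ Sε, Q s = 1},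
                    renyiXY PX PY (fun x y => ∑ s ∈ Sε, Q.1 s • ρ x y s) t)))) ∧
        -- (ii)
        (∀ sv : Fin n → 𝒮,
          (Matrix.trace ((1 - TY) *
            cq2n n PX PY (fun xv yv => tensorFam fun k => ρ (xv k) (yv k) (sv k)))).re ≤
            fFac n Sε.card (Fintype.card 𝒳) (Fintype.card 𝒴) d t * (1 + ε) ^ n *
              ((2 : ℝ) ^ ((n : ℝ) * t *
                  (R2 - ⨅ Q : {Q : 𝒮 → ℝ // (∀ s, 0 ≤ Q s) ∧ (∀ s ∉ Sε, Q s = 0) ∧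
                      ∑ s ∈ Sε, Q s = 1},
                    renyiYgX PX PY (fun x y => ∑ s ∈ Sε, Q.1 s • ρ x y s) t)) +
                (2 : ℝ) ^ ((n : ℝ) * t *
                  (R1 + R2 - ⨅ Q : {Q : 𝒮 → ℝ // (∀ s, 0 ≤ Q s) ∧ (∀ s ∉ Sε, Q s = 0) ∧
                      ∑ s ∈ Sε, Q s = 1},
                    renyiXY PX PY (fun x y => ∑ s ∈ Sε, Q.1 s • ρ x y s) t)))) ∧
        -- (iii)
        (∀ σf : (Fin n → 𝒴) → Matrix (Fin n → Fin d) (Fin n → Fin d) ℂ,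
          (∀ yv, IsDensity (σf yv)) →
          (Matrix.trace (TX * cq2n n PX PY (fun _ yv => σf yv))).re ≤
            gFac n (Fintype.card 𝒴) d * (2 : ℝ) ^ (-(n : ℝ) * R1)) ∧
        -- (iv)
        (∀ σ : Matrix (Fin n → Fin d) (Fin n → Fin d) ℂ, IsDensity σ →
          (Matrix.trace (TX * cq2n n PX PY (fun _ _ => σ))).re ≤
            gFac n 1 d * (2 : ℝ) ^ (-(n : ℝ) * (R1 + R2))) ∧
        -- (v)
        (∀ σf : (Fin n → 𝒳) → Matrix (Fin n → Fin d) (Fin n → Fin d) ℂ,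
          (∀ xv, IsDensity (σf xv)) →
          (Matrix.trace (TY * cq2n n PX PY (fun xv _ => σf xv))).re ≤
            gFac n (Fintype.card 𝒳) d * (2 : ℝ) ^ (-(n : ℝ) * R2)) ∧
        -- (vi)
        (∀ σ : Matrix (Fin n → Fin d) (Fin n → Fin d) ℂ, IsDensity σ →
          (Matrix.trace (TY * cq2n n PX PY (fun _ _ => σ))).re ≤
            gFac n 1 d * (2 : ℝ) ^ (-(n : ℝ) * (R1 + R2))) := by
  classical
  rcases d with _ | e
  · refine ⟨0, 0, Matrix.PosSemidef.zero, ?_, Matrix.PosSemidef.zero, ?_, ?_⟩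
    · simpa using Matrix.PosSemidef.one
    · simpa using Matrix.PosSemidef.one
    · intro PX _ hX PY _ hY
      exfalso
      obtain ⟨x⟩ : Nonempty 𝒳 := by
        by_contra h
        rw [not_nonempty_iff] at h
        simp at hX
      obtain ⟨y⟩ : Nonempty 𝒴 := by
        by_contra h
        rw [not_nonempty_iff] at h
        simp at hY
      have := (hρ x y (Classical.arbitrary 𝒮)).2
      simp [Matrix.trace] at this
  · obtain ⟨T, hT0, hT1, hT⟩ := half_test ρ hρ n hn R1 (R1 + R2)
    obtain ⟨U, hU0, hU1, hU⟩ := half_test (fun y x s => ρ x y s) (fun y x s => hρ x y s) n hn R2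
      (R1 + R2)
    refine ⟨blk T, blk fun xv yv => U yv xv, blk_psd hT0, ?_, blk_psd fun xv yv => hU0 yv xv, ?_, ?_⟩
    · rw [one_sub_blk]; exact blk_psd hT1
    · rw [one_sub_blk]; exact blk_psd fun xv yv => hU1 yv xv
    intro PX hX0 hX PY hY0 hY t ht ε hε Sε hS
    obtain ⟨a1, a3, a4⟩ := hT PX hX0 hX PY hY0 hY
    obtain ⟨b1, b3, b4⟩ := hU PY hY0 hY PX hX0 hX
    have hswap : ∀ F : (Fin n → 𝒳) → (Fin n → 𝒴) → ℝ,
        ∑ xv, ∑ yv, (∏ k, PX (xv k)) * (∏ k, PY (yv k)) * F xv yv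
          = ∑ yv, ∑ xv, (∏ k, PY (yv k)) * (∏ k, PX (xv k)) * F xv yv := by
      intro F
      rw [Finset.sum_comm]
      refine Finset.sum_congr rfl fun y _ => Finset.sum_congr rfl fun x _ => ?_
      rw [mul_comm (∏ k, PX (x k))]
    refine ⟨?_, ?_, ?_, ?_, ?_, ?_⟩
    · intro sv
      rw [one_sub_blk, blk_cq_trace]
      exact a1 t ht ε hε Sε hS sv
    · intro sv
      rw [one_sub_blk, blk_cq_trace, hswap]
      refine (b1 t ht ε hε Sε (fun s => ?_) sv).trans (le_of_eq ?_)
      · obtain ⟨s', h1, h2⟩ := hS s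
        exact ⟨s', h1, fun y x => h2 x y⟩
      · have e1 : fFac n Sε.card (Fintype.card 𝒴) (Fintype.card 𝒳) (e + 1) t
            = fFac n Sε.card (Fintype.card 𝒳) (Fintype.card 𝒴) (e + 1) t := by
          unfold fFac; congr 1; ring
        have e2 : ∀ M : 𝒳 → 𝒴 → Matrix (Fin (e + 1)) (Fin (e + 1)) ℂ,
            renyiXY PY PX (fun y x => M x y) t = renyiXY PX PY M t := by
          intro M
          unfold renyiXY
          rw [Finset.sum_comm]
          simp only [mul_comm]
        have e3 : ∀ M : 𝒳 → 𝒴 → Matrix (Fin (e + 1)) (Fin (e + 1)) ℂ,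
            renyiXgY PY PX (fun y x => M x y) t = renyiYgX PX PY M t := fun M => rfl
        rw [e1]
        simp only [← e2, ← e3]
    · intro σf hσ
      rw [blk_cq_trace]
      exact a3 σf hσ
    · intro σ hσ
      rw [blk_cq_trace]
      exact a4 σ hσ
    · intro σf hσ
      rw [blk_cq_trace, hswap]
      exact b3 σf hσ
    · intro σ hσ
      rw [blk_cq_trace, hswap]
      exact b4 σ hσ
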